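/- Let X ⊂ ℙ^N be an irreducible, non-degenerate projective variety over ℂ, and let L ⊂ ℙ^N be a linear subspace such that no line contained in X meets L. Then for every smooth point x ∈ X with x ∉ L and ⟨L, T_{X,x}⟩ ≠ ℙ^N, the multiplicity in X* of a general hyperplane containing ⟨L, T_{X,x}⟩ is strictly greater than the multiplicity in X* of a general hyperplane containing L. -/

import Mathlib

/-!
Write `P = orth W` for the linear space of (equations of) hyperplanes containing `L`. The general
multiplicity along a linear space is the minimal order of vanishing of the equations of `X*` at its
points, so it cannot drop on the subspace of hyperplanes containing `⟨L, T_{X,x}⟩`. If it does not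
jump, let `f` be an equation of `X*` of minimal order `m` at some `h` in that subspace. All Taylor
coefficients of `f` of order `< m` vanish along `h + P`, hence the leading form of `f` at `h` is
invariant under translation by `P` (`mult_jump_or`). From this a line in `X` meeting `L` is produced.

Let `ξ` be the generic point of the cone over `X` and `z = ∑ c_j ∇g_j(ξ)` the generic conormal
vector, where the `g_j` are local equations of `X` at `x` and the `c_j` are indeterminates. With a
further indeterminate `l`, write `z = h + l σ`; this is the deformation to the normal cone of `h`.
Since `h` is conormal at `x`, there is an arc along which all of `ξ`, `c`, `σ` remain finite and `l`
tends to zero, so `l` is not invertible in the algebra they generate (`inv_not_mem_adjoin`), and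
there is a divisor of `l = 0`, with residue field `κ` (`dvr_data`). Derivations killing `l` have
regular logarithmic derivatives along this divisor (`log_deriv_mem`), so they descend to `κ`.

The Legendrian relation `∑ ξ_i dz_i = 0` gives `∑ ξ_i dσ_i = 0` for such derivations, so the
reductions of `(σ, ξ)` span a Lagrangian family over `κ`. The leading form of `f` vanishes at the
reduction of `σ`; let `ρ` be a derivative of it, of minimal degree among the nonzero ones vanishing
there, and `ν = ∇ρ(σ)`, a nonzero vector orthogonal to `P`, that is, lying in `W`. As `(0, ν)` is
symplectically orthogonal to the family, there is a derivation `E` of `κ` with `E σ = 0` and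
`E ξ = ν`; then `E ν = 0`, and `ξ + t ν` satisfies the equations of `X` identically in `t`
(`exists_line_over_field`). Specializing to `ℂ` by the Nullstellensatz (`specialize_line`), with a
linear form vanishing on `L` but not at `x` kept nonzero on `ξ`, yields a line in `X` meeting `L`
(`core_global`), contrary to the hypothesis.
-/

/- Common framework: complex projective varieties, Zariski topology, projective duality,
   multiplicities, contact loci, shadows, secant varieties, polar varieties. -/

noncomputable section

open Function Set

/-- The vector space `ℂ^n`. -/
abbrev Vc (n : ℕ) : Type := Fin n → ℂ

/-- Projective space `ℙ^{n-1} = ℙ(ℂ^n)`. -/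
abbrev Pj (n : ℕ) : Type := Projectivization ℂ (Vc n)

variable {n : ℕ}

/-- Projective zero locus of a polynomial. -/
def pZeros (f : MvPolynomial (Fin n) ℂ) : Set (Pj n) :=
  {x | ∀ v ∈ x.submodule, MvPolynomial.eval v f = 0}

/-- The Zariski topology on projective space. -/
def zarTop (n : ℕ) : TopologicalSpace (Pj n) :=
  TopologicalSpace.generateFrom {U | ∃ f, U = (pZeros f)ᶜ}

def zOpen (U : Set (Pj n)) : Prop := @IsOpen _ (zarTop n) U

def zClosed (S : Set (Pj n)) : Prop := @IsClosed _ (zarTop n) S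

/-- Zariski closure. -/
def zcl (S : Set (Pj n)) : Set (Pj n) := @closure _ (zarTop n) S

/-- Zariski irreducibility. -/
def zIrr (S : Set (Pj n)) : Prop := @IsIrreducible _ (zarTop n) S

/-- Dimension of an algebraic set: the length of the longest strict chain of
irreducible closed subsets of its closure. -/
def zdim (S : Set (Pj n)) : ℕ :=
  sSup {d | ∃ c : Fin (d + 1) → Set (Pj n), StrictMono c ∧
    ∀ i, zIrr (c i) ∧ zClosed (c i) ∧ c i ⊆ zcl S}

/-- The (homogeneous) vanishing ideal of a subset of projective space. -/
def vanishId (S : Set (Pj n)) : Set (MvPolynomial (Fin n) ℂ) :=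
  {f | ∀ x ∈ S, ∀ v ∈ x.submodule, MvPolynomial.eval v f = 0}

/-- The linear subvariety of `ℙ^{n-1}` associated to a linear subspace `W ⊆ ℂ^n`. -/
def projLin (W : Submodule ℂ (Vc n)) : Set (Pj n) := {x | x.submodule ≤ W}

/-- A set is a linear subvariety if it is the projectivization of a linear subspace. -/
def IsLinSub (L : Set (Pj n)) : Prop := ∃ W : Submodule ℂ (Vc n), L = projLin W

/-- The linear span of a subset of projective space, as a linear subspace of `ℂ^n`. -/
def spanSet (S : Set (Pj n)) : Submodule ℂ (Vc n) :=
  Submodule.span ℂ {v | ∃ x ∈ S, v ∈ x.submodule}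

/-- Nondegeneracy: not contained in a hyperplane. -/
def Nondeg (X : Set (Pj n)) : Prop := spanSet X = ⊤

/-- Incidence pairing between the dual projective space and projective space
(both identified with `ℙ^{n-1}` via coordinates): `h` and `x` are incident if
`∑ hᵢ xᵢ = 0`. -/
def pair0 (h x : Pj n) : Prop :=
  ∀ w ∈ h.submodule, ∀ v ∈ x.submodule, (∑ i, w i * v i) = 0

/-- The hyperplane of `ℙ^{n-1}` corresponding to a point `h` of the dual projective space. -/
def hypOf (h : Pj n) : Set (Pj n) := {x | pair0 h x}

/-- `L^⊥`: the set of (points of the dual space corresponding to) hyperplanes containing `L`. -/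
def perpSet (L : Set (Pj n)) : Set (Pj n) := {h | ∀ x ∈ L, pair0 h x}

/-- The linear subspace of `ℂ^n` cut out by the linear form corresponding to `h`. -/
def hypSub (h : Pj n) : Submodule ℂ (Vc n) :=
  LinearMap.ker (∑ i, h.rep i • (LinearMap.proj i : Vc n →ₗ[ℂ] ℂ))

/-- Differential of a polynomial at a point, as a linear form. -/
def dmap (f : MvPolynomial (Fin n) ℂ) (v : Vc n) : Vc n →ₗ[ℂ] ℂ :=
  ∑ i, MvPolynomial.eval v (MvPolynomial.pderiv i f) • (LinearMap.proj i : Vc n →ₗ[ℂ] ℂ)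

/-- The affine cone over the embedded projective tangent space of `X` at `x`. -/
def tangentSub (X : Set (Pj n)) (x : Pj n) : Submodule ℂ (Vc n) :=
  ⨅ f ∈ vanishId X, LinearMap.ker (dmap f x.rep)

/-- The embedded projective tangent space `T_{X,x}`. -/
def tanSpace (X : Set (Pj n)) (x : Pj n) : Set (Pj n) := projLin (tangentSub X x)

/-- `x` is a smooth point of `X`. -/
def SmoothPt (X : Set (Pj n)) (x : Pj n) : Prop :=
  x ∈ X ∧ Module.finrank ℂ (tangentSub X x : Submodule ℂ (Vc n)) = zdim X + 1

/-- The singular locus. -/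
def singLocus (Z : Set (Pj n)) : Set (Pj n) := {z ∈ Z | ¬ SmoothPt Z z}

/-- Irreducible components of a set: maximal irreducible subsets. -/
def irrCompsOf (A : Set (Pj n)) : Set (Set (Pj n)) :=
  {F | Maximal (fun G => G ⊆ A ∧ zIrr G) F}

/-- Zero locus in `ℙ^{n-1} × ℙ^{n-1}` of a polynomial in two groups of variables. -/
def pZeros2 (f : MvPolynomial (Fin n ⊕ Fin n) ℂ) : Set (Pj n × Pj n) :=
  {p | ∀ w ∈ p.1.submodule, ∀ v ∈ p.2.submodule, MvPolynomial.eval (Sum.elim w v) f = 0}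

/-- The Zariski topology on the product `ℙ^{n-1} × ℙ^{n-1}`. -/
def zarTop2 (n : ℕ) : TopologicalSpace (Pj n × Pj n) :=
  TopologicalSpace.generateFrom {U | ∃ f, U = (pZeros2 f)ᶜ}

def zcl2 (S : Set (Pj n × Pj n)) : Set (Pj n × Pj n) := @closure _ (zarTop2 n) S

def zIrr2 (S : Set (Pj n × Pj n)) : Prop := @IsIrreducible _ (zarTop2 n) S

def zClosed2 (S : Set (Pj n × Pj n)) : Prop := @IsClosed _ (zarTop2 n) S

/-- The conormal variety `I(X/ℙ^N)`: the Zariski closure of the set of pairs `(H, x)` with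
`x` a smooth point of `X` and `T_{X,x} ⊆ H`.  The first projection `q = Prod.fst` goes to the
dual projective space, the second projection `p = Prod.snd` to the original space. -/
def conormal (X : Set (Pj n)) : Set (Pj n × Pj n) :=
  zcl2 {p | SmoothPt X p.2 ∧ tanSpace X p.2 ⊆ hypOf p.1}

/-- The projective dual variety `X* = q(I(X/ℙ^N))`. -/
def dualVar (X : Set (Pj n)) : Set (Pj n) := Prod.fst '' conormal X

/-- The contact locus `Tan(L, X)`: the union of `p(F)` over the irreducible components `F` of
`q⁻¹(L^⊥)` (inside the conormal variety) such that `q|_F : F → L^⊥` is surjective. -/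
def contactLocus (X L : Set (Pj n)) : Set (Pj n) :=
  ⋃₀ {T | ∃ F : Set (Pj n × Pj n),
      Maximal (fun G => G ⊆ conormal X ∩ (Prod.fst ⁻¹' perpSet L) ∧ zIrr2 G) F ∧
      Prod.fst '' F = perpSet L ∧ T = Prod.snd '' F}

/-- The dual defect `def(X) = codim X* - 1` (in `ℙ^{n-1}`). -/
def defect (X : Set (Pj n)) : ℕ := (n - 1) - zdim (dualVar X) - 1

/-- The shadow `Sh_X(L)`: the closed set covered by the linear subvarieties `M ⊆ X` with
`dim M = def(X) + 1` meeting the contact locus `Tan(L,X)` in dimension `def(X)`. -/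
def shadow (X L : Set (Pj n)) : Set (Pj n) :=
  zcl (⋃₀ {M | IsLinSub M ∧ M ⊆ X ∧ zdim M = defect X + 1 ∧
    (M ∩ contactLocus X L).Nonempty ∧ zdim (M ∩ contactLocus X L) = defect X})

/-- Translate a polynomial so that the point `v` becomes the origin. -/
def shiftPoly (f : MvPolynomial (Fin n) ℂ) (v : Vc n) : MvPolynomial (Fin n) ℂ :=
  MvPolynomial.bind₁ (fun i => MvPolynomial.X i + MvPolynomial.C (v i)) f

/-- Order of vanishing of a polynomial at the origin. -/
def polyOrd (g : MvPolynomial (Fin n) ℂ) : ℕ :=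
  sInf {d | MvPolynomial.homogeneousComponent d g ≠ 0}

open Classical in
/-- Multiplicity at (a representative of) a point of the scheme cut out by an ideal:
the minimal order of vanishing of a nonzero element of the ideal. -/
def idealMult (I : Ideal (MvPolynomial (Fin n) ℂ)) (v : Vc n) : ℕ :=
  if I = ⊥ then 1 else sInf {d | ∃ f ∈ I, f ≠ 0 ∧ d = polyOrd (shiftPoly f v)}

/-- Multiplicity `mult_z(Z)` of an algebraic set at a point. -/
def multAt (Z : Set (Pj n)) (z : Pj n) : ℕ := idealMult (Ideal.span (vanishId Z)) z.rep

/-- A property holds at a general point of `W`. -/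
def forGeneralIn (W : Set (Pj n)) (P : Pj n → Prop) : Prop :=
  ∃ U, zOpen U ∧ (W ∩ U).Nonempty ∧ ∀ z ∈ W ∩ U, P z

/-- The multiplicity of `Z` at a general point of `W` equals `m`. -/
def multAtGeneral (Z W : Set (Pj n)) (m : ℕ) : Prop :=
  forGeneralIn W fun z => multAt Z z = m

/-- The initial form of `f` at the point `v`. -/
def initForm (f : MvPolynomial (Fin n) ℂ) (v : Vc n) : MvPolynomial (Fin n) ℂ :=
  MvPolynomial.homogeneousComponent (polyOrd (shiftPoly f v)) (shiftPoly f v)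

/-- The (reduced) embedded projective tangent cone `|C_z(Z)| ⊆ ℙ^{n-1}`:
zero locus of the initial forms at `z` of the elements of the ideal of `Z`. -/
def tanConeAt (Z : Set (Pj n)) (z : Pj n) : Set (Pj n) :=
  {y | ∀ f ∈ vanishId Z, ∀ w ∈ y.submodule, MvPolynomial.eval w (initForm f z.rep) = 0}

/-- The linear map `ℂ^m → ℂ^n` sending the `i`th basis vector to `v i`. -/
def tupleMap {m : ℕ} (v : Fin m → Vc n) : Vc m →ₗ[ℂ] Vc n :=
  Matrix.toLin' (Matrix.of fun i j => v j i)

/-- The linear subspace spanned by a tuple of points of projective space. -/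
def spanTuple {m : ℕ} (t : Fin m → Pj n) : Submodule ℂ (Vc n) :=
  LinearMap.range (tupleMap fun i => (t i).rep)

/-- Zero loci on the space of `m`-tuples of points of `ℙ^{n-1}`. -/
def pZerosT {m : ℕ} (f : MvPolynomial (Fin m × Fin n) ℂ) : Set (Fin m → Pj n) :=
  {t | ∀ v : Fin m → Vc n, (∀ i, v i ∈ (t i).submodule) →
    MvPolynomial.eval (fun p => v p.1 p.2) f = 0}

/-- The Zariski topology on the space of `m`-tuples of points of `ℙ^{n-1}`. -/
def zarTopT (m n : ℕ) : TopologicalSpace (Fin m → Pj n) :=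
  TopologicalSpace.generateFrom {U | ∃ f, U = (pZerosT f)ᶜ}

/-- A property `P` holds for the linear span of a general `m`-tuple of points in general
position (equivalently, for a general linear subspace of projective dimension `m-1`). -/
def forGeneralTuple {n : ℕ} (m : ℕ) (P : (Fin m → Pj n) → Prop) : Prop :=
  ∃ U, @IsOpen _ (zarTopT m n) U ∧
    (∃ t ∈ U, Function.Injective (tupleMap fun i => (t i).rep)) ∧
    ∀ t ∈ U, Function.Injective (tupleMap fun i => (t i).rep) → P t

/-- The `k`-th secant variety `S^k(X)`. -/
def secantVar (X : Set (Pj n)) (k : ℕ) : Set (Pj n) :=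
  zcl {u | ∃ t : Fin (k + 1) → Pj n, (∀ i, t i ∈ X) ∧
    LinearIndependent ℂ (fun i => (t i).rep) ∧
    u.rep ∈ Submodule.span ℂ (Set.range fun i => (t i).rep)}

/-- `ord(X) = min {k | S^{k-1}(X) = ℙ^N}`. -/
def ordOf (X : Set (Pj n)) : ℕ := sInf {k | secantVar X (k - 1) = Set.univ}

/-- `t(Y) = t`: the general fiber of the Gauss map of `Y` has dimension `t`. -/
def hasGaussFiberDim (Y : Set (Pj n)) (t : ℕ) : Prop :=
  ∃ U, zOpen U ∧ (Y ∩ U).Nonempty ∧ ∀ y ∈ Y ∩ U, SmoothPt Y y ∧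
    zdim {y' | SmoothPt Y y' ∧ tangentSub Y y' = tangentSub Y y} = t

/-- `X` is dual `k`-defective: `S^k(X) ≠ ℙ^N` and `def(S^k(X)) > t(S^k(X))`. -/
def dualKDefective (X : Set (Pj n)) (k : ℕ) : Prop :=
  secantVar X k ≠ Set.univ ∧
  ∃ t, hasGaussFiberDim (secantVar X k) t ∧ t < defect (secantVar X k)

/-- Degree of a projective variety: the maximal (finite) number of points in which a linear
subspace of complementary dimension meets it. -/
def degOf (Z : Set (Pj n)) : ℕ :=
  sSup {d | ∃ W : Submodule ℂ (Vc n), Module.finrank ℂ W = n - zdim Z ∧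
    (Z ∩ projLin W).Finite ∧ (Z ∩ projLin W).ncard = d}

/-- The polar variety `P(Z, D)`: closure of the set of smooth points of `Z` whose embedded
tangent space contains `D`.  (For `D = ∅` this is `Z` itself.) -/
def polarVar (Z D : Set (Pj n)) : Set (Pj n) :=
  zcl {z | SmoothPt Z z ∧ D ⊆ tanSpace Z z}

/-- The ideal of the polar scheme `P(f_Z, D)`, generated by the polynomials
`u₀ ∂f/∂t₀ + ⋯ + u_N ∂f/∂t_N` for `u` ranging over (the cone over) `D`. -/
def polarIdeal (f : MvPolynomial (Fin n) ℂ) (W : Submodule ℂ (Vc n)) :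
    Ideal (MvPolynomial (Fin n) ℂ) :=
  Ideal.span {g | ∃ u ∈ W, g = ∑ i, u i • MvPolynomial.pderiv i f}

/-- The linear form corresponding to a point of the dual projective space. -/
def linForm (h : Pj n) : MvPolynomial (Fin n) ℂ :=
  ∑ i, MvPolynomial.C (h.rep i) * MvPolynomial.X i

/-- The ideal of the scheme-theoretic tangency locus of the hyperplane `H = hypOf h` with `X`:
generated by the ideal of `X`, the linear form of `H`, and the derivatives of this linear form
along all polynomial vector fields tangent to `X`. -/
def tangencyIdeal (X : Set (Pj n)) (h : Pj n) : Ideal (MvPolynomial (Fin n) ℂ) :=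
  Ideal.span (vanishId X ∪ {linForm h} ∪
    {g | ∃ θ : Derivation ℂ (MvPolynomial (Fin n) ℂ) (MvPolynomial (Fin n) ℂ),
        (∀ f ∈ vanishId X, θ f ∈ Ideal.span (vanishId X)) ∧ g = θ (linForm h)})

/-- Zero locus of an ideal in projective space. -/
def idealZeros (I : Ideal (MvPolynomial (Fin n) ℂ)) : Set (Pj n) :=
  {x | ∀ f ∈ I, ∀ v ∈ x.submodule, MvPolynomial.eval v f = 0}

/-- The number of components (including embedded ones) of the scheme cut out by `I`:
the number of associated primes. -/
def numComponents (I : Ideal (MvPolynomial (Fin n) ℂ)) : ℕ :=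
  (associatedPrimes (MvPolynomial (Fin n) ℂ) (MvPolynomial (Fin n) ℂ ⧸ I)).ncard

/-- The scheme cut out by `I` has an embedded component. -/
def hasEmbedded (I : Ideal (MvPolynomial (Fin n) ℂ)) : Prop :=
  ∃ p ∈ associatedPrimes (MvPolynomial (Fin n) ℂ) (MvPolynomial (Fin n) ℂ ⧸ I),
    ∃ q ∈ associatedPrimes (MvPolynomial (Fin n) ℂ) (MvPolynomial (Fin n) ℂ ⧸ I), p < q

/-- A hyperquadric: a quadric hypersurface of a linear subspace of projective space. -/
def IsHyperquadric (T : Set (Pj n)) : Prop :=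
  ∃ (W : Submodule ℂ (Vc n)) (q : MvPolynomial (Fin n) ℂ),
    q.IsHomogeneous 2 ∧ T = projLin W ∩ pZeros q ∧ ¬ IsLinSub T

/-- Transpose of a linear map between coordinate spaces. -/
def transposeMap {m : ℕ} (j : Vc m →ₗ[ℂ] Vc n) : Vc n →ₗ[ℂ] Vc m :=
  Matrix.toLin' (Matrix.transpose (LinearMap.toMatrix' j))

/-- Image of a set under the rational map `ℙ(g)` induced by a linear map `g`
(a linear projection when `g` is a quotient map). -/
def projImage {m : ℕ} (g : Vc n →ₗ[ℂ] Vc m) (S : Set (Pj n)) : Set (Pj m) :=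
  {y | ∃ x ∈ S, ∃ v ∈ x.submodule, ∃ hv : g v ≠ 0, y = Projectivization.mk ℂ (g v) hv}

/-- Zero loci on `(ℙ^{n-1} × ℙ^{n-1}) × ℙ^{n-1}`. -/
def pZeros3 (f : MvPolynomial ((Fin n ⊕ Fin n) ⊕ Fin n) ℂ) : Set ((Pj n × Pj n) × Pj n) :=
  {p | ∀ w ∈ p.1.1.submodule, ∀ v ∈ p.1.2.submodule, ∀ u ∈ p.2.submodule,
    MvPolynomial.eval (Sum.elim (Sum.elim w v) u) f = 0}

/-- The Zariski topology on `(ℙ^{n-1} × ℙ^{n-1}) × ℙ^{n-1}`. -/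
def zarTop3 (n : ℕ) : TopologicalSpace ((Pj n × Pj n) × Pj n) :=
  TopologicalSpace.generateFrom {U | ∃ f, U = (pZeros3 f)ᶜ}

def zClosed3 (S : Set ((Pj n × Pj n) × Pj n)) : Prop := @IsClosed _ (zarTop3 n) S

def zIrr3 (S : Set ((Pj n × Pj n) × Pj n)) : Prop := @IsIrreducible _ (zarTop3 n) S

/-- Flatness of a (reduced) family over a (smooth) curve `S`; for reduced total space over a
smooth curve, flatness is equivalent to every irreducible component dominating the base. -/
def flatFam2 (Γ : Set (Pj n × Pj n)) (S : Set (Pj n)) : Prop :=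
  Prod.snd '' Γ ⊆ S ∧ ∀ F, Maximal (fun G => G ⊆ Γ ∧ zIrr2 G) F → S ⊆ zcl (Prod.snd '' F)

/-- Flatness over a curve for families of subsets of `ℙ^{n-1} × ℙ^{n-1}`. -/
def flatFam3 (Γ : Set ((Pj n × Pj n) × Pj n)) (S : Set (Pj n)) : Prop :=
  Prod.snd '' Γ ⊆ S ∧ ∀ F, Maximal (fun G => G ⊆ Γ ∧ zIrr3 G) F → S ⊆ zcl (Prod.snd '' F)

/-- The Segre variety `ℙ¹ × ℙ² ⊆ ℙ⁵`, i.e. the rank-one locus: coordinates are arranged as a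
`2 × 3` matrix `(v_{3a+b})` and all `2 × 2` minors vanish. -/
def segre : Set (Pj 6) :=
  {x | ∀ v ∈ x.submodule, ∀ b c : Fin 3,
    v (⟨b.1, by have := b.isLt; omega⟩ : Fin 6) * v (⟨3 + c.1, by have := c.isLt; omega⟩ : Fin 6) =
    v (⟨c.1, by have := c.isLt; omega⟩ : Fin 6) * v (⟨3 + b.1, by have := b.isLt; omega⟩ : Fin 6)}

end

/-! ### Prescribing derivations -/

section

open MvPolynomial

/-- A field extension in characteristic zero is formally étale over the polynomial ring on a
transcendence basis, so a derivation may be prescribed arbitrarily on the basis. -/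
theorem exists_derivation_of_basis {k K ι : Type} [Field k] [CharZero k] [Field K] [Algebra k K]
    {u : ι → K} (hu : IsTranscendenceBasis k u) (w : ι → K) :
    ∃ δ : Derivation k K K, ∀ j, δ (u j) = w j := by
  let : Algebra (MvPolynomial ι k) K := (aeval u : MvPolynomial ι k →ₐ[k] K).toAlgebra
  have hmap : ∀ p, algebraMap (MvPolynomial ι k) K p = aeval u p := fun p => rfl
  have : IsScalarTower k (MvPolynomial ι k) K := IsScalarTower.of_algebraMap_eq' (by
    ext r; simp [hmap])
  have hinj : Function.Injective (algebraMap (MvPolynomial ι k) K) := hu.1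
  have : FaithfulSMul (MvPolynomial ι k) K := (faithfulSMul_iff_algebraMap_injective _ _).2 hinj
  have : CharZero (MvPolynomial ι k) := inferInstance
  let := FractionRing.liftAlgebra (MvPolynomial ι k) K
  have : IsScalarTower (MvPolynomial ι k) (FractionRing (MvPolynomial ι k)) K :=
    FractionRing.isScalarTower_liftAlgebra _ _
  have : Algebra.IsAlgebraic (MvPolynomial ι k) K := by
    have := hu.isAlgebraic
    refine ⟨fun a => ?_⟩
    have ha := this.1 a
    exact IsAlgebraic.of_ringHom_of_comp_eq (g := RingHom.id K)
      (f := (hu.1.aevalEquiv : MvPolynomial ι k ≃+* _)) ha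
      hu.1.aevalEquiv.surjective Function.injective_id (by ext <;> simp [hmap])
  have : Algebra.IsAlgebraic (FractionRing (MvPolynomial ι k)) K := by
    exact (IsFractionRing.comap_isAlgebraic_iff (A := MvPolynomial ι k)).1 this
  have : Algebra.FormallyEtale (FractionRing (MvPolynomial ι k)) K :=
    Algebra.FormallyEtale.of_isSeparable _ _
  have : Algebra.FormallyEtale (MvPolynomial ι k) (FractionRing (MvPolynomial ι k)) :=
    Algebra.FormallyEtale.of_isLocalization (nonZeroDivisors (MvPolynomial ι k))
  have : Algebra.FormallyEtale (MvPolynomial ι k) K :=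
    Algebra.FormallyEtale.comp _ (FractionRing (MvPolynomial ι k)) _
  have hb := KaehlerDifferential.isBaseChange_of_formallyEtale k (MvPolynomial ι k) K
  let d0 : Derivation k (MvPolynomial ι k) K := mkDerivation k w
  refine ⟨(hb.lift d0.liftKaehlerDifferential).compDer (KaehlerDifferential.D k K), fun j => ?_⟩
  have h1 : u j = algebraMap (MvPolynomial ι k) K (X j) := by simp [hmap]
  have h2 := hb.lift_eq d0.liftKaehlerDifferential (KaehlerDifferential.D _ _ (X j))
  rw [KaehlerDifferential.map_D, ← h1, Derivation.liftKaehlerDifferential_comp_D] at h2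
  simpa [d0] using h2

/-- In characteristic zero a derivation may be prescribed arbitrarily on algebraically independent
elements. -/
theorem exists_derivation {k K ι : Type} [Field k] [CharZero k] [Field K] [Algebra k K]
    {u : ι → K} (hu : AlgebraicIndependent k u) (w : ι → K) :
    ∃ δ : Derivation k K K, ∀ j, δ (u j) = w j := by
  classical
  obtain ⟨t, hst, ht⟩ := exists_isTranscendenceBasis_superset (R := k) hu.coe_range
  obtain ⟨δ, hδ⟩ := exists_derivation_of_basis ht
    (fun a => if h : ∃ j, u j = a then w h.choose else 0)
  refine ⟨δ, fun j => ?_⟩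
  have h := hδ ⟨u j, hst ⟨j, rfl⟩⟩
  have hex : ∃ i, u i = u j := ⟨j, rfl⟩
  simp only [hex, dif_pos] at h
  rw [h, hu.injective hex.choose_spec]

end

/-! ### Derivations along a divisor -/

/-- Logarithmic derivatives along a divisor of `l = 0` are regular for a derivation killing `l`.

`O` behaves like a discrete valuation ring with uniformizer `ϖ` (`hfac`) in which `l` is not
invertible, `δ` has bounded poles on `O` (`hbd`), and every element of `O` is modulo `ϖ` a simple
root of a polynomial on whose coefficients `δ` is regular (`hsep`). The bound on the pole order of
`δ a / a` is lowered one step at a time: for units by differentiating the equation of `hsep`, for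
`ϖ` by comparing with `δ l / l = 0`, where `l` is a unit times a positive power of `ϖ`. -/
theorem log_deriv_mem {k K : Type} [Field k] [CharZero k] [Field K] [Algebra k K] (O : Subalgebra k K)
    (δ : Derivation k K K) (ϖ l : K) (hϖ : ϖ ∈ O) (hϖ0 : ϖ ≠ 0)
    (hfac : ∀ a ∈ O, a ≠ 0 → ∃ (j : ℕ) (u : K), u ∈ O ∧ u⁻¹ ∈ O ∧ a = u * ϖ ^ j)
    (hsep : ∀ a ∈ O, ∃ p : Polynomial K, (∀ i, δ (p.coeff i) ∈ O) ∧
      (∃ b ∈ O, p.eval a = ϖ * b) ∧ p.derivative.eval a ≠ 0 ∧ (p.derivative.eval a)⁻¹ ∈ O)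
    (hl : l ∈ O) (hl0 : l ≠ 0) (hlu : l⁻¹ ∉ O) (hδl : δ l = 0)
    (hbd : ∃ d ∈ O, d ≠ 0 ∧ ∀ a ∈ O, d * δ a ∈ O) :
    ∀ a ∈ O, a ≠ 0 → δ a / a ∈ O := by
  have hchar : CharZero K := charZero_of_injective_algebraMap (algebraMap k K).injective
  have hnat : ∀ j : ℕ, ((j : K))⁻¹ ∈ O := fun j => by
    have := O.algebraMap_mem ((j : k)⁻¹)
    simpa using this
  have hlog : ∀ (u : K) (j : ℕ), u ≠ 0 →
      δ (u * ϖ ^ j) / (u * ϖ ^ j) = δ u / u + j * (δ ϖ / ϖ) := by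
    intro u j hu
    rw [Derivation.leibniz, Derivation.leibniz_pow]
    rcases j with _ | j
    · simp
    · simp; field_simp; ring
  -- reduction of a general element to units and the uniformizer
  have hred : ∀ c : K, (∀ u ∈ O, u ≠ 0 → u⁻¹ ∈ O → c * (δ u / u) ∈ O) → c * (δ ϖ / ϖ) ∈ O →
      ∀ a ∈ O, a ≠ 0 → c * (δ a / a) ∈ O := by
    intro c hu hw a ha ha0
    obtain ⟨j, u, huO, hui, rfl⟩ := hfac a ha ha0
    have hu0 : u ≠ 0 := left_ne_zero_of_mul ha0
    rw [hlog u j hu0, mul_add]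
    refine O.add_mem (hu u huO hu0 hui) ?_
    have := O.mul_mem (natCast_mem O j) hw
    convert! this using 1; ring
  obtain ⟨M, hM⟩ : ∃ M : ℕ, ∀ a ∈ O, ϖ ^ M * δ a ∈ O := by
    obtain ⟨d, hd, hd0, h⟩ := hbd
    obtain ⟨M, u, hu, hui, rfl⟩ := hfac d hd hd0
    refine ⟨M, fun a ha => ?_⟩
    have hu0 : u ≠ 0 := left_ne_zero_of_mul hd0
    have := O.mul_mem hui (h a ha)
    convert! this using 1; field_simp
  have hbase : ∀ a ∈ O, a ≠ 0 → ϖ ^ (M + 1) * (δ a / a) ∈ O := by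
    refine hred _ (fun u hu hu0 hui => ?_) ?_
    · have := O.mul_mem (O.mul_mem hϖ (hM u hu)) hui
      convert! this using 1; field_simp; ring
    · have := hM ϖ hϖ
      convert! this using 1; field_simp; ring
  have hstep : ∀ N : ℕ, (∀ a ∈ O, a ≠ 0 → ϖ ^ (N + 1) * (δ a / a) ∈ O) →
      ∀ a ∈ O, a ≠ 0 → ϖ ^ N * (δ a / a) ∈ O := by
    intro N hN
    have hunit : ∀ u ∈ O, u ≠ 0 → u⁻¹ ∈ O → ϖ ^ N * (δ u / u) ∈ O := by
      intro u hu hu0 hui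
      obtain ⟨p, hp, ⟨b, hb, hpb⟩, hd0, hd⟩ := hsep u hu
      have h1 : ϖ ^ N * δ (p.eval u) ∈ O := by
        rw [hpb]
        by_cases hb0 : b = 0
        · simp [hb0]
        rw [Derivation.leibniz]
        have e1 := O.mul_mem hb (hN ϖ hϖ hϖ0)
        have e2 := O.mul_mem hb (hN b hb hb0)
        convert! O.add_mem e1 e2 using 1
        simp; field_simp; ring
      have h2 : δ (p.eval u) = (p.sum fun i a => δ a * u ^ i) + p.derivative.eval u * δ u := by
        rw [Polynomial.eval_eq_sum, Polynomial.derivative_eval, Polynomial.sum_def,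
          Polynomial.sum_def, Polynomial.sum_def, map_sum, Finset.sum_mul, ← Finset.sum_add_distrib]
        refine Finset.sum_congr rfl fun i _ => ?_
        rw [Derivation.leibniz, Derivation.leibniz_pow]
        simp; ring
      have h3 : (p.sum fun i a => δ a * u ^ i) ∈ O := by
        rw [Polynomial.sum_def]
        exact O.sum_mem fun i _ => O.mul_mem (hp i) (O.pow_mem hu i)
      have h4 := O.sub_mem h1 (O.mul_mem (O.pow_mem hϖ N) h3)
      rw [h2] at h4
      have h5 := O.mul_mem (O.mul_mem h4 hd) hui
      convert! h5 using 1
      field_simp; ring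
    refine hred _ hunit ?_
    obtain ⟨j, w, hw, hwi, hlw⟩ := hfac l hl hl0
    have hw0 : w ≠ 0 := by rintro rfl; simp at hlw; exact hl0 hlw
    have hj : j ≠ 0 := by
      rintro rfl
      simp at hlw
      exact hlu (hlw ▸ hwi)
    have h0 := hlog w j hw0
    rw [← hlw, hδl, zero_div] at h0
    have h1 := O.neg_mem (O.mul_mem (hnat j) (hunit w hw hw0 hwi))
    convert! h1 using 1
    have hj' : (j : K) ≠ 0 := by exact_mod_cast hj
    have : δ ϖ / ϖ = - ((j : K)⁻¹ * (δ w / w)) := by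
      field_simp
      field_simp at h0
      linear_combination -h0
    rw [this]; ring
  have hall : ∀ N : ℕ, (∀ a ∈ O, a ≠ 0 → ϖ ^ N * (δ a / a) ∈ O) →
      ∀ a ∈ O, a ≠ 0 → δ a / a ∈ O := by
    intro N
    induction N with
    | zero => intro h; simpa using h
    | succ N ih => exact fun h => ih (hstep N h)
  exact hall _ hbase

/-- Noether normalization adapted to a nonzero nonunit `l`: the polynomial ring has a distinguished
variable which occurs in the constant term `a₀` of the minimal polynomial of `l`. The last clause
follows from the minimal polynomial dividing every polynomial annihilating `l`. -/
theorem noether_separating_variable {k A : Type} [Field k] [CommRing A] [IsDomain A] [Algebra k A]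
    [Algebra.FiniteType k A] (l : A) (hl0 : l ≠ 0) (hlu : ¬ IsUnit l) :
    ∃ (m : ℕ) (g : Polynomial (MvPolynomial (Fin m) k) →ₐ[k] A)
      (a₀ : Polynomial (MvPolynomial (Fin m) k)),
      Function.Injective g ∧ g.IsIntegral ∧ 0 < a₀.natDegree ∧ l ∣ g a₀ ∧
      ∀ q : Polynomial (Polynomial (MvPolynomial (Fin m) k)),
        q.eval₂ (g : _ →+* A) l = 0 → a₀ ∣ q.coeff 0 := by
  obtain ⟨s, g, hg, hi⟩ := exists_integral_inj_algHom_of_fg k A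
  let : Algebra (MvPolynomial (Fin s) k) A := (g : MvPolynomial (Fin s) k →+* A).toAlgebra
  have hmap : ∀ p, algebraMap (MvPolynomial (Fin s) k) A p = g p := fun p => rfl
  have : FaithfulSMul (MvPolynomial (Fin s) k) A :=
    (faithfulSMul_iff_algebraMap_injective _ _).2 hg
  have hintg : IsIntegral (MvPolynomial (Fin s) k) l := hi l
  set p := minpoly (MvPolynomial (Fin s) k) l with hp
  have hdvd : ∀ q : Polynomial (MvPolynomial (Fin s) k), Polynomial.aeval l q = 0 →
      p.coeff 0 ∣ q.coeff 0 := by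
    intro q hq
    obtain ⟨r, hr⟩ := minpoly.isIntegrallyClosed_dvd hintg hq
    exact ⟨r.coeff 0, by rw [hr, Polynomial.mul_coeff_zero]⟩
  have hla : l ∣ g (p.coeff 0) := by
    have h1 : Polynomial.aeval l p = 0 := minpoly.aeval _ _
    rw [← Polynomial.divX_mul_X_add p] at h1
    simp only [map_add, map_mul, Polynomial.aeval_X, Polynomial.aeval_C, hmap] at h1
    exact ⟨-Polynomial.aeval l p.divX, by linear_combination h1⟩
  have ha0 : p.coeff 0 ≠ 0 := by
    intro h0
    have h1 : p.divX * Polynomial.X = p := by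
      have := Polynomial.divX_mul_X_add p
      rwa [h0, map_zero, add_zero] at this
    have h2 : Polynomial.aeval l p.divX = 0 := by
      have : Polynomial.aeval l p = 0 := minpoly.aeval _ _
      rw [← h1, map_mul, Polynomial.aeval_X] at this
      exact (mul_eq_zero.1 this).resolve_right hl0
    have hp0 : p ≠ 0 := minpoly.ne_zero hintg
    have hd0 : p.divX ≠ 0 := by
      intro h; rw [h, zero_mul] at h1; exact hp0 h1.symm
    have h3 := Polynomial.natDegree_le_of_dvd (minpoly.isIntegrallyClosed_dvd hintg h2) hd0
    have h4 := minpoly.natDegree_pos hintg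
    rw [Polynomial.natDegree_divX_eq_natDegree_tsub_one] at h3
    change p.natDegree ≤ p.natDegree - 1 at h3
    change 0 < p.natDegree at h4
    omega
  -- A constant `p.coeff 0`, being divisible by `l`, would make `l` a unit.
  have hvars : (p.coeff 0).vars ≠ ∅ := by
    rw [Ne, MvPolynomial.vars_eq_empty_iff_eq_C]
    intro hC
    apply hlu
    refine isUnit_of_dvd_unit hla ?_
    rw [hC] at ha0 ⊢
    have : MvPolynomial.coeff 0 (p.coeff 0) ≠ 0 := by
      intro h0; apply ha0; rw [h0]; simp
    exact ((isUnit_iff_ne_zero.2 this).map MvPolynomial.C).map g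
  obtain ⟨i, hi'⟩ := Finset.nonempty_iff_ne_empty.2 hvars
  rw [MvPolynomial.mem_vars_iff_degreeOf_ne_zero] at hi'
  obtain ⟨m, rfl⟩ : ∃ m, s = m + 1 := ⟨s - 1, by have := i.2; omega⟩
  let e : MvPolynomial (Fin (m + 1)) k ≃ₐ[k] Polynomial (MvPolynomial (Fin m) k) :=
    (MvPolynomial.renameEquiv k (Equiv.swap i 0)).trans (MvPolynomial.finSuccEquiv k m)
  refine ⟨m, g.comp e.symm, e (p.coeff 0), hg.comp e.symm.injective, ?_, ?_, ?_, ?_⟩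
  · exact RingHom.IsIntegral.trans _ _
      (RingHom.isIntegral_of_surjective _ e.symm.surjective) hi
  · have h1 : (e (p.coeff 0)).natDegree = (p.coeff 0).degreeOf i := by
      simp only [e, AlgEquiv.trans_apply, MvPolynomial.natDegree_finSuccEquiv]
      have := MvPolynomial.degreeOf_rename_of_injective (p := p.coeff 0)
        (Equiv.swap i 0).injective i
      rw [Equiv.swap_apply_left] at this
      exact this
    omega
  · simpa using hla
  · intro q hq
    have h1 := hdvd (q.map (e.symm : _ →+* MvPolynomial (Fin (m + 1)) k)) (by
      rw [Polynomial.aeval_def, Polynomial.eval₂_map]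
      exact hq)
    have h2 := map_dvd e h1
    simpa using h2

section

open Polynomial

set_option maxHeartbeats 1600000 in
/-- A divisor of `l = 0`, for a field `K` algebraic over `F[X]` and `l` integral with `l⁻¹` not
integral. `O` is the localization of the integral closure of `F[X]` in `K` at a maximal ideal
containing `l`, and `π` the map to its residue field. Derivations of `K` that kill `l` and preserve
`F` preserve `O` and its maximal ideal, because their logarithmic derivatives are regular. -/
theorem exists_dvr {k F K : Type} [Field k] [CharZero k] [Field F] [Field K] [Algebra k F]
    [Algebra k K] [Algebra F K] [Algebra F[X] K] [IsScalarTower k F K]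
    [IsScalarTower F F[X] K] [IsScalarTower k F[X] K]
    (hinj : Function.Injective (algebraMap F[X] K))
    [Algebra.EssFiniteType k K] [Algebra.IsAlgebraic F[X] K]
    (l : K) (hl : IsIntegral F[X] l) (hl0 : l ≠ 0) (hlu : ¬ IsIntegral F[X] l⁻¹) :
    ∃ (O : Subalgebra k K) (κ : Type) (_ : Field κ) (_ : Algebra k κ) (π : O →ₐ[k] κ),
      Function.Surjective π ∧ (∀ x : K, IsIntegral F[X] x → x ∈ O) ∧
      (∀ x : O, (x : K) = l → π x = 0) ∧
      ∀ δ : Derivation k K K, δ l = 0 → (∀ f : F, δ (algebraMap F K f) ∈ (algebraMap F K).range) →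
        ∀ a : O, ∃ b : O, (b : K) = δ a ∧ (π a = 0 → π b = 0) := by
  have hcharF : CharZero F := charZero_of_injective_algebraMap (algebraMap k F).injective
  have : FaithfulSMul F[X] K := (faithfulSMul_iff_algebraMap_injective _ _).2 hinj
  let L := FractionRing F[X]
  let : Algebra L K := FractionRing.liftAlgebra F[X] K
  have : IsScalarTower F[X] L K := FractionRing.isScalarTower_liftAlgebra _ _
  have : Algebra.IsAlgebraic L K := (IsFractionRing.comap_isAlgebraic_iff (A := F[X])).1 ‹_›
  have : IsScalarTower k L K := IsScalarTower.of_algebraMap_eq fun x => by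
    rw [IsScalarTower.algebraMap_apply k F[X] K, IsScalarTower.algebraMap_apply F[X] L K,
      ← IsScalarTower.algebraMap_apply k F[X] L]
  have : Algebra.EssFiniteType L K := Algebra.EssFiniteType.of_comp k L K
  have : FiniteDimensional L K := by
    exact Algebra.finite_of_essFiniteType_of_isAlgebraic
  let B := integralClosure F[X] K
  have : IsDedekindDomain B := integralClosure.isDedekindDomain F[X] L K
  have : IsFractionRing B K := integralClosure.isFractionRing_of_finite_extension L K
  have : Module.Finite F[X] B := IsIntegralClosure.finite F[X] L K B
  have hlB : l ∈ B := hl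
  have hnu : (⟨l, hlB⟩ : B) ∈ nonunits B := by
    rintro ⟨u, hu⟩
    apply hlu
    have : l⁻¹ = ((u⁻¹ : Bˣ) : B) := by
      have h1 : ((u * u⁻¹ : Bˣ) : B) = 1 := by simp
      have h2 := congrArg (Subtype.val : B → K) h1
      rw [Units.val_mul, hu] at h2
      exact inv_eq_of_mul_eq_one_right h2
    rw [this]
    exact ((u⁻¹ : Bˣ) : B).2
  obtain ⟨Q, hQ, hlQ⟩ := exists_max_ideal_of_mem_nonunits hnu
  have hQ0 : Q ≠ ⊥ := by
    rintro rfl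
    exact hl0 (congrArg Subtype.val ((Ideal.mem_bot).1 hlQ))
  have hS : Q.primeCompl ≤ nonZeroDivisors B := Q.primeCompl_le_nonZeroDivisors
  let O' : Subalgebra B K := Localization.subalgebra.ofField K Q.primeCompl hS
  have : IsLocalization.AtPrime O' Q := Localization.subalgebra.isLocalization_ofField K Q.primeCompl hS
  have hdvr : IsDiscreteValuationRing O' :=
    IsLocalization.AtPrime.isDiscreteValuationRing_of_dedekind_domain B hQ0 O'
  have : IsScalarTower k B K := inferInstance
  let O : Subalgebra k K := O'.restrictScalars k
  have hmemO : ∀ x : K, x ∈ O ↔ ∃ a s : B, s ∉ Q ∧ x = a / s := by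
    intro x
    constructor
    · rintro ⟨a, s, hs, rfl⟩
      exact ⟨a, s, hs, (div_eq_mul_inv _ _).symm⟩
    · rintro ⟨a, s, hs, rfl⟩
      exact ⟨a, s, hs, div_eq_mul_inv _ _⟩
  have hBO : ∀ b : B, (b : K) ∈ O := fun b => O'.algebraMap_mem b
  let ρ : O' →+* (IsLocalRing.ResidueField O') := IsLocalRing.residue O'
  obtain ⟨ϖ, hϖ⟩ := IsDiscreteValuationRing.exists_irreducible O'
  have hρ : ∀ x : O', ρ x = 0 ↔ ∃ b : O', x = ϖ * b := by
    intro x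
    rw [IsLocalRing.residue_eq_zero_iff, hϖ.maximalIdeal_eq, Ideal.mem_span_singleton]
    rfl
  have hρu : ∀ x : O', ρ x ≠ 0 → ((x : K) ≠ 0 ∧ (x : K)⁻¹ ∈ O) := by
    intro x hx
    have hu : IsUnit x := by
      by_contra h
      exact hx ((IsLocalRing.residue_eq_zero_iff x).2 h)
    obtain ⟨u, rfl⟩ := hu
    have h2 : ((u : O') : K) * ((u⁻¹ : O'ˣ) : O') = 1 := by
      rw [← MulMemClass.coe_mul, Units.mul_inv]; rfl
    refine ⟨left_ne_zero_of_mul_eq_one h2, ?_⟩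
    rw [inv_eq_of_mul_eq_one_right h2]
    exact ((u⁻¹ : O'ˣ) : O').2
  let ρF : O' →ₐ[F] (IsLocalRing.ResidueField O') := { ρ with commutes' := fun r => rfl }
  let π : O →ₐ[k] (IsLocalRing.ResidueField O') := { ρ with commutes' := fun r => rfl }
  have hπ : ∀ x : O', π x = ρ x := fun x => rfl
  have hρB : ∀ b : B, ρ (algebraMap B O' b) = 0 ↔ b ∈ Q := by
    intro b
    rw [IsLocalRing.residue_eq_zero_iff]
    rw [← IsLocalization.AtPrime.to_map_mem_maximal_iff O' Q b]
  have : IsScalarTower F B K := inferInstance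
  -- `Q` contains a nonzero polynomial over `F`, so the residue field is algebraic over `F`.
  have halg : Algebra.IsAlgebraic F (IsLocalRing.ResidueField O') := by
    obtain ⟨f, hfQ, hf0⟩ : ∃ f : F[X], algebraMap F[X] B f ∈ Q ∧ f ≠ 0 := by
      have h1 : Q.comap (algebraMap F[X] B) ≠ ⊥ :=
        Ideal.comap_ne_bot_of_integral_mem (x := (⟨l, hlB⟩ : B))
          (fun h => hl0 (congrArg Subtype.val h)) hlQ (Algebra.IsIntegral.isIntegral _)
      obtain ⟨f, hf, hf0⟩ := Submodule.exists_mem_ne_zero_of_ne_bot h1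
      exact ⟨f, hf, hf0⟩
    let φ : F[X] →ₐ[F] IsLocalRing.ResidueField O' :=
      ρF.comp
        ((IsScalarTower.toAlgHom F B O').comp (IsScalarTower.toAlgHom F F[X] B))
    have hφ : ∀ p, φ p = ρ (algebraMap B O' (algebraMap F[X] B p)) := fun p => rfl
    have hφX : ∀ p, aeval (φ X) p = φ p := fun p => by
      rw [aeval_algHom_apply, aeval_X_left_apply]
    have hT : φ X ∈ algebraicClosure F (IsLocalRing.ResidueField O') := by
      rw [mem_algebraicClosure_iff]
      exact ⟨f, hf0, by rw [hφX, hφ, hρB]; exact hfQ⟩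
    let E := algebraicClosure F (IsLocalRing.ResidueField O')
    let : Algebra F[X] E := (aeval (⟨φ X, hT⟩ : E) : F[X] →ₐ[F] E).toAlgebra
    have hE : ∀ p : F[X], ((algebraMap F[X] E p : E) : IsLocalRing.ResidueField O') = φ p := by
      intro p
      rw [← hφX]
      exact (aeval_algHom_apply E.val (⟨φ X, hT⟩ : E) p).symm
    have : IsScalarTower F[X] E (IsLocalRing.ResidueField O') :=
      IsScalarTower.of_algebraMap_eq fun p => (hE p).symm
    have hBE : ∀ b : B, ρ (algebraMap B O' b) ∈ E := by
      intro b
      have h1 : IsIntegral F[X] b := Algebra.IsIntegral.isIntegral _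
      have h2 : IsIntegral F[X] (ρ (algebraMap B O' b)) :=
        h1.map (IsScalarTower.toAlgHom F[X] B (IsLocalRing.ResidueField O'))
      have h3 : IsIntegral E (ρ (algebraMap B O' b)) := h2.tower_top
      rw [mem_algebraicClosure_iff]
      exact (isIntegral_trans (R := F) _ h3).isAlgebraic
    refine ⟨fun y => ?_⟩
    obtain ⟨x, rfl⟩ := IsLocalRing.residue_surjective y
    rw [← mem_algebraicClosure_iff]
    obtain ⟨a, s, hs, hx⟩ := (hmemO x).1 x.2
    have hs0 : (s : K) ≠ 0 := by
      intro h; exact hs ((Subtype.ext h : s = 0) ▸ Q.zero_mem)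
    have h1 : x * algebraMap B O' s = algebraMap B O' a := by
      apply Subtype.ext
      change (x : K) * (s : K) = a
      rw [hx]; field_simp
    have h2 := congrArg ρ h1
    rw [map_mul] at h2
    have h3 : ρ (algebraMap B O' s) ≠ 0 := fun h => hs ((hρB s).1 h)
    have h4 : ρ x = ρ (algebraMap B O' a) / ρ (algebraMap B O' s) := by
      rw [← h2]; field_simp
    change ρ x ∈ E
    rw [h4]
    exact E.div_mem (hBE a) (hBE s)
  refine ⟨O, (IsLocalRing.ResidueField O'), inferInstance, inferInstance, π, fun y => (IsLocalRing.residue_surjective (R := O') y), fun x hx => hBO ⟨x, hx⟩, ?_, ?_⟩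
  · intro x hx
    have h1 := (hρB ⟨l, hlB⟩).2 hlQ
    have h2 : x = (show O from algebraMap B O' ⟨l, hlB⟩) := Subtype.ext hx
    exact (congrArg π h2).trans h1
  intro δ hδl hδF
  have hlog : ∀ a ∈ O, a ≠ 0 → δ a / a ∈ O := by
    refine log_deriv_mem O δ ϖ l ϖ.2 (fun h => hϖ.ne_zero (Subtype.ext h)) ?_ ?_ (hBO ⟨l, hlB⟩) hl0 ?_ hδl ?_
    · intro a ha ha0
      obtain ⟨j, u, hu⟩ := IsDiscreteValuationRing.eq_unit_mul_pow_irreducible (x := (⟨a, ha⟩ : O')) (fun h => ha0 (congrArg Subtype.val h)) hϖ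
      have hu' := hρu u (by
        intro h0
        exact (IsLocalRing.residue_ne_zero_iff_isUnit (u : O')).2 u.isUnit h0)
      exact ⟨j, u, (u : O').2, hu'.2, congrArg Subtype.val hu⟩
    · intro a ha
      let a' : O' := ⟨a, ha⟩
      have hev : ∀ q : F[X], (q.map (algebraMap F K)).eval a = (aeval a' q : O') := by
        intro q
        rw [eval_map_algebraMap]
        exact aeval_algHom_apply (IsScalarTower.toAlgHom F O' K) a' q
      have hevρ : ∀ q : F[X], ρ (aeval a' q : O') = aeval (ρ a') q := by
        intro q
        exact (aeval_algHom_apply ρF a' q).symm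
      have hintg : IsIntegral F (ρ a') := (halg.isAlgebraic (ρ a')).isIntegral
      refine ⟨(minpoly F (ρ a')).map (algebraMap F K), fun i => ?_, ?_, ?_⟩
      · rw [coeff_map]
        obtain ⟨f, hf⟩ := hδF ((minpoly F (ρ a')).coeff i)
        rw [← hf]
        exact (algebraMap F O' f).2
      · have h0 := hevρ (minpoly F (ρ a'))
        rw [minpoly.aeval, hρ] at h0
        obtain ⟨b, hb⟩ := h0
        exact ⟨b, b.2, by rw [hev, hb]; rfl⟩
      · rw [derivative_map, hev]
        apply hρu
        rw [hevρ]
        exact (minpoly.irreducible hintg).separable.aeval_derivative_ne_zero (minpoly.aeval _ _)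
    · intro h
      have h1 := (hρB ⟨l, hlB⟩).2 hlQ
      have h2 : (algebraMap B O' ⟨l, hlB⟩) * ⟨l⁻¹, h⟩ = 1 := Subtype.ext (mul_inv_cancel₀ hl0)
      have h3 := congrArg ρ h2
      rw [map_mul, h1, zero_mul, map_one] at h3
      exact zero_ne_one h3
    -- `B` is finite over `F[X]`, so clearing the denominators of `δ` on `X` and on the generators
    -- bounds its poles.
    · classical
      obtain ⟨gens, hgens⟩ := (Module.Finite.fg_top : (⊤ : Submodule F[X] B).FG)
      let t : K := algebraMap F[X] K X
      obtain ⟨d, hd⟩ := IsLocalization.exist_integer_multiples_of_finset (nonZeroDivisors B)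
        (insert (δ t) (gens.image fun b : B => δ (b : K)))
      have hd0 : ((d : B) : K) ≠ 0 := fun h => nonZeroDivisors.coe_ne_zero d (Subtype.ext h)
      have hdt : (d : K) * δ t ∈ B := by
        obtain ⟨b, hb⟩ := hd (δ t) (Finset.mem_insert_self _ _)
        rw [Algebra.smul_def] at hb
        exact hb ▸ b.2
      have hdg : ∀ b ∈ gens, (d : K) * δ b ∈ B := by
        intro b hb
        obtain ⟨c, hc⟩ := hd (δ b) (Finset.mem_insert_of_mem (Finset.mem_image.2 ⟨b, hb, rfl⟩))
        rw [Algebra.smul_def] at hc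
        exact hc ▸ c.2
      have hPB : ∀ p : F[X], algebraMap F[X] K p ∈ B := fun p => B.algebraMap_mem p
      have hdF : ∀ f : F, (d : K) * δ (algebraMap F K f) ∈ B := by
        intro f
        obtain ⟨f', hf'⟩ := hδF f
        rw [← hf', IsScalarTower.algebraMap_apply F F[X] K]
        exact B.mul_mem (d : B).2 (hPB _)
      have hdmul : ∀ x y : K, x ∈ B → y ∈ B → (d : K) * δ x ∈ B → (d : K) * δ y ∈ B →
          (d : K) * δ (x * y) ∈ B := by
        intro x y hx hy h1 h2
        rw [Derivation.leibniz]
        convert! B.add_mem (B.mul_mem hx h2) (B.mul_mem hy h1) using 1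
        simp; ring
      have hdP : ∀ p : F[X], (d : K) * δ (algebraMap F[X] K p) ∈ B := by
        intro p
        induction p using Polynomial.induction_on' with
        | add p q hp hq => rw [map_add, map_add, mul_add]; exact B.add_mem hp hq
        | monomial n a =>
          rw [← C_mul_X_pow_eq_monomial, map_mul, map_pow]
          refine hdmul _ _ (hPB _) (B.pow_mem (hPB _) _) ?_ ?_
          · have : algebraMap F[X] K (C a) = algebraMap F K a :=
              (IsScalarTower.algebraMap_apply F F[X] K a).symm
            rw [this]; exact hdF a
          · induction n with
            | zero => simp
            | succ n ih => rw [pow_succ]; exact hdmul _ _ (B.pow_mem (hPB _) _) (hPB _) ih hdt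
      have hdB : ∀ b : B, (d : K) * δ b ∈ B := by
        intro b
        have hb : b ∈ Submodule.span F[X] (gens : Set B) := by rw [hgens]; trivial
        induction hb using Submodule.span_induction with
        | mem b hb => exact hdg b hb
        | zero => simp
        | add x y _ _ hx hy =>
          rw [AddMemClass.coe_add, map_add, mul_add]; exact B.add_mem hx hy
        | smul p x _ hx =>
          have : ((p • x : B) : K) = algebraMap F[X] K p * x := by
            rw [← Algebra.smul_def]; rfl
          rw [this]
          exact hdmul _ _ (hPB _) x.2 (hdP p) hx
      refine ⟨d, hBO d, hd0, fun a ha => ?_⟩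
      obtain ⟨b, s, hs, rfl⟩ := (hmemO a).1 ha
      have hs0 : (s : K) ≠ 0 := by
        intro h; exact hs ((Subtype.ext h : s = 0) ▸ Q.zero_mem)
      have hsi : ((s : B) : K)⁻¹ ∈ O := by
        rw [hmemO]; exact ⟨1, s, hs, by simp⟩
      have h1 := O.mul_mem hsi (hBO ⟨_, hdB b⟩)
      have h2 := O.mul_mem (O.mul_mem hsi hsi) (O.mul_mem (hBO b) (hBO ⟨_, hdB s⟩))
      convert! O.sub_mem h1 h2 using 1
      rw [Derivation.leibniz_div]
      simp
      field_simp
  intro a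
  by_cases ha : (a : K) = 0
  · refine ⟨0, by simp [ha], fun _ => map_zero _⟩
  · refine ⟨a * ⟨_, hlog a a.2 ha⟩, by simp; field_simp, fun h => ?_⟩
    rw [map_mul, h, zero_mul]

end

section

open Polynomial

/-- Common denominators pass from a ring homomorphism to the induced map on polynomials. -/
theorem clear_denominators {R R' : Type} [CommRing R] [CommRing R'] (ψ : R →+* R')
    (M : Submonoid R) (h : ∀ r' : R', ∃ s ∈ M, ∃ r : R, ψ r = ψ s * r') (p : R'[X]) :
    ∃ s ∈ M, ∃ q : R[X], q.map ψ = C (ψ s) * p := by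
  induction p using Polynomial.induction_on' with
  | add p q hp hq =>
    obtain ⟨s, hs, p', hp'⟩ := hp
    obtain ⟨t, ht, q', hq'⟩ := hq
    refine ⟨s * t, M.mul_mem hs ht, C t * p' + C s * q', ?_⟩
    simp only [Polynomial.map_add, Polynomial.map_mul, map_C, hp', hq', map_mul]
    ring
  | monomial n a =>
    obtain ⟨s, hs, r, hr⟩ := h a
    exact ⟨s, hs, monomial n r, by simp [C_mul_monomial, hr]⟩

/-- A finitely generated algebra `A` in which `l` is not invertible is integral over `F[x]`, with
`F = k(u)` generated by algebraically independent elements of `A`, in such a way that `l` remains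
non-invertible in the integral closure of `F[x]`. -/
theorem noether_prep {k K : Type} [Field k] [Field K] [Algebra k K]
    (A : Subalgebra k K) (hA : A.FG) (l : K) (hl : l ∈ A) (hl0 : l ≠ 0) (hlu : l⁻¹ ∉ A) :
    ∃ (m : ℕ) (u : Fin m → K) (x : K), (∀ j, u j ∈ A) ∧
      AlgebraicIndependent k (fun o : Option (Fin m) => o.elim x u) ∧
      (∀ a ∈ A, (aeval x : (IntermediateField.adjoin k (Set.range u))[X] →ₐ[_] K).toRingHom.IsIntegralElem
        a) ∧
      ¬ (aeval x : (IntermediateField.adjoin k (Set.range u))[X] →ₐ[_] K).toRingHom.IsIntegralElem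
        l⁻¹ := by
  have : Algebra.FiniteType k A := (Subalgebra.fg_iff_finiteType A).1 hA
  obtain ⟨m, g, a₀, hg, hgi, hdeg, -, hdvd⟩ := noether_separating_variable (k := k) (⟨l, hl⟩ : A)
    (fun h => hl0 (congrArg Subtype.val h)) (by
      rintro ⟨w, hw⟩
      apply hlu
      have h1 : l * ((w⁻¹ : Aˣ) : A) = 1 := by
        have := congrArg (Subtype.val : A → K) w.mul_inv
        rw [hw] at this
        simpa using this
      rw [inv_eq_of_mul_eq_one_right h1]
      exact SetLike.coe_mem _)
  set G : (MvPolynomial (Fin m) k)[X] →ₐ[k] K := A.val.comp g with hG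
  have hGinj : Function.Injective G := Subtype.val_injective.comp hg
  let u : Fin m → K := fun j => G (C (MvPolynomial.X j))
  let x : K := G X
  let F := IntermediateField.adjoin k (Set.range u)
  let φ : MvPolynomial (Fin m) k →ₐ[k] F :=
    MvPolynomial.aeval fun j => ⟨u j, IntermediateField.subset_adjoin _ _ ⟨j, rfl⟩⟩
  have hφ : ∀ p, (φ p : K) = MvPolynomial.aeval u p := by
    intro p
    have : (F.val.comp φ) = MvPolynomial.aeval u := by
      apply MvPolynomial.algHom_ext
      intro j
      simp [φ]
    exact DFunLike.congr_fun this p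
  have hGC : ∀ p, G (C p) = φ p := by
    intro p
    rw [hφ]
    have : (G.comp (CAlgHom (R := k) (A := MvPolynomial (Fin m) k))) = MvPolynomial.aeval u := by
      apply MvPolynomial.algHom_ext
      intro j
      simp [u]
    exact DFunLike.congr_fun this p
  let Φ : F[X] →ₐ[F] K := aeval x
  have hGΦ : ∀ p : (MvPolynomial (Fin m) k)[X], Φ (p.map (φ : MvPolynomial (Fin m) k →+* F)) = G p := by
    intro p
    induction p using Polynomial.induction_on' with
    | add p q hp hq => simp [hp, hq]
    | monomial n a =>
      simp only [← C_mul_X_pow_eq_monomial, map_mul, map_pow, hGC, Φ, x, aeval_C, aeval_X,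
        Polynomial.map_mul, Polynomial.map_pow, map_C, map_X]
      rfl
  have hai : AlgebraicIndependent k (fun o : Option (Fin m) => o.elim x u) := by
    rw [algebraicIndependent_iff_injective_aeval]
    have : (MvPolynomial.aeval (fun o : Option (Fin m) => o.elim x u) : _ →ₐ[k] K) =
        G.comp (MvPolynomial.optionEquivLeft k (Fin m)).toAlgHom := by
      apply MvPolynomial.algHom_ext
      rintro (_ | j)
      · simp [x]
      · simp [u]
    rw [this]
    exact hGinj.comp (MvPolynomial.optionEquivLeft k (Fin m)).injective
  have hφinj : Function.Injective φ := by
    intro p q h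
    have := hGC p
    rw [h, ← hGC] at this
    exact C_injective (hGinj this)
  refine ⟨m, u, x, fun j => (g _).2, hai, ?_, ?_⟩
  · intro a ha
    obtain ⟨p, hp, hpe⟩ := hgi ⟨a, ha⟩
    refine ⟨p.map (mapRingHom (φ : MvPolynomial (Fin m) k →+* F)), hp.map _, ?_⟩
    rw [eval₂_map]
    have h1 : (Φ.toRingHom.comp (mapRingHom (φ : MvPolynomial (Fin m) k →+* F))) = (A.val : A →+* K).comp g.toRingHom := by
      ext p
      · exact hGΦ (C _)
      · exact hGΦ (C _)
      · exact hGΦ X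
    have h2 := congrArg A.val hpe
    rw [map_zero] at h2
    erw [h1]
    rw [← h2]
    erw [Polynomial.hom_eval₂]
    rfl
  · rintro ⟨f, hf, hfe⟩
    have h0 : ∀ r' : F, ∃ s ∈ nonZeroDivisors (MvPolynomial (Fin m) k),
        ∃ r : MvPolynomial (Fin m) k, (φ : MvPolynomial (Fin m) k →+* F) r =
          (φ : MvPolynomial (Fin m) k →+* F) s * r' := by
      intro r'
      obtain ⟨r, s, hrs⟩ := (IntermediateField.mem_adjoin_range_iff k u (r' : K)).1 r'.2
      by_cases hs : s = 0
      · refine ⟨1, Submonoid.one_mem _, 0, ?_⟩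
        have : r' = 0 := Subtype.ext (by rw [hrs, hs]; simp)
        simp [this]
      · refine ⟨s, mem_nonZeroDivisors_of_ne_zero hs, r, Subtype.ext ?_⟩
        have hs' : MvPolynomial.aeval u s ≠ 0 := by
          rw [← hφ]
          exact fun h => hs (hφinj (by rw [map_zero]; exact Subtype.ext h))
        change (φ r : K) = (φ s : K) * r'
        rw [hφ, hφ, hrs, mul_div_cancel₀ _ hs']
    obtain ⟨t, ht, q, hq⟩ := clear_denominators (mapRingHom (φ : MvPolynomial (Fin m) k →+* F))
      ((nonZeroDivisors (MvPolynomial (Fin m) k)).map C) (by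
        intro p
        obtain ⟨s, hs, q, hq⟩ := clear_denominators (φ : MvPolynomial (Fin m) k →+* F) _ h0 p
        exact ⟨C s, ⟨s, hs, rfl⟩, q, by simpa using hq⟩) f.reverse
    obtain ⟨s, hs, rfl⟩ := ht
    have hl' : eval₂ Φ.toRingHom l f.reverse = 0 := by
      have : Invertible l⁻¹ := invertibleOfNonzero (inv_ne_zero hl0)
      have := (eval₂_reverse_eq_zero_iff Φ.toRingHom l⁻¹ f).2 hfe
      rwa [invOf_eq_inv, inv_inv] at this
    have h1 : (Φ.toRingHom.comp (mapRingHom (φ : MvPolynomial (Fin m) k →+* F))) = (A.val : A →+* K).comp g.toRingHom := by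
      ext p
      · exact hGΦ (C _)
      · exact hGΦ (C _)
      · exact hGΦ X
    have h2 : eval₂ Φ.toRingHom l (q.map (mapRingHom (φ : MvPolynomial (Fin m) k →+* F))) = 0 := by
      rw [hq, eval₂_mul, hl', mul_zero]
    rw [eval₂_map, h1] at h2
    have h3 : q.eval₂ (g : _ →+* A) ⟨l, hl⟩ = 0 := by
      apply Subtype.val_injective
      have := Polynomial.hom_eval₂ q (g : _ →+* A) (A.val : A →+* K) ⟨l, hl⟩
      exact this.trans h2
    have h4 := hdvd q h3
    have h5 : (q.coeff 0).map (φ : MvPolynomial (Fin m) k →+* F) = (C s : (MvPolynomial (Fin m) k)[X]).map (φ : MvPolynomial (Fin m) k →+* F) := by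
      have := congrArg (fun p => p.coeff 0) hq
      simp only [coeff_map, coeff_C_mul, coeff_zero_reverse, hf.leadingCoeff, mul_one] at this
      exact this
    have h6 := Polynomial.map_injective (φ : MvPolynomial (Fin m) k →+* F) hφinj h5
    rw [h6] at h4
    have h7 := natDegree_le_of_dvd h4 (C_ne_zero.2 (nonZeroDivisors.ne_zero hs))
    rw [natDegree_C] at h7
    omega

end

section

open Polynomial

open IntermediateField.algebraAdjoinAdjoin Algebra in
set_option maxHeartbeats 1000000 in
/-- A divisor of `l = 0` on the spectrum of a finitely generated algebra `A` of transcendence degree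
at least `n + 1`: a valuation ring `O ⊇ A` with residue map `π : O → κ` killing `l`, together with
`m ≥ n` derivations of `K` which kill `l` and descend to derivations `d` of `κ`, dual to the
reductions of elements `u` of `A`. -/
theorem dvr_data {k K : Type} [Field k] [CharZero k] [Field K] [Algebra k K]
    (A : Subalgebra k K) (hA : A.FG) [IsFractionRing A K]
    (l : K) (hl : l ∈ A) (hl0 : l ≠ 0) (hlu : l⁻¹ ∉ A)
    {n : ℕ} {v : Fin (n + 1) → K} (hv : AlgebraicIndependent k v) :
    ∃ (O : Subalgebra k K) (κ : Type) (_ : Field κ) (_ : Algebra k κ) (π : O →ₐ[k] κ),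
      A ≤ O ∧ (∀ a : O, (a : K) = l → π a = 0) ∧
      ∃ (m : ℕ) (u : Fin m → K) (δ : Fin m → Derivation k K K) (d : Fin m → Derivation k κ κ),
        n ≤ m ∧ (∀ j, u j ∈ A) ∧ (∀ i, δ i l = 0) ∧
        (∀ i (a : O), ∃ b : O, (b : K) = δ i a ∧ π b = d i (π a)) ∧
        ∀ i j (a : O), (a : K) = u j → d i (π a) = if i = j then 1 else 0 := by
  classical
  obtain ⟨m, u, x, huA, hai, hintg, hnint⟩ := noether_prep A hA l hl hl0 hlu
  let F := IntermediateField.adjoin k (Set.range u)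
  let B := Algebra.adjoin k (Set.range u)
  have hu : AlgebraicIndependent k u := (AlgebraicIndependent.option_iff.1 hai).1
  have hx : Transcendental F x := fun h =>
    (AlgebraicIndependent.option_iff.1 hai).2 ((IsFractionRing.isAlgebraic_iff B F K).2 h)
  let iA : Algebra F[X] K := (aeval x : F[X] →ₐ[F] K).toRingHom.toAlgebra
  have hmap : ∀ p : F[X], algebraMap F[X] K p = aeval x p := fun p => rfl
  have hinj : Function.Injective (algebraMap F[X] K) := transcendental_iff_injective.1 hx
  have t1 : IsScalarTower F F[X] K := IsScalarTower.of_algebraMap_eq fun f => by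
    rw [hmap, algebraMap_eq, aeval_C]
  have t2 : IsScalarTower k F[X] K := IsScalarTower.of_algebraMap_eq fun f => by
    rw [hmap, IsScalarTower.algebraMap_apply k F F[X], algebraMap_eq, aeval_C]
    rfl
  have hintg' : ∀ a ∈ A, IsIntegral F[X] a := hintg
  have hnint' : ¬ IsIntegral F[X] l⁻¹ := hnint
  have halg : Algebra.IsAlgebraic F[X] K := ⟨fun y => by
    obtain ⟨a, b, hb, rfl⟩ := IsFractionRing.div_surjective (A := A) y
    rw [div_eq_mul_inv]
    exact (hintg' a a.2).isAlgebraic.mul (hintg' b b.2).isAlgebraic.inv⟩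
  have : Algebra.FiniteType k A := (Subalgebra.fg_iff_finiteType A).1 hA
  have : Algebra.EssFiniteType A K := Algebra.EssFiniteType.of_isLocalization _ (nonZeroDivisors A)
  have : Algebra.EssFiniteType k K := Algebra.EssFiniteType.comp k A K
  obtain ⟨O, κ, i1, i2, π, hπ, hO, hπl, hδ⟩ := exists_dvr (k := k) hinj l (hintg' l hl) hl0 hnint'
  have hltr : Transcendental B l := fun h => by
    have h1 : IsAlgebraic F l := (IsFractionRing.isAlgebraic_iff B F K).1 h
    exact hnint' ((h1.inv.isIntegral).tower_top)
  have hul := (hu.option_iff_transcendental l).2 hltr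
  have hnm : n ≤ m := by
    have h1 := hv.cardinalMk_le_trdeg
    have : FaithfulSMul F[X] K := (faithfulSMul_iff_algebraMap_injective _ _).2 hinj
    rw [← trdeg_add_eq k F[X] (A := K), trdeg_eq_zero (R := F[X]) (A := K),
      ← trdeg_add_eq k F (A := F[X]), Polynomial.trdeg_of_isDomain,
      ← trdeg_add_eq k B (A := F)] at h1
    have : Algebra.IsAlgebraic B F := IsLocalization.isAlgebraic F (nonZeroDivisors B)
    rw [trdeg_eq_zero (R := B) (A := F), ← hu.aevalEquiv.trdeg_eq,
      MvPolynomial.trdeg_of_isDomain] at h1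
    simp only [Cardinal.mk_fin, Cardinal.lift_natCast, add_zero] at h1
    have h2 : n + 1 ≤ m + 1 := by exact_mod_cast h1
    omega
  have hex : ∀ i : Fin m, ∃ δ : Derivation k K K, δ l = 0 ∧ ∀ j, δ (u j) = if i = j then 1 else 0 := by
    intro i
    obtain ⟨δ, h⟩ := exists_derivation hul
      (fun o : Option (Fin m) => o.elim 0 (fun j => if i = j then 1 else 0))
    exact ⟨δ, h none, fun j => h (some j)⟩
  choose δ hδl hδu using hex
  have hδF : ∀ i (f : F), δ i (algebraMap F K f) ∈ (algebraMap F K).range := by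
    rintro i ⟨f, hf⟩
    suffices h : δ i f ∈ F from ⟨⟨_, h⟩, rfl⟩
    induction hf using IntermediateField.adjoin_induction with
    | mem y hy =>
      obtain ⟨j, rfl⟩ := hy
      rw [hδu]
      split_ifs
      · exact F.one_mem
      · exact F.zero_mem
    | algebraMap y => rw [Derivation.map_algebraMap]; exact F.zero_mem
    | add y z hy hz h1 h2 => rw [map_add]; exact F.add_mem h1 h2
    | inv y hy h1 =>
      rw [Derivation.leibniz_inv]
      exact F.mul_mem (F.neg_mem (pow_mem (F.inv_mem hy) 2)) h1
    | mul y z hy hz h1 h2 =>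
      rw [Derivation.leibniz]
      exact F.add_mem (F.mul_mem hy h2) (F.mul_mem hz h1)
  have hOδ : ∀ i (a : O), δ i a ∈ O := fun i a => by
    obtain ⟨b, hb, -⟩ := hδ (δ i) (hδl i) (hδF i) a
    rw [← hb]; exact b.2
  let D : Fin m → Derivation k O O := fun i => Derivation.mk'
    { toFun := fun a => ⟨δ i a, hOδ i a⟩
      map_add' := fun a b => Subtype.ext (by simp)
      map_smul' := fun c a => Subtype.ext (by simp) }
    (fun a b => Subtype.ext (by simp))
  have hD : ∀ i a, (D i a : K) = δ i a := fun i a => rfl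
  have hDπ : ∀ i (a : O), π a = 0 → π (D i a) = 0 := fun i a ha => by
    obtain ⟨b, hb, hb'⟩ := hδ (δ i) (hδl i) (hδF i) a
    have : D i a = b := Subtype.ext (by rw [hD, hb])
    rw [this]
    exact hb' ha
  refine ⟨O, κ, i1, i2, π, fun a ha => hO a (hintg' a ha), hπl, m, u, δ,
    fun i => Derivation.liftOfSurjective hπ (hDπ i), hnm, huA, hδl, fun i a => ⟨D i a, hD i a, ?_⟩,
    fun i j a haj => ?_⟩
  · rw [Derivation.liftOfSurjective_apply]
  · rw [Derivation.liftOfSurjective_apply]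
    have : D i a = if i = j then 1 else 0 := Subtype.ext (by
      rw [hD, haj, hδu]; split_ifs <;> rfl)
    rw [this]
    split_ifs <;> simp

end

/-! ### Derivations of polynomial expressions -/

/-- The chain rule for a derivation applied to a polynomial expression. -/
theorem deriv_aeval {k B : Type} [CommRing k] [CommRing B] [Algebra k B] {n : ℕ}
    (δ : Derivation k B B) (v : Fin n → B) (p : MvPolynomial (Fin n) k) :
    δ (MvPolynomial.aeval v p) =
      ∑ i, MvPolynomial.aeval v (MvPolynomial.pderiv i p) * δ (v i) := by
  induction p using MvPolynomial.induction_on with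
  | C a => simp
  | add p q hp hq => simp [hp, hq, add_mul, Finset.sum_add_distrib]
  | mul_X p j hp =>
    have h1 : ∀ i, MvPolynomial.aeval v (MvPolynomial.pderiv i (p * MvPolynomial.X j)) * δ (v i) =
        v j * (MvPolynomial.aeval v (MvPolynomial.pderiv i p) * δ (v i)) +
          if i = j then MvPolynomial.aeval v p * δ (v j) else 0 := by
      intro i
      rw [MvPolynomial.pderiv_mul, MvPolynomial.pderiv_X]
      split_ifs with h
      · subst h; simp; ring
      · rw [Pi.single_eq_of_ne (Ne.symm h)]; simp; ring
    simp only [h1, Finset.sum_add_distrib, ← Finset.mul_sum, ← hp, Finset.sum_ite_eq',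
      Finset.mem_univ, if_true]
    simp [add_comm]

theorem pderiv_comm {k : Type} [CommRing k] {n : ℕ} (i j : Fin n) (p : MvPolynomial (Fin n) k) :
    MvPolynomial.pderiv i (MvPolynomial.pderiv j p) =
      MvPolynomial.pderiv j (MvPolynomial.pderiv i p) := by
  have : ⁅MvPolynomial.pderiv (R := k) i, MvPolynomial.pderiv (R := k) j⁆ = 0 := by
    apply MvPolynomial.derivation_ext
    intro l
    rw [Derivation.commutator_apply]
    simp [MvPolynomial.pderiv_X, Pi.single_apply, apply_ite]
  have h := DFunLike.congr_fun this p
  rw [Derivation.commutator_apply] at h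
  exact sub_eq_zero.1 h

theorem totalDegree_pderiv_lt {k : Type} [CommRing k] {n : ℕ} (i : Fin n)
    (p : MvPolynomial (Fin n) k) (h : MvPolynomial.pderiv i p ≠ 0) :
    (MvPolynomial.pderiv i p).totalDegree < p.totalDegree := by
  have key : ∀ m ∈ (MvPolynomial.pderiv i p).support, (m.sum fun _ e => e) + 1 ≤ p.totalDegree := by
    intro m hm
    rw [MvPolynomial.mem_support_iff, MvPolynomial.coeff_pderiv] at hm
    have := MvPolynomial.le_totalDegree (p := p) (s := m + Finsupp.single i 1)
      (MvPolynomial.mem_support_iff.2 (left_ne_zero_of_mul hm))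
    rwa [Finsupp.sum_add_index' (by simp) (by simp), Finsupp.sum_single_index (by simp)] at this
  obtain ⟨m, hm⟩ := MvPolynomial.support_nonempty.2 h
  have h0 := key m hm
  rw [MvPolynomial.totalDegree, Finset.sup_lt_iff (by simp only [Nat.bot_eq_zero]; omega)]
  intro b hb
  exact key b hb

theorem eq_C_of_pderiv_zero {k : Type} [Field k] [CharZero k] {n : ℕ} (p : MvPolynomial (Fin n) k)
    (h : ∀ i, MvPolynomial.pderiv i p = 0) : p = MvPolynomial.C (p.coeff 0) := by
  ext m
  rw [MvPolynomial.coeff_C]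
  split_ifs with hm
  · rw [hm]
  · obtain ⟨i, hi⟩ : ∃ i, m i ≠ 0 := by
      by_contra! hc
      exact hm (Finsupp.ext fun i => (hc i).symm)
    have h1 := congrArg (MvPolynomial.coeff (m - Finsupp.single i 1)) (h i)
    rw [MvPolynomial.coeff_pderiv, MvPolynomial.coeff_zero,
      tsub_add_cancel_of_le (Finsupp.single_le_iff.2 (Nat.one_le_iff_ne_zero.2 hi))] at h1
    refine (mul_eq_zero.1 h1).resolve_right ?_
    exact Nat.cast_add_one_ne_zero _

open Polynomial in
/-- The derivation of `κ[X]` acting on coefficients. -/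
theorem exists_mapCoeffs {k κ : Type} [CommRing k] [CommRing κ] [Algebra k κ]
    (E : Derivation k κ κ) : ∃ D : Derivation k κ[X] κ[X],
      (∀ p i, (D p).coeff i = E (p.coeff i)) := by
  have h0 : ∀ (p : κ[X]) (i : ℕ),
      (∑ j ∈ p.support, monomial j (E (p.coeff j))).coeff i = E (p.coeff i) := by
    intro p i
    simp only [finsetSum_coeff, coeff_monomial, Finset.sum_ite_eq', mem_support_iff]
    split_ifs with h
    · rfl
    · rw [notMem_support_iff.1 h, map_zero]
  let f : κ[X] →ₗ[k] κ[X] :=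
    { toFun := fun p => ∑ j ∈ p.support, monomial j (E (p.coeff j))
      map_add' := fun p q => by ext i; rw [coeff_add, h0, h0, h0, coeff_add, map_add]
      map_smul' := fun c p => by
        ext i; rw [RingHom.id_apply, coeff_smul, h0, h0, coeff_smul, Derivation.map_smul] }
  have hf : ∀ p i, (f p).coeff i = E (p.coeff i) := h0
  refine ⟨Derivation.mk' f fun p q => ?_, hf⟩
  ext i
  rw [hf]
  simp only [smul_eq_mul, coeff_add, coeff_mul, hf, map_sum, Derivation.leibniz,
    Finset.sum_add_distrib]
  congr 1
  rw [← Finset.Nat.sum_antidiagonal_swap]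
  rfl

/-! ### Lagrangian families and lines -/

/-- A nonzero polynomial killed by the constant derivations `y ∈ P` and vanishing at `σ` can be
replaced by one whose gradient at `σ` is nonzero: take one of minimal degree. -/
theorem exists_gradient_ne_zero {κ : Type} [Field κ] [Algebra ℂ κ] {n : ℕ} (σ : Fin n → κ)
    (P : Set (Fin n → ℂ)) (f : MvPolynomial (Fin n) ℂ) (hf0 : f ≠ 0)
    (hfP : ∀ y ∈ P, ∑ i, MvPolynomial.C (y i) * MvPolynomial.pderiv i f = 0)
    (hf : MvPolynomial.aeval σ f = 0) :
    ∃ ρ : MvPolynomial (Fin n) ℂ, (∀ y ∈ P, ∑ i, MvPolynomial.C (y i) * MvPolynomial.pderiv i ρ = 0) ∧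
      MvPolynomial.aeval σ ρ = 0 ∧ ∃ i, MvPolynomial.aeval σ (MvPolynomial.pderiv i ρ) ≠ 0 := by
  induction hd : f.totalDegree using Nat.strong_induction_on generalizing f with
  | _ d ih =>
    by_cases h : ∃ i, MvPolynomial.aeval σ (MvPolynomial.pderiv i f) ≠ 0
    · exact ⟨f, hfP, hf, h⟩
    · push Not at h
      by_cases h2 : ∃ i, MvPolynomial.pderiv i f ≠ 0
      · obtain ⟨i, hi⟩ := h2
        refine ih _ (hd ▸ totalDegree_pderiv_lt i f hi) (MvPolynomial.pderiv i f) hi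
          (fun y hy => ?_) (h i) rfl
        have := congrArg (MvPolynomial.pderiv i) (hfP y hy)
        rw [map_sum, map_zero] at this
        rw [← this]
        refine Finset.sum_congr rfl fun j _ => ?_
        rw [MvPolynomial.pderiv_C_mul, pderiv_comm]
      · push Not at h2
        exfalso
        have h3 := eq_C_of_pderiv_zero f h2
        rw [h3, MvPolynomial.aeval_C] at hf
        apply hf0
        rw [h3, (map_eq_zero (algebraMap ℂ κ)).1 hf, map_zero]

/-- An isotropic family of `m ≥ n` linearly independent vectors `(a k, b k)` of the standard
symplectic space of dimension `2 n` spans a Lagrangian subspace: every `(0, ν)` orthogonal to all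
of them is a combination of them. -/
theorem lagrangian_mem {κ : Type} [Field κ] {n m : ℕ} (hnm : n ≤ m) (a b : Fin m → Fin n → κ)
    (hind : ∀ e : Fin m → κ, (∀ i, ∑ k, e k * a k i = 0) → (∀ i, ∑ k, e k * b k i = 0) → e = 0)
    (hiso : ∀ k l, ∑ i, b k i * a l i = ∑ i, b l i * a k i)
    (ν : Fin n → κ) (hν : ∀ k, ∑ i, ν i * a k i = 0) :
    ∃ e : Fin m → κ, (∀ i, ∑ k, e k * a k i = 0) ∧ (∀ i, ∑ k, e k * b k i = ν i) := by
  let w : Fin m → (Fin n ⊕ Fin n → κ) := fun k => Sum.elim (a k) (b k)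
  let M : Matrix (Fin m) (Fin n ⊕ Fin n) κ := fun k => Sum.elim (b k) (fun i => -a k i)
  have hw : LinearIndependent κ w := by
    rw [Fintype.linearIndependent_iff]
    intro e he
    have := hind e (fun i => ?_) (fun i => ?_)
    · exact fun i => congrFun this i
    · simpa [w, Finset.sum_apply] using congrFun he (Sum.inl i)
    · simpa [w, Finset.sum_apply] using congrFun he (Sum.inr i)
  have hM : LinearIndependent κ M := by
    rw [Fintype.linearIndependent_iff]
    intro e he
    have := hind e (fun i => ?_) (fun i => ?_)
    · exact fun i => congrFun this i
    · have := congrFun he (Sum.inr i)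
      simpa [M, Finset.sum_apply] using this
    · simpa [M, Finset.sum_apply] using congrFun he (Sum.inl i)
  have hrank : M.rank = Fintype.card (Fin m) := LinearIndependent.rank_matrix hM
  have hker := LinearMap.finrank_range_add_finrank_ker M.mulVecLin
  rw [← Matrix.rank, hrank] at hker
  simp only [Fintype.card_fin, Module.finrank_fintype_fun_eq_card, Fintype.card_sum] at hker
  have hspan := finrank_span_eq_card hw
  rw [Fintype.card_fin] at hspan
  have hmul : ∀ y : Fin n ⊕ Fin n → κ, ∀ k, M.mulVecLin y k =
      ∑ i, b k i * y (Sum.inl i) - ∑ i, a k i * y (Sum.inr i) := by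
    intro y k
    rw [Matrix.mulVecLin_apply, Matrix.mulVec, dotProduct, Fintype.sum_sum_type]
    simp [M, sub_eq_add_neg]
  have hle : Submodule.span κ (Set.range w) ≤ LinearMap.ker M.mulVecLin := by
    rw [Submodule.span_le]
    rintro _ ⟨l, rfl⟩
    rw [SetLike.mem_coe, LinearMap.mem_ker]
    ext k
    rw [hmul]
    simp only [w, Sum.elim_inl, Sum.elim_inr, Pi.zero_apply]
    rw [hiso k l, sub_eq_zero]
    exact Finset.sum_congr rfl fun i _ => mul_comm _ _
  have heq := Submodule.eq_of_le_of_finrank_le hle (by omega)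
  have hmem : (Sum.elim 0 ν : Fin n ⊕ Fin n → κ) ∈ Submodule.span κ (Set.range w) := by
    rw [heq, LinearMap.mem_ker]
    ext k
    rw [hmul]
    simp only [Sum.elim_inl, Sum.elim_inr, Pi.zero_apply, mul_zero, Finset.sum_const_zero, zero_sub,
      neg_eq_zero]
    rw [← hν k]
    exact Finset.sum_congr rfl fun i _ => mul_comm _ _
  obtain ⟨e, he⟩ := (Submodule.mem_span_range_iff_exists_fun κ).1 hmem
  refine ⟨e, fun i => ?_, fun i => ?_⟩
  · simpa [w, Finset.sum_apply] using congrFun he (Sum.inl i)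
  · simpa [w, Finset.sum_apply] using congrFun he (Sum.inr i)

/-- If a derivation satisfies `E ξ = ν` and `E ν = 0`, its flow `ξ + t ν` preserves the
equations satisfied by `ξ`. -/
theorem line_of_derivation {κ : Type} [Field κ] [Algebra ℂ κ] {n : ℕ} (E : Derivation ℂ κ κ)
    (ξ ν : Fin n → κ) (hξ : ∀ i, E (ξ i) = ν i) (hν : ∀ i, E (ν i) = 0)
    (g : MvPolynomial (Fin n) ℂ) (hg : MvPolynomial.aeval ξ g = 0) (t : κ) :
    MvPolynomial.aeval (fun i => ξ i + t * ν i) g = 0 := by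
  have : CharZero κ := charZero_of_injective_algebraMap (algebraMap ℂ κ).injective
  obtain ⟨D, hD⟩ := exists_mapCoeffs E
  open Polynomial in
  let v : Fin n → κ[X] := fun i => C (ξ i) + X * C (ν i)
  let Φ := MvPolynomial.aeval v g
  let δ : Derivation ℂ (Polynomial κ) (Polynomial κ) := Polynomial.derivative'.restrictScalars ℂ
  have h1 : D Φ = δ Φ := by
    rw [deriv_aeval, deriv_aeval]
    refine Finset.sum_congr rfl fun i _ => ?_
    congr 1
    have : δ (v i) = Polynomial.C (ν i) := by
      change Polynomial.derivative (v i) = _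
      simp [v]
    rw [this]
    ext j
    rw [hD]
    rcases j with _ | _ | j <;> simp [v, hξ, hν, Polynomial.coeff_C]
  have heval : ∀ s : κ, Φ.eval s = MvPolynomial.aeval (fun i => ξ i + s * ν i) g := by
    intro s
    have h : ((Polynomial.aeval s : Polynomial κ →ₐ[κ] κ).restrictScalars ℂ).comp (MvPolynomial.aeval v) =
        MvPolynomial.aeval (fun i => ξ i + s * ν i) := by
      apply MvPolynomial.algHom_ext
      intro i
      simp [v]
      ring
    rw [← h]
    simp [Φ]
  have hc : ∀ j, Φ.coeff j = 0 := by
    intro j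
    induction j with
    | zero =>
      rw [Polynomial.coeff_zero_eq_eval_zero, heval]
      simpa using hg
    | succ j ih =>
      have h2 := congrArg (fun p => Polynomial.coeff p j) h1
      simp only [hD, ih, map_zero] at h2
      have h3 : (δ Φ).coeff j = Φ.coeff (j + 1) * (j + 1) := Polynomial.coeff_derivative Φ j
      rw [h3] at h2
      exact (mul_eq_zero.1 h2.symm).resolve_right (Nat.cast_add_one_ne_zero j)
  rw [← heval, show Φ = 0 from Polynomial.ext (by simpa using hc), Polynomial.eval_zero]

/-- The ruling: a family of Legendrian type and a nonzero polynomial constant along `P` and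
vanishing on `σ` produce a line through `ξ` with direction orthogonal to `P`. -/
theorem exists_line_over_field {κ : Type} [Field κ] [Algebra ℂ κ] {n m : ℕ} (hnm : n ≤ m)
    (σ ξ : Fin n → κ) (d : Fin m → Derivation ℂ κ κ)
    (hind : ∀ e : Fin m → κ, (∀ i, ∑ k, e k * d k (σ i) = 0) → (∀ i, ∑ k, e k * d k (ξ i) = 0) →
      e = 0)
    (hiso : ∀ k l, ∑ i, d k (ξ i) * d l (σ i) = ∑ i, d l (ξ i) * d k (σ i))
    (P : Set (Fin n → ℂ)) (f : MvPolynomial (Fin n) ℂ) (hf0 : f ≠ 0)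
    (hfP : ∀ y ∈ P, ∑ i, MvPolynomial.C (y i) * MvPolynomial.pderiv i f = 0)
    (hf : MvPolynomial.aeval σ f = 0) :
    ∃ ν : Fin n → κ, ν ≠ 0 ∧ (∀ y ∈ P, ∑ i, algebraMap ℂ κ (y i) * ν i = 0) ∧
      ∀ g : MvPolynomial (Fin n) ℂ, MvPolynomial.aeval ξ g = 0 →
        ∀ t : κ, MvPolynomial.aeval (fun i => ξ i + t * ν i) g = 0 := by
  obtain ⟨ρ, hρP, hρ, j, hj⟩ := exists_gradient_ne_zero σ P f hf0 hfP hf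
  let ν : Fin n → κ := fun i => MvPolynomial.aeval σ (MvPolynomial.pderiv i ρ)
  have hν : ∀ k, ∑ i, ν i * d k (σ i) = 0 := by
    intro k
    rw [← deriv_aeval, hρ, map_zero]
  obtain ⟨e, he1, he2⟩ := lagrangian_mem hnm (fun k i => d k (σ i)) (fun k i => d k (ξ i)) hind hiso
    ν hν
  let E : Derivation ℂ κ κ := ∑ k, e k • d k
  have hE : ∀ y, E y = ∑ k, e k * d k y := by
    intro y
    simp only [E]
    rw [← Derivation.coeFnAddMonoidHom_apply, map_sum, Finset.sum_apply]
    rfl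
  refine ⟨ν, fun h => hj (congrFun h j), fun y hy => ?_, fun g hg t => ?_⟩
  · have := congrArg (MvPolynomial.aeval σ) (hρP y hy)
    simpa [map_sum] using this
  · refine line_of_derivation E ξ ν (fun i => by rw [hE, he2]) (fun i => ?_) g hg t
    rw [deriv_aeval]
    exact Finset.sum_eq_zero fun l _ => by rw [hE, he1, mul_zero]

/-- Weak Nullstellensatz: a nonzero finitely generated `ℂ`-algebra has a `ℂ`-point. -/
theorem exists_point {B : Type} [CommRing B] [Nontrivial B] [Algebra ℂ B] [Algebra.FiniteType ℂ B] :
    Nonempty (B →ₐ[ℂ] ℂ) := by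
  obtain ⟨M, hM⟩ := Ideal.exists_maximal B
  let := Ideal.Quotient.field M
  have : Algebra.FiniteType ℂ (B ⧸ M) :=
    Algebra.FiniteType.of_surjective (Ideal.Quotient.mkₐ ℂ M) (Ideal.Quotient.mkₐ_surjective ℂ M)
  have : Module.Finite ℂ (B ⧸ M) := finite_of_finite_type_of_isJacobsonRing ℂ (B ⧸ M)
  have hb := IsAlgClosed.algebraMap_bijective_of_isIntegral (k := ℂ) (K := B ⧸ M)
  let e : ℂ ≃ₐ[ℂ] (B ⧸ M) := AlgEquiv.ofBijective (Algebra.ofId ℂ (B ⧸ M)) hb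
  exact ⟨(e.symm : (B ⧸ M) →ₐ[ℂ] ℂ).comp (Ideal.Quotient.mkₐ ℂ M)⟩

/-- A line `ξ + t ν` over an extension field of `ℂ`, satisfying the equations in `I`, specializes to a
line over `ℂ` with the same properties, keeping `ν` and `y₀ · ξ` nonzero. -/
theorem specialize_line {κ : Type} [Field κ] [Algebra ℂ κ] {n : ℕ} (ξ ν : Fin n → κ) (hν : ν ≠ 0)
    (y₀ : Fin n → ℂ) (hy₀ : ∑ i, algebraMap ℂ κ (y₀ i) * ξ i ≠ 0)
    (P : Set (Fin n → ℂ)) (hP : ∀ y ∈ P, ∑ i, algebraMap ℂ κ (y i) * ν i = 0)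
    (I : Set (MvPolynomial (Fin n) ℂ))
    (hI : ∀ g ∈ I, ∀ t : κ, MvPolynomial.aeval (fun i => ξ i + t * ν i) g = 0) :
    ∃ ξ' ν' : Fin n → ℂ, ν' ≠ 0 ∧ ∑ i, y₀ i * ξ' i ≠ 0 ∧ (∀ y ∈ P, ∑ i, y i * ν' i = 0) ∧
      ∀ g ∈ I, ∀ t : ℂ, MvPolynomial.eval (fun i => ξ' i + t * ν' i) g = 0 := by
  classical
  obtain ⟨j, hj⟩ := Function.ne_iff.1 hν
  set w := ν j * ∑ i, algebraMap ℂ κ (y₀ i) * ξ i with hw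
  have hw0 : w ≠ 0 := mul_ne_zero hj hy₀
  let S : Finset κ := Finset.univ.image ξ ∪ Finset.univ.image ν ∪ {w⁻¹}
  let B := Algebra.adjoin ℂ (S : Set κ)
  have : Algebra.FiniteType ℂ B := (Subalgebra.fg_iff_finiteType B).1 ⟨S, rfl⟩
  obtain ⟨φ⟩ := exists_point (B := B)
  have hξ : ∀ i, ξ i ∈ B := fun i => Algebra.subset_adjoin (by simp [S])
  have hν : ∀ i, ν i ∈ B := fun i => Algebra.subset_adjoin (by simp [S])
  have hwi : w⁻¹ ∈ B := Algebra.subset_adjoin (by simp [S])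
  let ξB : Fin n → B := fun i => ⟨ξ i, hξ i⟩
  let νB : Fin n → B := fun i => ⟨ν i, hν i⟩
  have h1 : νB j * (∑ i, algebraMap ℂ B (y₀ i) * ξB i) * ⟨w⁻¹, hwi⟩ = 1 := by
    apply Subtype.ext
    simp only [MulMemClass.coe_mul, OneMemClass.coe_one, AddSubmonoidClass.coe_finsetSum]
    exact mul_inv_cancel₀ hw0
  have h2 := congrArg φ h1
  simp only [map_mul, map_sum, AlgHom.commutes, map_one] at h2
  have h3 := left_ne_zero_of_mul (h2.trans_ne one_ne_zero)
  refine ⟨fun i => φ (ξB i), fun i => φ (νB i), fun h => left_ne_zero_of_mul h3 (congrFun h j),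
    right_ne_zero_of_mul h3, fun y hy => ?_, fun g hg t => ?_⟩
  · have h4 : ∑ i, algebraMap ℂ B (y i) * νB i = 0 := by
      apply Subtype.ext
      simp only [MulMemClass.coe_mul, AddSubmonoidClass.coe_finsetSum]
      exact hP y hy
    have h5 := congrArg φ h4
    simpa only [map_mul, map_sum, AlgHom.commutes, map_zero, Algebra.algebraMap_self, RingHom.id_apply] using h5
  · have h4 : MvPolynomial.aeval (fun i => ξB i + algebraMap ℂ B t * νB i) g = 0 := by
      apply Subtype.ext
      rw [← Subalgebra.coe_val, MvPolynomial.comp_aeval_apply]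
      exact hI g hg (algebraMap ℂ κ t)
    have h5 := congrArg φ h4
    rw [MvPolynomial.comp_aeval_apply, map_zero] at h5
    rw [← h5, MvPolynomial.aeval_eq_eval]
    simp

/-! ### Degeneration of conormal vectors -/

/-- Homogeneous polynomials scale. -/
theorem aeval_smul_of_isHomogeneous {B : Type} [CommRing B] [Algebra ℂ B] {n d : ℕ}
    {p : MvPolynomial (Fin n) ℂ} (hp : p.IsHomogeneous d) (t : B) (v : Fin n → B) :
    MvPolynomial.aeval (fun i => t * v i) p = t ^ d * MvPolynomial.aeval v p := by
  rw [MvPolynomial.aeval_def, MvPolynomial.aeval_def, MvPolynomial.eval₂_eq, MvPolynomial.eval₂_eq,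
    Finset.mul_sum]
  refine Finset.sum_congr rfl fun m hm => ?_
  have h1 : ∑ i, m i = d := by
    have := hp (MvPolynomial.mem_support_iff.1 hm)
    rw [Finsupp.weight_apply, Finsupp.sum_fintype _ _ (by simp)] at this
    simpa using this
  have h2 : ∀ u : Fin n → B, ∏ i ∈ m.support, u i ^ m i = ∏ i, u i ^ m i := fun u =>
    Finset.prod_subset (Finset.subset_univ _) fun i _ hi => by
      rw [Finsupp.notMem_support_iff.1 hi, pow_zero]
  rw [h2 (fun i => t * v i), h2 v]
  simp only [mul_pow, Finset.prod_mul_distrib, Finset.prod_pow_eq_pow_sum, h1]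
  ring

/-- The Legendrian relation: `z = ∑ c_j ∇g_j(ξ)` is conormal to the variety swept out by `ξ`. -/
theorem legendrian {K : Type} [Field K] [Algebra ℂ K] {n r : ℕ} (δ : Derivation ℂ K K)
    (ξ : Fin n → K) (c : Fin r → K) (g : Fin r → MvPolynomial (Fin n) ℂ)
    (hg : ∀ j, MvPolynomial.aeval ξ (g j) = 0)
    (heuler : ∀ j, ∑ i, ξ i * MvPolynomial.aeval ξ (MvPolynomial.pderiv i (g j)) = 0) :
    ∑ i, ξ i * δ (∑ j, c j * MvPolynomial.aeval ξ (MvPolynomial.pderiv i (g j))) = 0 := by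
  have h1 : ∑ i, ξ i * ∑ j, c j * MvPolynomial.aeval ξ (MvPolynomial.pderiv i (g j)) = 0 := by
    simp only [Finset.mul_sum]
    rw [Finset.sum_comm]
    refine Finset.sum_eq_zero fun j _ => ?_
    rw [← mul_zero (c j), ← heuler j, Finset.mul_sum]
    exact Finset.sum_congr rfl fun i _ => by ring
  have h2 : ∑ i, (∑ j, c j * MvPolynomial.aeval ξ (MvPolynomial.pderiv i (g j))) * δ (ξ i) = 0 := by
    simp only [Finset.sum_mul]
    rw [Finset.sum_comm]
    refine Finset.sum_eq_zero fun j _ => ?_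
    have := deriv_aeval δ ξ (g j)
    rw [hg, map_zero] at this
    rw [← mul_zero (c j), this, Finset.mul_sum]
    exact Finset.sum_congr rfl fun i _ => by ring
  have h3 := congrArg δ h1
  rw [map_zero, map_sum] at h3
  simp only [Derivation.leibniz, smul_eq_mul] at h3
  rw [Finset.sum_add_distrib, h2, add_zero] at h3
  exact h3

set_option maxHeartbeats 1000000 in
/-- The ruling obtained from a degeneration of conormal vectors. Here `z = h + l σ` is conormal at `ξ`,
and `F` is an equation for `z - h = l σ` with leading form of degree `m`. On a divisor of `l = 0` the
leading form vanishes at the reduction of `σ`, and the reductions of `(σ, ξ)` form a Lagrangian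
family; so if the leading form is constant along `P`, the variety of `ξ` contains a line whose
direction is orthogonal to `P`. The element `q` keeps the Jacobian minor and `y₀ · ξ` invertible on
the divisor. -/
theorem core_local {K : Type} [Field K] [Algebra ℂ K] {n r : ℕ} (ξ σ : Fin n → K) (c : Fin r → K)
    (l q : K) (hl0 : l ≠ 0) (A : Subalgebra ℂ K)
    (hA : A = Algebra.adjoin ℂ (Set.range ξ ∪ Set.range σ ∪ Set.range c ∪ {l, q}))
    [IsFractionRing A K] (hlu : l⁻¹ ∉ A) {v : Fin (n + 1) → K} (hv : AlgebraicIndependent ℂ v)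
    (g : Fin r → MvPolynomial (Fin n) ℂ) (hg : ∀ j, MvPolynomial.aeval ξ (g j) = 0)
    (heuler : ∀ j, ∑ i, ξ i * MvPolynomial.aeval ξ (MvPolynomial.pderiv i (g j)) = 0)
    (h : Fin n → ℂ)
    (hz : ∀ i, algebraMap ℂ K (h i) + l * σ i =
      ∑ j, c j * MvPolynomial.aeval ξ (MvPolynomial.pderiv i (g j)))
    (E : Matrix (Fin n) (Fin r) ℂ) (y₀ : Fin n → ℂ)
    (hq : q * (MvPolynomial.aeval ξ ((Matrix.of fun j j' => ∑ i, MvPolynomial.pderiv i (g j) *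
      MvPolynomial.C (E i j')).det) * ∑ i, algebraMap ℂ K (y₀ i) * ξ i) = 1)
    (F : MvPolynomial (Fin n) ℂ) (m : ℕ)
    (hF : ∀ d < m, MvPolynomial.homogeneousComponent d F = 0)
    (hFm : MvPolynomial.homogeneousComponent m F ≠ 0)
    (hF0 : MvPolynomial.aeval (fun i => l * σ i) F = 0)
    (P : Set (Fin n → ℂ))
    (hFP : ∀ y ∈ P, ∑ i, MvPolynomial.C (y i) *
      MvPolynomial.pderiv i (MvPolynomial.homogeneousComponent m F) = 0) :
    ∃ ξ' ν' : Fin n → ℂ, ν' ≠ 0 ∧ ∑ i, y₀ i * ξ' i ≠ 0 ∧ (∀ y ∈ P, ∑ i, y i * ν' i = 0) ∧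
      ∀ p : MvPolynomial (Fin n) ℂ, MvPolynomial.aeval ξ p = 0 →
        ∀ t : ℂ, MvPolynomial.eval (fun i => ξ' i + t * ν' i) p = 0 := by
  classical
  have hfg : A.FG := by
    rw [hA]
    refine (Subalgebra.fg_def).2 ⟨_, ?_, rfl⟩
    exact (((Set.finite_range _).union (Set.finite_range _)).union (Set.finite_range _)).union
      (by simp)
  have hξA : ∀ i, ξ i ∈ A := fun i => hA ▸ Algebra.subset_adjoin (by simp)
  have hσA : ∀ i, σ i ∈ A := fun i => hA ▸ Algebra.subset_adjoin (by simp)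
  have hcA : ∀ i, c i ∈ A := fun i => hA ▸ Algebra.subset_adjoin (by simp)
  have hlA : l ∈ A := hA ▸ Algebra.subset_adjoin (by simp)
  have hqA : q ∈ A := hA ▸ Algebra.subset_adjoin (by simp)
  obtain ⟨O, κ, i1, i2, π, hAO, hπl, M, u, δ, d, hnM, huA, hδl, hδ, hdu⟩ :=
    dvr_data A hfg l hlA hl0 hlu hv
  let ξO : Fin n → O := fun i => ⟨ξ i, hAO (hξA i)⟩
  let σO : Fin n → O := fun i => ⟨σ i, hAO (hσA i)⟩
  let cO : Fin r → O := fun i => ⟨c i, hAO (hcA i)⟩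
  let lO : O := ⟨l, hAO hlA⟩
  let qO : O := ⟨q, hAO hqA⟩
  have hlO : π lO = 0 := hπl lO rfl
  -- polynomial identities in `K` between elements of `O` descend to `κ`
  have hval : ∀ (w : Fin n → O) (p : MvPolynomial (Fin n) ℂ),
      ((MvPolynomial.aeval w p : O) : K) = MvPolynomial.aeval (fun i => (w i : K)) p := by
    intro w p
    rw [← Subalgebra.coe_val, MvPolynomial.comp_aeval_apply]
  have hred : ∀ (w : Fin n → O) (p : MvPolynomial (Fin n) ℂ),
      π (MvPolynomial.aeval w p) = MvPolynomial.aeval (fun i => π (w i)) p := by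
    intro w p
    rw [MvPolynomial.comp_aeval_apply]
  -- the symplectic relation
  have hsig : ∀ D : Derivation ℂ K K, D l = 0 → ∑ i, ξ i * D (σ i) = 0 := by
    intro D hD
    have h1 := legendrian D ξ c g hg heuler
    simp only [← hz, map_add, Derivation.map_algebraMap, zero_add, Derivation.leibniz, hD,
      smul_eq_mul] at h1
    have h2 : l * ∑ i, ξ i * D (σ i) = 0 := by
      rw [← h1, Finset.mul_sum]
      exact Finset.sum_congr rfl fun i _ => by ring
    exact (mul_eq_zero.1 h2).resolve_left hl0
  have hisoK : ∀ k k', ∑ i, δ k (ξ i) * δ k' (σ i) = ∑ i, δ k' (ξ i) * δ k (σ i) := by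
    intro k k'
    have h1 := congrArg (δ k) (hsig (δ k') (hδl k'))
    have h2 := congrArg (δ k') (hsig (δ k) (hδl k))
    have h3 := hsig ⁅δ k, δ k'⁆ (by rw [Derivation.commutator_apply, hδl, hδl]; simp)
    simp only [map_sum, map_zero, Derivation.leibniz, smul_eq_mul, Finset.sum_add_distrib] at h1 h2
    simp only [Derivation.commutator_apply, mul_sub, Finset.sum_sub_distrib] at h3
    have e1 : ∑ i, δ k (ξ i) * δ k' (σ i) = ∑ i, δ k' (σ i) * δ k (ξ i) :=
      Finset.sum_congr rfl fun i _ => mul_comm _ _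
    have e2 : ∑ i, δ k' (ξ i) * δ k (σ i) = ∑ i, δ k (σ i) * δ k' (ξ i) :=
      Finset.sum_congr rfl fun i _ => mul_comm _ _
    rw [e1, e2]
    linear_combination h1 - h2 - h3
  have hiso : ∀ k k', ∑ i, d k (π (ξO i)) * d k' (π (σO i)) =
      ∑ i, d k' (π (ξO i)) * d k (π (σO i)) := by
    choose bξ hbξ hbξ' using fun k i => hδ k (ξO i)
    choose bσ hbσ hbσ' using fun k i => hδ k (σO i)
    intro k k'
    have h1 : ∑ i, bξ k i * bσ k' i = ∑ i, bξ k' i * bσ k i := by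
      apply Subtype.ext
      simp only [AddSubmonoidClass.coe_finsetSum, MulMemClass.coe_mul, hbξ, hbσ]
      exact hisoK k k'
    have h2 := congrArg π h1
    simpa only [map_sum, map_mul, hbξ', hbσ'] using h2
  -- equations over the residue field
  have hzκ : ∀ i, algebraMap ℂ κ (h i) =
      ∑ j, π (cO j) * MvPolynomial.aeval (fun i => π (ξO i)) (MvPolynomial.pderiv i (g j)) := by
    intro i
    have h1 : algebraMap ℂ O (h i) + lO * σO i =
        ∑ j, cO j * MvPolynomial.aeval ξO (MvPolynomial.pderiv i (g j)) := by
      apply Subtype.ext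
      simp only [AddSubmonoidClass.coe_finsetSum, MulMemClass.coe_mul, hval]
      exact hz i
    have h2 := congrArg π h1
    simpa only [map_add, map_sum, map_mul, hlO, zero_mul, add_zero, AlgHom.commutes, hred] using h2
  have hqκ : π qO * (MvPolynomial.aeval (fun i => π (ξO i))
      ((Matrix.of fun j j' => ∑ i, MvPolynomial.pderiv i (g j) *
      MvPolynomial.C (E i j')).det) * ∑ i, algebraMap ℂ κ (y₀ i) * π (ξO i)) = 1 := by
    have h1 : qO * (MvPolynomial.aeval ξO
      ((Matrix.of fun j j' => ∑ i, MvPolynomial.pderiv i (g j) *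
      MvPolynomial.C (E i j')).det) * ∑ i, algebraMap ℂ O (y₀ i) * ξO i) = 1 := by
      apply Subtype.ext
      simp only [AddSubmonoidClass.coe_finsetSum, MulMemClass.coe_mul, hval]
      exact hq
    have h2 := congrArg π h1
    simpa only [map_one, map_sum, map_mul, AlgHom.commutes, hred] using h2
  have hΔ := left_ne_zero_of_mul (right_ne_zero_of_mul (hqκ.trans_ne one_ne_zero))
  have hy := right_ne_zero_of_mul (right_ne_zero_of_mul (hqκ.trans_ne one_ne_zero))
  -- A combination of the `d k` killing `ξ` and `σ` also kills `c`, by the Jacobian minor, and hence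
  -- all of `A`; evaluating it on the `u j` shows that it is trivial.
  have hind : ∀ e : Fin M → κ, (∀ i, ∑ k, e k * d k (π (σO i)) = 0) →
      (∀ i, ∑ k, e k * d k (π (ξO i)) = 0) → e = 0 := by
    intro e he1 he2
    let D : Derivation ℂ κ κ := ∑ k, e k • d k
    have hD : ∀ y, D y = ∑ k, e k * d k y := by
      intro y
      simp only [D]
      rw [← Derivation.coeFnAddMonoidHom_apply, map_sum, Finset.sum_apply]
      rfl
    have hDξ : ∀ p : MvPolynomial (Fin n) ℂ, D (MvPolynomial.aeval (fun i => π (ξO i)) p) = 0 := by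
      intro p
      rw [deriv_aeval]
      exact Finset.sum_eq_zero fun i _ => by rw [hD, he2, mul_zero]
    have hDc : (fun j => D (π (cO j))) = 0 := by
      have h1 : ∀ i, ∑ j, D (π (cO j)) *
          MvPolynomial.aeval (fun i => π (ξO i)) (MvPolynomial.pderiv i (g j)) = 0 := by
        intro i
        have := congrArg D (hzκ i)
        rw [Derivation.map_algebraMap, map_sum] at this
        rw [this]
        refine Finset.sum_congr rfl fun j _ => ?_
        rw [Derivation.leibniz, hDξ, smul_zero, zero_add, smul_eq_mul, mul_comm]
      let N : Matrix (Fin r) (Fin r) κ := ((MvPolynomial.aeval (fun i => π (ξO i)) :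
        MvPolynomial (Fin n) ℂ →ₐ[ℂ] κ) : _ →+* κ).mapMatrix
        (Matrix.of fun j j' => ∑ i, MvPolynomial.pderiv i (g j) * MvPolynomial.C (E i j'))
      have hN : N.det ≠ 0 := by
        simp only [N]
        rw [← RingHom.map_det]
        exact hΔ
      refine Matrix.eq_zero_of_vecMul_eq_zero hN ?_
      ext j'
      simp only [Matrix.vecMul, dotProduct, N, RingHom.mapMatrix_apply, Matrix.map_apply,
        Matrix.of_apply, RingHom.coe_coe, map_sum, map_mul, MvPolynomial.aeval_C, Pi.zero_apply,
        Finset.mul_sum]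
      rw [Finset.sum_comm]
      refine Finset.sum_eq_zero fun i _ => ?_
      rw [← zero_mul (algebraMap ℂ κ (E i j')), ← h1 i, Finset.sum_mul]
      exact Finset.sum_congr rfl fun j _ => by ring
    have hDq : D (π qO) = 0 := by
      have h1 : D (MvPolynomial.aeval (fun i => π (ξO i))
        ((Matrix.of fun j j' => ∑ i, MvPolynomial.pderiv i (g j) *
        MvPolynomial.C (E i j')).det) * ∑ i, algebraMap ℂ κ (y₀ i) * π (ξO i)) = 0 := by
        rw [← hDξ (((Matrix.of fun j j' => ∑ i, MvPolynomial.pderiv i (g j) *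
          MvPolynomial.C (E i j')).det) * ∑ i, MvPolynomial.C (y₀ i) * MvPolynomial.X i)]
        simp only [map_mul, map_sum, MvPolynomial.aeval_C, MvPolynomial.aeval_X]
      have h2 := congrArg D hqκ
      rw [Derivation.leibniz, h1, smul_zero, zero_add, Derivation.map_one_eq_zero, smul_eq_mul] at h2
      exact (mul_eq_zero.1 h2).resolve_left (mul_ne_zero hΔ hy)
    have hDA : ∀ (a : K) (ha : a ∈ A), D (π ⟨a, hAO ha⟩) = 0 := by
      intro a ha
      have ha' := ha
      rw [hA] at ha'
      suffices hs : ∃ hb : a ∈ O, D (π ⟨a, hb⟩) = 0 from hs.2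
      induction ha' using Algebra.adjoin_induction with
      | mem x hx =>
        rcases hx with ((⟨i, rfl⟩ | ⟨i, rfl⟩) | ⟨i, rfl⟩) | rfl | rfl
        · exact ⟨hAO (hξA i), (hD _).trans (he2 i)⟩
        · exact ⟨hAO (hσA i), (hD _).trans (he1 i)⟩
        · exact ⟨hAO (hcA i), congrFun hDc i⟩
        · exact ⟨hAO hlA, by rw [show π _ = 0 from hlO, map_zero]⟩
        · exact ⟨hAO hqA, hDq⟩
      | algebraMap t =>
        refine ⟨O.algebraMap_mem t, ?_⟩
        have : (⟨algebraMap ℂ K t, O.algebraMap_mem t⟩ : O) = algebraMap ℂ O t := rfl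
        rw [this, AlgHom.commutes, Derivation.map_algebraMap]
      | add x y hx hy h1 h2 =>
        obtain ⟨hx', h1⟩ := h1 (hA ▸ hx)
        obtain ⟨hy', h2⟩ := h2 (hA ▸ hy)
        refine ⟨O.add_mem hx' hy', ?_⟩
        have : (⟨x + y, O.add_mem hx' hy'⟩ : O) = ⟨x, hx'⟩ + ⟨y, hy'⟩ := rfl
        rw [this, map_add, map_add, h1, h2, add_zero]
      | mul x y hx hy h1 h2 =>
        obtain ⟨hx', h1⟩ := h1 (hA ▸ hx)
        obtain ⟨hy', h2⟩ := h2 (hA ▸ hy)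
        refine ⟨O.mul_mem hx' hy', ?_⟩
        have : (⟨x * y, O.mul_mem hx' hy'⟩ : O) = ⟨x, hx'⟩ * ⟨y, hy'⟩ := rfl
        rw [this, map_mul, Derivation.leibniz, h1, h2, smul_zero, smul_zero, add_zero]
    ext j
    have h1 := hDA (u j) (huA j)
    rw [hD] at h1
    simpa [hdu _ j ⟨u j, hAO (huA j)⟩ rfl] using h1
  -- the initial form vanishes at the reduction of `σ`
  have hfm : MvPolynomial.aeval (fun i => π (σO i)) (MvPolynomial.homogeneousComponent m F) = 0 := by
    have h1 : l ^ m * ∑ e ∈ Finset.range (F.totalDegree + 1), l ^ e *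
        MvPolynomial.aeval σ (MvPolynomial.homogeneousComponent (m + e) F) = 0 := by
      rw [← hF0]
      conv_rhs => rw [← MvPolynomial.sum_homogeneousComponent F]
      rw [map_sum, Finset.mul_sum]
      have h2 : ∀ e, l ^ m * (l ^ e * MvPolynomial.aeval σ (MvPolynomial.homogeneousComponent (m + e) F)) =
          MvPolynomial.aeval (fun i => l * σ i) (MvPolynomial.homogeneousComponent (m + e) F) := by
        intro e
        rw [aeval_smul_of_isHomogeneous (MvPolynomial.homogeneousComponent_isHomogeneous _ _), pow_add,
          mul_assoc]
      simp only [h2]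
      have h3 : ∑ e ∈ Finset.range (m + (F.totalDegree + 1)),
          MvPolynomial.aeval (fun i => l * σ i) (MvPolynomial.homogeneousComponent e F) =
          ∑ e ∈ Finset.range (F.totalDegree + 1),
          MvPolynomial.aeval (fun i => l * σ i) (MvPolynomial.homogeneousComponent e F) := by
        symm
        apply Finset.sum_subset
        · intro e he
          simp only [Finset.mem_range] at he ⊢
          omega
        · intro e _ he
          simp only [Finset.mem_range] at he
          rw [MvPolynomial.homogeneousComponent_eq_zero _ _ (by omega), map_zero]
      rw [← h3, Finset.sum_range_add (fun e => MvPolynomial.aeval (fun i => l * σ i)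
        (MvPolynomial.homogeneousComponent e F)) m (F.totalDegree + 1)]
      rw [Finset.sum_eq_zero (s := Finset.range m), zero_add]
      intro e he
      rw [hF e (Finset.mem_range.1 he), map_zero]
    have h2 := (mul_eq_zero.1 h1).resolve_left (pow_ne_zero _ hl0)
    have h3 : ∑ e ∈ Finset.range (F.totalDegree + 1), lO ^ e *
        MvPolynomial.aeval σO (MvPolynomial.homogeneousComponent (m + e) F) = 0 := by
      apply Subtype.ext
      simp only [AddSubmonoidClass.coe_finsetSum, MulMemClass.coe_mul, hval]
      exact h2
    have h4 := congrArg π h3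
    rw [map_sum, Finset.sum_range_succ', map_zero] at h4
    simpa [hlO, hred] using h4
  obtain ⟨ν, hν0, hνP, hline⟩ := exists_line_over_field hnM (fun i => π (σO i)) (fun i => π (ξO i)) d
    hind hiso P _ hFm hFP hfm
  obtain ⟨ξ', ν', h1, h2, h3, h4⟩ := specialize_line (fun i => π (ξO i)) ν hν0 y₀ hy P hνP
    {p | MvPolynomial.aeval ξ p = 0} (fun p hp t => hline p (by
      have h1 : MvPolynomial.aeval ξO p = 0 := by
        apply Subtype.ext
        rw [hval]
        exact hp
      rw [← hred, h1, map_zero]) t)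
  exact ⟨ξ', ν', h1, h2, h3, h4⟩

/-- A criterion for `l⁻¹` not to be regular: if every generator of the algebra is a fraction `a / b`
with `θ b ≠ 0` dividing `θ a`, then so is every element, while `l⁻¹` is not of this form when `θ l`
is not a unit. Thus `θ` is an arc along which all generators stay finite and `l` vanishes. -/
theorem inv_not_mem_adjoin {D K T : Type} [CommRing D] [IsDomain D] [Algebra ℂ D] [Field K]
    [Algebra ℂ K] [Algebra D K] [IsScalarTower ℂ D K] [IsFractionRing D K] [CommRing T] [IsDomain T]
    [Algebra ℂ T] (θ : D →ₐ[ℂ] T) (S : Set K)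
    (hS : ∀ z ∈ S, ∃ a b : D, θ b ≠ 0 ∧ z * algebraMap D K b = algebraMap D K a ∧ θ b ∣ θ a)
    (l : D) (hl0 : l ≠ 0) (hl : ¬ IsUnit (θ l)) : (algebraMap D K l)⁻¹ ∉ Algebra.adjoin ℂ S := by
  intro hmem
  have key : ∀ z ∈ Algebra.adjoin ℂ S,
      ∃ a b : D, θ b ≠ 0 ∧ z * algebraMap D K b = algebraMap D K a ∧ θ b ∣ θ a := by
    intro z hz
    induction hz using Algebra.adjoin_induction with
    | mem z hz => exact hS z hz
    | algebraMap c =>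
      exact ⟨algebraMap ℂ D c, 1, by simp, by simp [← IsScalarTower.algebraMap_apply], by simp⟩
    | add z z' _ _ h h' =>
      obtain ⟨a, b, h1, h2, h3⟩ := h
      obtain ⟨a', b', h1', h2', h3'⟩ := h'
      refine ⟨a * b' + a' * b, b * b', by rw [map_mul]; exact mul_ne_zero h1 h1', ?_, ?_⟩
      · simp only [map_mul, map_add, ← h2, ← h2']; ring
      · simp only [map_mul, map_add]
        refine dvd_add (mul_dvd_mul h3 dvd_rfl) ?_
        rw [mul_comm]
        exact mul_dvd_mul h3' dvd_rfl
    | mul z z' _ _ h h' =>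
      obtain ⟨a, b, h1, h2, h3⟩ := h
      obtain ⟨a', b', h1', h2', h3'⟩ := h'
      refine ⟨a * a', b * b', by rw [map_mul]; exact mul_ne_zero h1 h1', ?_, ?_⟩
      · simp only [map_mul, ← h2, ← h2']; ring
      · simp only [map_mul]
        exact mul_dvd_mul h3 h3'
  obtain ⟨a, b, h1, h2, h3⟩ := key _ hmem
  have hl0' : algebraMap D K l ≠ 0 := by
    rwa [Ne, FaithfulSMul.algebraMap_eq_zero_iff]
  have h4 : b = l * a := by
    apply FaithfulSMul.algebraMap_injective D K
    rw [map_mul, ← h2]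
    field_simp
  have ha : θ a ≠ 0 := by
    intro h
    rw [h4, map_mul, h, mul_zero] at h1
    exact h1 rfl
  obtain ⟨t, ht⟩ := h3
  rw [h4, map_mul] at ht
  apply hl
  refine IsUnit.of_mul_eq_one t ?_
  apply mul_right_cancel₀ ha
  rw [one_mul]
  calc θ l * t * θ a = θ l * θ a * t := by ring
    _ = θ a := ht.symm

set_option maxHeartbeats 1000000 in
/-- If `f` is an equation of the generic conormal vector `∑ c_j ∇g_j(ξ)` of the variety with generic
point `ξ`, and `h` is a conormal vector at the smooth point `ev` such that the leading form of `f` at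
`h` is constant along `P`, then the variety contains a line with direction orthogonal to `P`, through
a point `ξ'` with `y₀ · ξ' ≠ 0`. This is `core_local` for the algebra generated by `ξ`, `c`, `l` and
`σ = (∑ c_j ∇g_j(ξ) - h) / l`: the affine part of the deformation to the normal cone. -/
theorem core_global {R : Type} [CommRing R] [IsDomain R] [Algebra ℂ R] {n r s : ℕ}
    (ξ : Fin n → R) (hξ : Algebra.adjoin ℂ (Set.range ξ) = ⊤) (w : Fin s → R)
    (hw : AlgebraicIndependent ℂ w) (hs : n ≤ s + r)
    (g : Fin r → MvPolynomial (Fin n) ℂ) (hg : ∀ j, MvPolynomial.aeval ξ (g j) = 0)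
    (heuler : ∀ j, ∑ i, ξ i * MvPolynomial.aeval ξ (MvPolynomial.pderiv i (g j)) = 0)
    (ev : R →ₐ[ℂ] ℂ) (E : Matrix (Fin n) (Fin r) ℂ)
    (hE : ev (MvPolynomial.aeval ξ ((Matrix.of fun j j' => ∑ i, MvPolynomial.pderiv i (g j) *
      MvPolynomial.C (E i j')).det)) ≠ 0)
    (y₀ : Fin n → ℂ) (hy₀ : ∑ i, y₀ i * ev (ξ i) ≠ 0)
    (c₀ : Fin r → ℂ) (h : Fin n → ℂ)
    (hh : ∀ i, h i = ∑ j, c₀ j * ev (MvPolynomial.aeval ξ (MvPolynomial.pderiv i (g j))))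
    (f : MvPolynomial (Fin n) ℂ)
    (hf : MvPolynomial.aeval (fun i => ∑ j, MvPolynomial.X j *
      MvPolynomial.C (MvPolynomial.aeval ξ (MvPolynomial.pderiv i (g j))) : Fin n →
        MvPolynomial (Fin r) R) f = 0)
    (F : MvPolynomial (Fin n) ℂ)
    (hFf : F = MvPolynomial.bind₁ (fun i => MvPolynomial.X i + MvPolynomial.C (h i)) f) (m : ℕ)
    (hF : ∀ d < m, MvPolynomial.homogeneousComponent d F = 0)
    (hFm : MvPolynomial.homogeneousComponent m F ≠ 0)
    (P : Set (Fin n → ℂ))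
    (hFP : ∀ y ∈ P, ∑ i, MvPolynomial.C (y i) *
      MvPolynomial.pderiv i (MvPolynomial.homogeneousComponent m F) = 0) :
    ∃ ξ' ν' : Fin n → ℂ, ν' ≠ 0 ∧ ∑ i, y₀ i * ξ' i ≠ 0 ∧ (∀ y ∈ P, ∑ i, y i * ν' i = 0) ∧
      ∀ p : MvPolynomial (Fin n) ℂ, MvPolynomial.aeval ξ p = 0 →
        ∀ t : ℂ, MvPolynomial.eval (fun i => ξ' i + t * ν' i) p = 0 := by
  classical
  let D := MvPolynomial (Option (Fin r)) R
  let K := FractionRing D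
  let a : D →ₐ[ℂ] K := IsScalarTower.toAlgHom ℂ D K
  have ha : Function.Injective a := FaithfulSMul.algebraMap_injective D K
  let b : R →ₐ[ℂ] D := IsScalarTower.toAlgHom ℂ R D
  have hb : Function.Injective b := MvPolynomial.C_injective _ _
  -- `θ` is the arc with `ξ` fixed at the point `ev`, `c` fixed at `c₀`, and parameter `l`.
  let θ : D →ₐ[ℂ] Polynomial ℂ := MvPolynomial.aevalTower
    ((Algebra.ofId ℂ (Polynomial ℂ)).comp ev)
    (fun o => o.elim Polynomial.X fun j => Polynomial.C (c₀ j))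
  have hθb : ∀ z : R, θ (b z) = Polynomial.C (ev z) := fun z =>
    MvPolynomial.aevalTower_C _ _ _
  have hθl : θ (MvPolynomial.X none) = Polynomial.X := MvPolynomial.aevalTower_X _ _ _
  have hθc : ∀ j, θ (MvPolynomial.X (some j)) = Polynomial.C (c₀ j) := fun j =>
    MvPolynomial.aevalTower_X _ _ _
  have hl0D : (MvPolynomial.X none : D) ≠ 0 := MvPolynomial.X_ne_zero _
  let l : K := a (MvPolynomial.X none)
  have hl0 : l ≠ 0 := by
    rw [Ne, map_eq_zero_iff a ha]; exact hl0D
  let c : Fin r → K := fun j => a (MvPolynomial.X (some j))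
  let ξK : Fin n → K := fun i => a (b (ξ i))
  have hval : ∀ p : MvPolynomial (Fin n) ℂ, MvPolynomial.aeval ξK p =
      a (b (MvPolynomial.aeval ξ p)) := by
    intro p
    rw [MvPolynomial.comp_aeval_apply, MvPolynomial.comp_aeval_apply]
  let zD : Fin n → D := fun i => ∑ j, MvPolynomial.X (some j) *
    b (MvPolynomial.aeval ξ (MvPolynomial.pderiv i (g j)))
  have hzD : ∀ i, a (zD i) = ∑ j, c j * MvPolynomial.aeval ξK (MvPolynomial.pderiv i (g j)) := by
    intro i
    simp only [zD, map_sum, map_mul, hval, c]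
  let σ : Fin n → K := fun i => (a (zD i) - algebraMap ℂ K (h i)) / l
  let ΔR : R := MvPolynomial.aeval ξ ((Matrix.of fun j j' => ∑ i, MvPolynomial.pderiv i (g j) *
      MvPolynomial.C (E i j')).det) * ∑ i, algebraMap ℂ R (y₀ i) * ξ i
  have hevΔ : ev ΔR ≠ 0 := by
    simp only [ΔR, map_mul, map_sum]
    refine mul_ne_zero hE ?_
    simpa using hy₀
  have hΔ0 : ΔR ≠ 0 := by
    intro h0
    rw [h0, map_zero] at hevΔ
    exact hevΔ rfl
  have hΔK : a (b ΔR) ≠ 0 := by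
    rw [Ne, map_eq_zero_iff a ha, map_eq_zero_iff b hb]; exact hΔ0
  let q : K := (a (b ΔR))⁻¹
  let A : Subalgebra ℂ K := Algebra.adjoin ℂ (Set.range ξK ∪ Set.range σ ∪ Set.range c ∪ {l, q})
  have haD : ∀ z : D, a z ∈ A := by
    have hR : ∀ z : R, a (b z) ∈ A := by
      intro z
      have hz : z ∈ Algebra.adjoin ℂ (Set.range ξ) := hξ ▸ Algebra.mem_top
      induction hz using Algebra.adjoin_induction with
      | mem z hz =>
        obtain ⟨i, rfl⟩ := hz
        exact Algebra.subset_adjoin (by simp [ξK])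
      | algebraMap c => rw [AlgHom.commutes, AlgHom.commutes]; exact A.algebraMap_mem c
      | add z z' _ _ h h' => rw [map_add, map_add]; exact A.add_mem h h'
      | mul z z' _ _ h h' => rw [map_mul, map_mul]; exact A.mul_mem h h'
    intro z
    induction z using MvPolynomial.induction_on with
    | C z => exact hR z
    | add p q h h' => rw [map_add]; exact A.add_mem h h'
    | mul_X p i h =>
      rw [map_mul]
      refine A.mul_mem h ?_
      cases i with
      | none => exact Algebra.subset_adjoin (by simp [l])
      | some j => exact Algebra.subset_adjoin (by simp [c])
  have hfrac : IsFractionRing A K := by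
    apply IsFractionRing.of_field
    intro z
    obtain ⟨x, y, hy, rfl⟩ := IsFractionRing.div_surjective (A := D) z
    exact ⟨⟨a x, haD x⟩, ⟨a y, haD y⟩, rfl⟩
  have hlu : l⁻¹ ∉ A := by
    refine inv_not_mem_adjoin θ _ ?_ (MvPolynomial.X none) hl0D (by
      rw [hθl]; exact Polynomial.not_isUnit_X)
    have triv : ∀ d : D, ∃ a' b' : D, θ b' ≠ 0 ∧ a d * algebraMap D K b' = algebraMap D K a' ∧
        θ b' ∣ θ a' := fun d => ⟨d, 1, by simp, by rw [map_one, mul_one]; rfl, by simp⟩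
    rintro z (((⟨i, rfl⟩ | ⟨i, rfl⟩) | ⟨j, rfl⟩) | rfl | rfl)
    · exact triv _
    · refine ⟨zD i - algebraMap ℂ D (h i), MvPolynomial.X none, ?_, ?_, ?_⟩
      · rw [hθl]; exact Polynomial.X_ne_zero
      · change (a (zD i) - algebraMap ℂ K (h i)) / l * l = a (zD i - algebraMap ℂ D (h i))
        rw [map_sub, AlgHom.commutes, div_mul_cancel₀ _ hl0]
      · have : θ (zD i - algebraMap ℂ D (h i)) = 0 := by
          simp only [zD, map_sub, map_sum, map_mul, hθb, hθc, AlgHom.commutes]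
          rw [hh i]
          simp [Polynomial.algebraMap_eq]
        rw [this]
        exact dvd_zero _
    · exact triv _
    · exact triv _
    · refine ⟨1, b ΔR, ?_, ?_, ?_⟩
      · rw [hθb]; simpa using hevΔ
      · change (a (b ΔR))⁻¹ * a (b ΔR) = _
        rw [inv_mul_cancel₀ hΔK, map_one]
      · rw [hθb]
        exact (Polynomial.isUnit_C.2 (isUnit_iff_ne_zero.2 hevΔ)).dvd
  -- `n + 1` algebraically independent elements
  have hv : ∃ v : Fin (n + 1) → K, AlgebraicIndependent ℂ v := by
    have h1 : AlgebraicIndependent R (MvPolynomial.X : Option (Fin r) → D) :=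
      MvPolynomial.algebraicIndependent_X _ _
    have h2 := hw.sumElim_comp h1
    have h3 := h2.map' (f := a) ha
    have h4 : n + 1 ≤ Fintype.card (Option (Fin r) ⊕ Fin s) := by simp; omega
    obtain ⟨e⟩ : Nonempty (Fin (n + 1) ↪ Option (Fin r) ⊕ Fin s) :=
      Function.Embedding.nonempty_of_card_le (by simpa using h4)
    exact ⟨_, h3.comp e e.injective⟩
  obtain ⟨v, hv⟩ := hv
  have hzi : ∀ i, algebraMap ℂ K (h i) + l * σ i =
      ∑ j, c j * MvPolynomial.aeval ξK (MvPolynomial.pderiv i (g j)) := by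
    intro i
    rw [← hzD]
    simp only [σ]
    rw [mul_div_cancel₀ _ hl0, add_sub_cancel]
  obtain ⟨ξ', ν', h1, h2, h3, h4⟩ := core_local ξK σ c l q hl0 A rfl hlu hv g
    (fun j => by rw [hval, hg, map_zero, map_zero])
    (fun j => by
      simp only [hval, ξK, ← map_mul, ← map_sum]
      rw [heuler, map_zero, map_zero]) h hzi E y₀
    (by
      rw [hval]
      have : (∑ i, algebraMap ℂ K (y₀ i) * ξK i) = a (b (∑ i, algebraMap ℂ R (y₀ i) * ξ i)) := by
        simp only [map_sum, map_mul, AlgHom.commutes, ξK]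
      rw [this, ← map_mul, ← map_mul]
      exact inv_mul_cancel₀ hΔK) F m hF hFm
    (by
      let ρ : MvPolynomial (Fin r) R →ₐ[ℂ] K := MvPolynomial.aevalTower (a.comp b) c
      have h1 := congrArg ρ hf
      rw [map_zero, MvPolynomial.comp_aeval_apply] at h1
      rw [hFf, MvPolynomial.aeval_bind₁, ← h1]
      refine congrArg (fun v => MvPolynomial.aeval v f) (funext fun i => ?_)
      rw [map_add, MvPolynomial.aeval_X, MvPolynomial.algHom_C, add_comm, hzi, map_sum]
      refine Finset.sum_congr rfl fun j _ => ?_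
      rw [map_mul, hval]
      congr 1
      · exact (MvPolynomial.aevalTower_X _ _ _).symm
      · exact (MvPolynomial.aevalTower_C (a.comp b) c _).symm) P hFP
  refine ⟨ξ', ν', h1, h2, h3, fun p hp => h4 p ?_⟩
  rw [hval, hp, map_zero, map_zero]

/-! ### Equations of the dual variety -/

/-- At the generic point `ξ`, of dimension at least `n - r`, the gradients of `r` equations with
nonvanishing Jacobian minor span the gradients of all equations. -/
theorem grad_mem_span {R K : Type} [CommRing R] [IsDomain R] [Algebra ℂ R] [Field K]
    [Algebra ℂ K] [Algebra R K] [IsScalarTower ℂ R K] [IsFractionRing R K] {n r s : ℕ}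
    (ξ : Fin n → R) (hξ : Function.Surjective (MvPolynomial.aeval ξ : MvPolynomial (Fin n) ℂ →ₐ[ℂ] R))
    (w : Fin s → R) (hw : AlgebraicIndependent ℂ w) (hs : n ≤ s + r)
    (g : Fin r → MvPolynomial (Fin n) ℂ) (hg : ∀ j, MvPolynomial.aeval ξ (g j) = 0)
    (E : Matrix (Fin n) (Fin r) ℂ)
    (hE : MvPolynomial.aeval ξ ((Matrix.of fun j j' => ∑ i, MvPolynomial.pderiv i (g j) *
      MvPolynomial.C (E i j')).det) ≠ 0)
    (g' : MvPolynomial (Fin n) ℂ) (hg' : MvPolynomial.aeval ξ g' = 0) :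
    ∃ e : Fin r → K, ∀ i, algebraMap R K (MvPolynomial.aeval ξ (MvPolynomial.pderiv i g')) =
      ∑ j, e j * algebraMap R K (MvPolynomial.aeval ξ (MvPolynomial.pderiv i (g j))) := by
  classical
  let a : R →ₐ[ℂ] K := IsScalarTower.toAlgHom ℂ R K
  have ha : Function.Injective a := FaithfulSMul.algebraMap_injective R K
  let ξK : Fin n → K := fun i => a (ξ i)
  have hval : ∀ p : MvPolynomial (Fin n) ℂ, MvPolynomial.aeval ξK p =
      a (MvPolynomial.aeval ξ p) := by
    intro p
    rw [MvPolynomial.comp_aeval_apply]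
  have hwK : AlgebraicIndependent ℂ (fun k => a (w k)) := hw.map' ha
  choose δ hδ using fun k : Fin s => exists_derivation hwK (Pi.single k 1)
  have hkill : ∀ k (p : MvPolynomial (Fin n) ℂ), MvPolynomial.aeval ξ p = 0 →
      ∑ i, MvPolynomial.aeval ξK (MvPolynomial.pderiv i p) * δ k (ξK i) = 0 := by
    intro k p hp
    rw [← deriv_aeval, hval, hp, map_zero, map_zero]
  have hindδ : LinearIndependent K (fun k i => δ k (ξK i)) := by
    rw [Fintype.linearIndependent_iff]
    intro b hb k
    have h1 : ∀ i, ∑ k, b k * δ k (ξK i) = 0 := by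
      intro i
      have := congrFun hb i
      simpa using this
    obtain ⟨p, hp⟩ := hξ (w k)
    have h2 : ∑ k', b k' * δ k' (a (w k)) = 0 := by
      rw [← hp, ← hval]
      simp only [deriv_aeval, Finset.mul_sum]
      rw [Finset.sum_comm]
      refine Finset.sum_eq_zero fun i _ => ?_
      rw [← mul_zero (MvPolynomial.aeval ξK (MvPolynomial.pderiv i p)), ← h1 i, Finset.mul_sum]
      exact Finset.sum_congr rfl fun k _ => by ring
    simpa [hδ, Pi.single_apply] using h2
  let G : Matrix (Fin r) (Fin n) K :=
    Matrix.of fun j i => MvPolynomial.aeval ξK (MvPolynomial.pderiv i (g j))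
  have hG : LinearIndependent K G.row := by
    have hdet : (G * E.map (algebraMap ℂ K)).det ≠ 0 := by
      have h1 : (G * E.map (algebraMap ℂ K)).det = a (MvPolynomial.aeval ξ
          ((Matrix.of fun j j' => ∑ i, MvPolynomial.pderiv i (g j) *
            MvPolynomial.C (E i j')).det)) := by
        rw [AlgHom.map_det, AlgHom.map_det]
        congr 1
        ext j j'
        simp [Matrix.mul_apply, G, hval, AlgHom.mapMatrix_apply, ← MvPolynomial.algebraMap_eq]
      rw [h1, Ne, map_eq_zero_iff a ha]
      exact hE
    rw [Fintype.linearIndependent_iff]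
    intro b hb
    have h1 : Matrix.vecMul b (G * E.map (algebraMap ℂ K)) = 0 := by
      rw [← Matrix.vecMul_vecMul]
      have : Matrix.vecMul b G = 0 := by
        rw [Matrix.vecMul_eq_sum]
        exact hb
      rw [this, Matrix.zero_vecMul]
    exact fun j => congrFun (Matrix.eq_zero_of_vecMul_eq_zero hdet h1) j
  let x : Fin n → K := fun i => MvPolynomial.aeval ξK (MvPolynomial.pderiv i g')
  have hx : x ∈ Submodule.span K (Set.range G.row) := by
    by_contra hx
    have h1 : LinearIndependent K (Fin.cons x G.row : Fin (r + 1) → Fin n → K) :=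
      linearIndependent_finCons.2 ⟨hG, hx⟩
    have h2 : (Matrix.of (Fin.cons x G.row : Fin (r + 1) → Fin n → K)).rank = r + 1 := by
      simpa using LinearIndependent.rank_matrix (M := Matrix.of (Fin.cons x G.row : Fin (r + 1) → Fin n → K)) h1
    have h3 : (Matrix.of (fun k i => δ k (ξK i))).rank = s := by
      simpa using LinearIndependent.rank_matrix (M := Matrix.of (fun k i => δ k (ξK i))) hindδ
    have h4 := Matrix.rank_add_rank_le_card_of_mul_eq_zero
      (A := Matrix.of (Fin.cons x G.row : Fin (r + 1) → Fin n → K))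
      (B := (Matrix.of (fun k i => δ k (ξK i))).transpose) (by
        ext j k
        rw [Matrix.mul_apply]
        induction j using Fin.cases with
        | zero => exact hkill k g' hg'
        | succ j => exact hkill k (g j) (hg j))
    rw [Matrix.rank_transpose, h2, h3, Fintype.card_fin] at h4
    omega
  obtain ⟨e, he⟩ := (Submodule.mem_span_range_iff_exists_fun K).1 hx
  refine ⟨e, fun i => ?_⟩
  have := congrFun he i
  simp only [Finset.sum_apply, Pi.smul_apply, smul_eq_mul, x, hval] at this
  rw [← AlgHom.coe_toRingHom] at this
  refine this.symm.trans (Finset.sum_congr rfl fun j _ => ?_)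
  simp only [Matrix.row, G, Matrix.of_apply, hval]
  rfl

/-- The denominator-free form of `grad_mem_span`: the Jacobian minor is a common denominator, by
Cramer's rule. -/
theorem grad_cramer {R : Type} [CommRing R] [IsDomain R] [Algebra ℂ R] {n r s : ℕ}
    (ξ : Fin n → R) (hξ : Function.Surjective (MvPolynomial.aeval ξ : MvPolynomial (Fin n) ℂ →ₐ[ℂ] R))
    (w : Fin s → R) (hw : AlgebraicIndependent ℂ w) (hs : n ≤ s + r)
    (g : Fin r → MvPolynomial (Fin n) ℂ) (hg : ∀ j, MvPolynomial.aeval ξ (g j) = 0)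
    (E : Matrix (Fin n) (Fin r) ℂ)
    (hE : MvPolynomial.aeval ξ ((Matrix.of fun j j' => ∑ i, MvPolynomial.pderiv i (g j) *
      MvPolynomial.C (E i j')).det) ≠ 0)
    (g' : MvPolynomial (Fin n) ℂ) (hg' : MvPolynomial.aeval ξ g' = 0) :
    ∃ e : Fin r → R, ∀ i, MvPolynomial.aeval ξ ((Matrix.of fun j j' =>
        ∑ i, MvPolynomial.pderiv i (g j) * MvPolynomial.C (E i j')).det) *
        MvPolynomial.aeval ξ (MvPolynomial.pderiv i g') =
      ∑ j, e j * MvPolynomial.aeval ξ (MvPolynomial.pderiv i (g j)) := by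
  classical
  let K := FractionRing R
  obtain ⟨ε, hε⟩ := grad_mem_span (K := K) ξ hξ w hw hs g hg E hE g' hg'
  let G : Matrix (Fin r) (Fin n) R :=
    Matrix.of fun j i => MvPolynomial.aeval ξ (MvPolynomial.pderiv i (g j))
  let x : Fin n → R := fun i => MvPolynomial.aeval ξ (MvPolynomial.pderiv i g')
  let M : Matrix (Fin r) (Fin r) R := G * E.map (algebraMap ℂ R)
  have hdet : MvPolynomial.aeval ξ ((Matrix.of fun j j' => ∑ i, MvPolynomial.pderiv i (g j) *
      MvPolynomial.C (E i j')).det) = M.det := by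
    rw [AlgHom.map_det]
    congr 1
    ext j j'
    simp [Matrix.mul_apply, M, G, AlgHom.mapMatrix_apply, ← MvPolynomial.algebraMap_eq]
  let e : Fin r → R := Matrix.vecMul (Matrix.vecMul x (E.map (algebraMap ℂ R))) M.adjugate
  have hxG : (fun i => algebraMap R K (x i)) = Matrix.vecMul ε (G.map (algebraMap R K)) := by
    funext i
    rw [Matrix.vecMul_eq_sum]
    simp only [Finset.sum_apply, Pi.smul_apply, smul_eq_mul]
    exact hε i
  have he : ∀ j, algebraMap R K (e j) = algebraMap R K M.det * ε j := by
    have h1 : (fun j => algebraMap R K (e j)) = Matrix.vecMul (Matrix.vecMul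
        (fun i => algebraMap R K (x i)) ((E.map (algebraMap ℂ R)).map (algebraMap R K)))
        (M.adjugate.map (algebraMap R K)) := by
      funext j
      rw [RingHom.map_vecMul]
      have : (⇑(algebraMap R K) ∘ Matrix.vecMul x (E.map (algebraMap ℂ R))) = Matrix.vecMul
          (fun i => algebraMap R K (x i)) ((E.map (algebraMap ℂ R)).map (algebraMap R K)) := by
        funext j'
        exact RingHom.map_vecMul _ _ _ _
      rw [this]
    have h2 : (fun j => algebraMap R K (e j)) = (algebraMap R K M.det) • ε := by
      rw [h1, hxG, Matrix.vecMul_vecMul, Matrix.vecMul_vecMul, ← Matrix.map_mul, ← Matrix.map_mul]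
      have : G * E.map (algebraMap ℂ R) * M.adjugate = M.det • 1 := Matrix.mul_adjugate M
      rw [← Matrix.mul_assoc, this]
      funext j
      simp [Matrix.vecMul_eq_sum, Matrix.one_apply, apply_ite, mul_comm]
    intro j
    exact congrFun h2 j
  refine ⟨e, fun i => FaithfulSMul.algebraMap_injective R K ?_⟩
  rw [hdet, map_mul, hε, map_sum, Finset.mul_sum]
  refine Finset.sum_congr rfl fun j _ => ?_
  rw [map_mul, he, mul_assoc]

/-- An equation of the generic combination of the gradients `∇g_j(ξ)` holds at the gradient of every
equation of the variety. -/
theorem dual_eq_on_gradients {R : Type} [CommRing R] [IsDomain R] [Algebra ℂ R] {n r s : ℕ}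
    (ξ : Fin n → R) (hξ : Function.Surjective (MvPolynomial.aeval ξ : MvPolynomial (Fin n) ℂ →ₐ[ℂ] R))
    (w : Fin s → R) (hw : AlgebraicIndependent ℂ w) (hs : n ≤ s + r)
    (g : Fin r → MvPolynomial (Fin n) ℂ) (hg : ∀ j, MvPolynomial.aeval ξ (g j) = 0)
    (E : Matrix (Fin n) (Fin r) ℂ)
    (hE : MvPolynomial.aeval ξ ((Matrix.of fun j j' => ∑ i, MvPolynomial.pderiv i (g j) *
      MvPolynomial.C (E i j')).det) ≠ 0)
    (f : MvPolynomial (Fin n) ℂ)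
    (hf : MvPolynomial.aeval (fun i => ∑ j, MvPolynomial.X j *
      MvPolynomial.C (MvPolynomial.aeval ξ (MvPolynomial.pderiv i (g j))) : Fin n →
        MvPolynomial (Fin r) R) f = 0)
    (g' : MvPolynomial (Fin n) ℂ) (hg' : MvPolynomial.aeval ξ g' = 0) :
    MvPolynomial.aeval (fun i => MvPolynomial.aeval ξ (MvPolynomial.pderiv i g')) f = 0 := by
  let K := FractionRing R
  obtain ⟨ε, hε⟩ := grad_mem_span (K := K) ξ hξ w hw hs g hg E hE g' hg'
  let a : R →ₐ[ℂ] K := IsScalarTower.toAlgHom ℂ R K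
  have ha : Function.Injective a := FaithfulSMul.algebraMap_injective R K
  let ρ : MvPolynomial (Fin r) R →ₐ[ℂ] K := MvPolynomial.aevalTower a ε
  have h1 := congrArg ρ hf
  rw [map_zero, MvPolynomial.comp_aeval_apply] at h1
  rw [← map_eq_zero_iff a ha, MvPolynomial.comp_aeval_apply, ← h1]
  refine congrArg (fun v => MvPolynomial.aeval v f) (funext fun i => ?_)
  refine (hε i).trans ?_
  rw [map_sum]
  refine Finset.sum_congr rfl fun j _ => ?_
  rw [map_mul]
  congr 1
  · exact (MvPolynomial.aevalTower_X a ε j).symm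
  · exact (MvPolynomial.aevalTower_C a ε _).symm

/-- The coordinates of the generic conormal vector are algebraically dependent: otherwise a derivation
could be prescribed on them at will, contradicting the Legendrian relation `∑ ξ_i dz_i = 0`. -/
theorem exists_dual_eq {R : Type} [CommRing R] [IsDomain R] [Algebra ℂ R] {n r : ℕ}
    (ξ : Fin n → R) (hξ0 : ∃ i, ξ i ≠ 0)
    (g : Fin r → MvPolynomial (Fin n) ℂ) (hg : ∀ j, MvPolynomial.aeval ξ (g j) = 0)
    (heuler : ∀ j, ∑ i, ξ i * MvPolynomial.aeval ξ (MvPolynomial.pderiv i (g j)) = 0) :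
    ∃ f : MvPolynomial (Fin n) ℂ, f ≠ 0 ∧ MvPolynomial.aeval (fun i => ∑ j, MvPolynomial.X j *
      MvPolynomial.C (MvPolynomial.aeval ξ (MvPolynomial.pderiv i (g j))) : Fin n →
        MvPolynomial (Fin r) R) f = 0 := by
  classical
  by_contra! hcon
  let D := MvPolynomial (Fin r) R
  let K := FractionRing D
  let a : D →ₐ[ℂ] K := IsScalarTower.toAlgHom ℂ D K
  have ha : Function.Injective a := FaithfulSMul.algebraMap_injective D K
  let b : R →ₐ[ℂ] D := IsScalarTower.toAlgHom ℂ R D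
  have hb : Function.Injective b := MvPolynomial.C_injective _ _
  let z : Fin n → D := fun i => ∑ j, MvPolynomial.X j *
      MvPolynomial.C (MvPolynomial.aeval ξ (MvPolynomial.pderiv i (g j)))
  have hz : AlgebraicIndependent ℂ z := by
    rw [algebraicIndependent_iff]
    intro p hp
    by_contra h0
    exact hcon p h0 hp
  have hzK := hz.map' (f := a) ha
  let ξK : Fin n → K := fun i => a (b (ξ i))
  have hval : ∀ p : MvPolynomial (Fin n) ℂ, MvPolynomial.aeval ξK p =
      a (b (MvPolynomial.aeval ξ p)) := by
    intro p
    rw [MvPolynomial.comp_aeval_apply, MvPolynomial.comp_aeval_apply]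
  obtain ⟨i, hi⟩ := hξ0
  obtain ⟨δ, hδ⟩ := exists_derivation hzK (Pi.single i 1)
  have h1 := legendrian δ ξK (fun j => a (MvPolynomial.X j)) g
    (fun j => by rw [hval, hg, map_zero, map_zero])
    (fun j => by
      simp only [hval, ξK, ← map_mul, ← map_sum]
      rw [heuler, map_zero, map_zero])
  have h2 : ∀ i, ∑ j, a (MvPolynomial.X j) * MvPolynomial.aeval ξK (MvPolynomial.pderiv i (g j)) =
      a (z i) := by
    intro i
    simp only [z, map_sum, map_mul, hval]
    rfl
  simp only [h2] at h1
  have h3 : ∀ k, δ (a (z k)) = (Pi.single i 1 : Fin n → K) k := hδ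
  simp only [h3, Pi.single_apply, mul_ite, mul_one, mul_zero, Finset.sum_ite_eq',
    Finset.mem_univ, if_true] at h1
  apply hi
  rwa [map_eq_zero_iff a ha, map_eq_zero_iff b hb] at h1

/-- A polynomial vanishing on the conormal vectors `∑ c_j ∇g_j(v)` at all points `v` of a dense set with
`Δ(v) ≠ 0` vanishes on the generic conormal vector. -/
theorem dual_eq_of_generic {R : Type} [CommRing R] [IsDomain R] [Algebra ℂ R] {n r : ℕ}
    (ξ : Fin n → R) (C : Set (Fin n → ℂ))
    (hC : ∀ z : R, (∀ ev : R →ₐ[ℂ] ℂ, (fun i => ev (ξ i)) ∈ C → ev z = 0) → z = 0)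
    (g : Fin r → MvPolynomial (Fin n) ℂ)
    (Δ : MvPolynomial (Fin n) ℂ) (hΔ : MvPolynomial.aeval ξ Δ ≠ 0)
    (f : MvPolynomial (Fin n) ℂ)
    (hf : ∀ v ∈ C, MvPolynomial.eval v Δ ≠ 0 → ∀ c : Fin r → ℂ,
      MvPolynomial.eval (fun i => ∑ j, c j * MvPolynomial.eval v (MvPolynomial.pderiv i (g j))) f = 0) :
    MvPolynomial.aeval (fun i => ∑ j, MvPolynomial.X j *
      MvPolynomial.C (MvPolynomial.aeval ξ (MvPolynomial.pderiv i (g j))) : Fin n →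
        MvPolynomial (Fin r) R) f = 0 := by
  ext m
  rw [MvPolynomial.coeff_zero]
  refine (mul_eq_zero.1 (hC (_ * MvPolynomial.aeval ξ Δ) ?_)).resolve_right hΔ
  intro ev hv
  have hval : ∀ p : MvPolynomial (Fin n) ℂ, ev (MvPolynomial.aeval ξ p) =
      MvPolynomial.eval (fun i => ev (ξ i)) p := by
    intro p
    rw [MvPolynomial.comp_aeval_apply, MvPolynomial.aeval_eq_eval]
  rw [map_mul, hval]
  by_cases h0 : MvPolynomial.eval (fun i => ev (ξ i)) Δ = 0
  · rw [h0, mul_zero]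
  refine mul_eq_zero_of_left ?_ _
  have h1 : MvPolynomial.mapAlgHom ev (MvPolynomial.aeval (fun i => ∑ j, MvPolynomial.X j *
      MvPolynomial.C (MvPolynomial.aeval ξ (MvPolynomial.pderiv i (g j))) : Fin n →
        MvPolynomial (Fin r) R) f) = 0 := by
    apply MvPolynomial.funext
    intro c
    rw [map_zero, ← hf _ hv h0 c, MvPolynomial.comp_aeval_apply, ← MvPolynomial.aeval_eq_eval,
      ← MvPolynomial.aeval_eq_eval, MvPolynomial.comp_aeval_apply]
    refine congrArg (fun v => MvPolynomial.aeval v f) (funext fun i => ?_)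
    rw [map_sum, map_sum]
    refine Finset.sum_congr rfl fun j _ => ?_
    rw [map_mul, map_mul, MvPolynomial.mapAlgHom_apply, MvPolynomial.mapAlgHom_apply,
      MvPolynomial.map_X, MvPolynomial.map_C, MvPolynomial.aeval_X, MvPolynomial.aeval_C,
      RingHom.coe_coe, hval]
    rfl
  have h2 := congrArg (MvPolynomial.coeff m) h1
  rwa [MvPolynomial.mapAlgHom_apply, MvPolynomial.coeff_map, MvPolynomial.coeff_zero] at h2

/-! ### Ideals and dimension of projective varieties -/

/-- By Noether normalization, `ℂ[X] / I` contains at least as many algebraically independent elements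
as the length of any chain of prime ideals above `I`. -/
theorem exists_algebraicIndependent_of_chains {n : ℕ} (I : Ideal (MvPolynomial (Fin n) ℂ))
    (hI : I ≠ ⊤) : ∃ (s : ℕ) (w : Fin s → MvPolynomial (Fin n) ℂ ⧸ I), AlgebraicIndependent ℂ w ∧
      ∀ (d : ℕ) (q : Fin (d + 1) → Ideal (MvPolynomial (Fin n) ℂ)), StrictMono q →
        (∀ i, (q i).IsPrime) → (∀ i, I ≤ q i) → d ≤ s := by
  obtain ⟨s, -, g, hg, hintg⟩ := exists_integral_inj_algHom_of_quotient I hI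
  refine ⟨s, fun k => g (MvPolynomial.X k), ?_, ?_⟩
  · exact (MvPolynomial.algebraicIndependent_X (Fin s) ℂ).map' hg
  intro d q hq hprime hle
  let R := MvPolynomial (Fin n) ℂ ⧸ I
  have hsurj : Function.Surjective (Ideal.Quotient.mk I) := Ideal.Quotient.mk_surjective
  have hker : ∀ i, RingHom.ker (Ideal.Quotient.mk I) ≤ q i := fun i => by
    rw [Ideal.mk_ker]; exact hle i
  have hcm : ∀ i, Ideal.comap (Ideal.Quotient.mk I) (Ideal.map (Ideal.Quotient.mk I) (q i)) = q i :=
    fun i => by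
      rw [Ideal.comap_map_of_surjective _ hsurj, ← RingHom.ker_eq_comap_bot]
      exact sup_eq_left.2 (hker i)
  let Q : Fin (d + 1) → PrimeSpectrum R := fun i =>
    ⟨Ideal.map (Ideal.Quotient.mk I) (q i),
      have := hprime i; Ideal.map_isPrime_of_surjective hsurj (hker i)⟩
  have hQ : StrictMono Q := by
    intro i j hij
    rw [← PrimeSpectrum.asIdeal_lt_asIdeal]
    refine lt_of_le_not_ge (Ideal.map_mono (hq hij).le) fun h => ?_
    have := Ideal.comap_mono (f := Ideal.Quotient.mk I) h
    rw [hcm, hcm] at this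
    exact (hq hij).not_ge this
  let := g.toRingHom.toAlgebra
  have hintg' : Algebra.IsIntegral (MvPolynomial (Fin s) ℂ) R := ⟨hintg⟩
  have hcomap : StrictMono (PrimeSpectrum.comap (algebraMap (MvPolynomial (Fin s) ℂ) R)) := by
    intro a b hab
    rw [← PrimeSpectrum.asIdeal_lt_asIdeal] at hab ⊢
    exact Ideal.IsIntegral.comap_lt_comap hab
  have h1 := Order.LTSeries.length_le_krullDim (LTSeries.mk d _ (hcomap.comp hQ))
  have h2 : ringKrullDim (MvPolynomial (Fin s) ℂ) = s := by
    rw [MvPolynomial.ringKrullDim_of_isNoetherianRing, ringKrullDim_eq_zero_of_field]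
    simp
  rw [← ringKrullDim, h2] at h1
  exact_mod_cast h1

section
variable {n : ℕ}

theorem rep_mem (x : Pj n) : x.rep ∈ x.submodule := by
  rw [Projectivization.submodule_eq]
  exact Submodule.mem_span_singleton_self _

theorem mem_submodule_iff {x : Pj n} {v : Vc n} : v ∈ x.submodule ↔ ∃ t : ℂ, t • x.rep = v := by
  rw [Projectivization.submodule_eq, Submodule.mem_span_singleton]

theorem submodule_le_iff {x : Pj n} {W : Submodule ℂ (Vc n)} : x.submodule ≤ W ↔ x.rep ∈ W := by
  rw [Projectivization.submodule_eq, Submodule.span_singleton_le_iff_mem]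

/-- Restriction of a polynomial to the affine line `a + t b`. -/
theorem eval_line (f : MvPolynomial (Fin n) ℂ) (a b : Vc n) (t : ℂ) :
    (MvPolynomial.aeval (fun i => Polynomial.C (a i) + Polynomial.C (b i) * Polynomial.X) f :
      Polynomial ℂ).eval t = MvPolynomial.eval (a + t • b) f := by
  rw [← Polynomial.coe_aeval_eq_eval, MvPolynomial.comp_aeval_apply, MvPolynomial.aeval_eq_eval]
  refine congrArg (fun v => MvPolynomial.eval v f) (funext fun i => ?_)
  rw [map_add, map_mul, Polynomial.aeval_C, Polynomial.aeval_C, Polynomial.aeval_X, mul_comm]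
  rfl

theorem pZeros_mul (f g : MvPolynomial (Fin n) ℂ) : pZeros (f * g) = pZeros f ∪ pZeros g := by
  ext x
  constructor
  · intro h
    by_contra hcon
    simp only [Set.mem_union, not_or, pZeros, Set.mem_ofPred_eq, not_forall] at hcon
    obtain ⟨⟨v, hv, hfv⟩, w, hw, hgw⟩ := hcon
    obtain ⟨t, rfl⟩ := mem_submodule_iff.1 hv
    obtain ⟨t', rfl⟩ := mem_submodule_iff.1 hw
    let p : MvPolynomial (Fin n) ℂ → Polynomial ℂ := fun f => MvPolynomial.aeval (fun i =>
      Polynomial.C ((0 : Vc n) i) + Polynomial.C (x.rep i) * Polynomial.X) f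
    have hp : ∀ f t, (p f).eval t = MvPolynomial.eval (t • x.rep) f := fun f t => by
      have := eval_line f 0 x.rep t
      rwa [zero_add] at this
    have h1 : p f ≠ 0 := by
      intro h0
      rw [← hp, h0, Polynomial.eval_zero] at hfv
      exact hfv rfl
    have h2 : p g ≠ 0 := by
      intro h0
      rw [← hp, h0, Polynomial.eval_zero] at hgw
      exact hgw rfl
    refine mul_ne_zero h1 h2 (Polynomial.funext fun t => ?_)
    have h3 : p f * p g = p (f * g) := (map_mul _ _ _).symm
    rw [h3, hp, Polynomial.eval_zero]
    exact h _ (mem_submodule_iff.2 ⟨t, rfl⟩)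
  · rintro (h | h) v hv
    · rw [map_mul, h v hv, zero_mul]
    · rw [map_mul, h v hv, mul_zero]

theorem pZeros_closed (f : MvPolynomial (Fin n) ℂ) : @IsClosed _ (zarTop n) (pZeros f) := by
  let := zarTop n
  exact ⟨TopologicalSpace.isOpen_generateFrom_of_mem ⟨f, rfl⟩⟩

/-- Nonempty closed sets are cut out by their ideals. The empty set is excluded, since every polynomial
belongs to `vanishId ∅` while the basis of open sets contains the whole space. -/
theorem mem_of_closed {X : Set (Pj n)} (hX : zClosed X) {x : Pj n}
    (h : ∀ f ∈ vanishId X, MvPolynomial.eval x.rep f = 0) (hne : X.Nonempty) : x ∈ X := by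
  let := zarTop n
  by_contra hx
  have hb := TopologicalSpace.isTopologicalBasis_of_subbasis_of_inter
    (t := zarTop n) (r := {U | ∃ f, U = (pZeros f)ᶜ}) rfl (by
      rintro _ ⟨f, rfl⟩ _ ⟨g, rfl⟩
      exact ⟨f * g, by rw [pZeros_mul, Set.compl_union]⟩)
  obtain ⟨U, hU, hxU, hUX⟩ := hb.exists_subset_of_mem_open (a := x) (u := Xᶜ) hx hX.isOpen_compl
  rcases hU with rfl | ⟨f, rfl⟩
  · obtain ⟨y, hy⟩ := hne
    exact hUX (Set.mem_univ y) hy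
  · apply hxU
    have hXf : ∀ y ∈ X, y ∈ pZeros f := fun y hy => by
      by_contra h1
      exact hUX h1 hy
    intro v hv
    obtain ⟨t, rfl⟩ := mem_submodule_iff.1 hv
    -- the rescaled polynomial also vanishes on `X`
    have h1 := h (MvPolynomial.bind₁ (fun i => MvPolynomial.C t * MvPolynomial.X i) f) (by
      intro y hy v hv
      rw [← MvPolynomial.aeval_eq_eval, MvPolynomial.aeval_bind₁, MvPolynomial.aeval_eq_eval]
      simp only [map_mul, MvPolynomial.aeval_X, MvPolynomial.algHom_C]
      exact hXf y hy (t • v) (Submodule.smul_mem _ _ hv))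
    rw [← MvPolynomial.aeval_eq_eval, MvPolynomial.aeval_bind₁, MvPolynomial.aeval_eq_eval] at h1
    simp only [map_mul, MvPolynomial.aeval_X, MvPolynomial.algHom_C] at h1
    exact h1

/-- The set `vanishId S` as an ideal. -/
def vanIdeal (S : Set (Pj n)) : Ideal (MvPolynomial (Fin n) ℂ) where
  carrier := vanishId S
  add_mem' := fun ha hb x hx v hv => by rw [map_add, ha x hx v hv, hb x hx v hv, add_zero]
  zero_mem' := fun x hx v hv => map_zero _
  smul_mem' := fun c a ha x hx v hv => by rw [smul_eq_mul, map_mul, ha x hx v hv, mul_zero]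

theorem mem_vanIdeal {S : Set (Pj n)} {f : MvPolynomial (Fin n) ℂ} :
    f ∈ vanIdeal S ↔ f ∈ vanishId S := Iff.rfl

theorem span_vanishId (S : Set (Pj n)) : Ideal.span (vanishId S) = vanIdeal S :=
  (vanIdeal S).span_eq

theorem vanIdeal_prime {X : Set (Pj n)} (hX : zIrr X) : (vanIdeal X).IsPrime := by
  let := zarTop n
  refine ⟨?_, ?_⟩
  · rw [Ne, Ideal.eq_top_iff_one]
    obtain ⟨x, hx⟩ := hX.nonempty
    intro h
    have := h x hx _ (rep_mem x)
    simp at this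
  · intro f g hfg
    have h1 := (isPreirreducible_iff_isClosed_union_isClosed.1 hX.isPreirreducible)
      (pZeros f) (pZeros g) (pZeros_closed f) (pZeros_closed g) (by
        rw [← pZeros_mul]
        exact fun x hx => hfg x hx)
    exact h1.imp (fun h x hx => h hx) (fun h x hx => h hx)

/-- The homogeneous coordinate ring of `X` has transcendence degree at least `dim X + 1`: a chain of
irreducible closed subsets gives a chain of primes, to which the irrelevant ideal is added. -/
theorem exists_algebraicIndependent {X : Set (Pj n)} (hcl : zClosed X) (hX : zIrr X) :
    ∃ (s : ℕ) (w : Fin s → MvPolynomial (Fin n) ℂ ⧸ vanIdeal X), AlgebraicIndependent ℂ w ∧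
      zdim X + 1 ≤ s := by
  obtain ⟨s, w, hw, hs⟩ := exists_algebraicIndependent_of_chains (vanIdeal X)
    (vanIdeal_prime hX).ne_top
  refine ⟨s, w, hw, ?_⟩
  have hzcl : zcl X = X := by
    let := zarTop n
    exact IsClosed.closure_eq hcl
  have key : ∀ d ∈ {d | ∃ c : Fin (d + 1) → Set (Pj n), StrictMono c ∧
    ∀ i, zIrr (c i) ∧ zClosed (c i) ∧ c i ⊆ zcl X}, d + 1 ≤ s := by
    rintro d ⟨c, hc, hci⟩
    have hne : ∀ i, (c i).Nonempty := fun i =>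
      @IsIrreducible.nonempty _ (zarTop n) _ (hci i).1
    let m : Ideal (MvPolynomial (Fin n) ℂ) := RingHom.ker (MvPolynomial.eval (0 : Fin n → ℂ))
    have hm : m.IsPrime := RingHom.ker_isPrime _
    have hcm : ∀ i, vanIdeal (c i) < m := by
      intro i
      obtain ⟨y, hy⟩ := hne i
      refine lt_of_le_not_ge (fun f hf => ?_) (fun h => y.rep_nonzero ?_)
      · exact hf y hy 0 (Submodule.zero_mem _)
      · funext k
        have h1 : (MvPolynomial.X k : MvPolynomial (Fin n) ℂ) ∈ m := by
          change MvPolynomial.eval _ _ = 0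
          simp
        have := h h1 y hy _ (rep_mem y)
        simpa using this
    have hanti : ∀ i j, i < j → vanIdeal (c j) < vanIdeal (c i) := by
      intro i j hij
      have hlt := hc hij
      refine lt_of_le_not_ge (fun f hf y hy => hf y (hlt.le hy)) (fun h => hlt.not_ge ?_)
      intro y hy
      exact mem_of_closed (hci i).2.1 (fun f hf => h hf y hy _ (rep_mem y)) (hne i)
    refine hs (d + 1) (Fin.snoc (fun i => vanIdeal (c (Fin.rev i))) m) ?_ ?_ ?_
    · rw [Fin.strictMono_iff_lt_succ]
      intro i
      induction i using Fin.lastCases with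
      | last =>
        rw [Fin.succ_last, Fin.snoc_last, Fin.snoc_castSucc]
        exact hcm _
      | cast i =>
        rw [← Fin.castSucc_succ, Fin.snoc_castSucc, Fin.snoc_castSucc]
        apply hanti
        rw [Fin.rev_lt_rev]
        exact Fin.castSucc_lt_succ
    · intro i
      induction i using Fin.lastCases with
      | last => rwa [Fin.snoc_last]
      | cast i => rw [Fin.snoc_castSucc]; exact vanIdeal_prime (hci _).1
    · have hXc : ∀ i, vanIdeal X ≤ vanIdeal (c i) := fun i f hf y hy => hf y (by
        rw [← hzcl]; exact (hci i).2.2 hy)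
      intro i
      induction i using Fin.lastCases with
      | last => rw [Fin.snoc_last]; exact (hXc 0).trans (hcm 0).le
      | cast i => rw [Fin.snoc_castSucc]; exact hXc _
  refine key _ (Nat.sSup_mem ⟨0, fun _ => X, ?_, fun _ => ⟨hX, hcl, hzcl.ge⟩⟩ ⟨s, ?_⟩)
  · intro i j hij
    exact absurd hij (by omega)
  · intro d hd
    have := key d hd
    omega

end

/-! ### Multiplicity at a general point -/

section
variable {n : ℕ}

/-- The polynomial `v ↦ f (t v)`. -/
noncomputable def scalePoly (t : ℂ) (f : MvPolynomial (Fin n) ℂ) : MvPolynomial (Fin n) ℂ :=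
  MvPolynomial.bind₁ (fun i => MvPolynomial.C t * MvPolynomial.X i) f

theorem eval_scalePoly (t : ℂ) (f : MvPolynomial (Fin n) ℂ) (v : Vc n) :
    MvPolynomial.eval v (scalePoly t f) = MvPolynomial.eval (t • v) f := by
  rw [scalePoly, ← MvPolynomial.aeval_eq_eval, MvPolynomial.aeval_bind₁, MvPolynomial.aeval_eq_eval]
  simp only [map_mul, MvPolynomial.aeval_X, MvPolynomial.algHom_C]
  rfl

theorem scalePoly_mem {S : Set (Pj n)} {f : MvPolynomial (Fin n) ℂ} (hf : f ∈ vanishId S) (t : ℂ) :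
    scalePoly t f ∈ vanishId S := by
  intro x hx v hv
  rw [eval_scalePoly]
  exact hf x hx _ (Submodule.smul_mem _ _ hv)

theorem eval_shiftPoly (f : MvPolynomial (Fin n) ℂ) (v u : Vc n) :
    MvPolynomial.eval u (shiftPoly f v) = MvPolynomial.eval (u + v) f := by
  rw [shiftPoly, ← MvPolynomial.aeval_eq_eval, MvPolynomial.aeval_bind₁, MvPolynomial.aeval_eq_eval]
  simp only [map_add, MvPolynomial.aeval_X, MvPolynomial.algHom_C]
  rfl

theorem shiftPoly_ne_zero {f : MvPolynomial (Fin n) ℂ} (hf : f ≠ 0) (v : Vc n) :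
    shiftPoly f v ≠ 0 := by
  intro h
  apply hf
  apply MvPolynomial.funext
  intro u
  have := eval_shiftPoly f v (u - v)
  rw [h, sub_add_cancel] at this
  rw [← this, map_zero, map_zero]

theorem coeff_scalePoly (t : ℂ) (f : MvPolynomial (Fin n) ℂ) (a : Fin n →₀ ℕ) :
    MvPolynomial.coeff a (scalePoly t f) = t ^ a.degree * MvPolynomial.coeff a f := by
  classical
  induction f using MvPolynomial.induction_on generalizing a with
  | C c =>
    simp only [scalePoly, MvPolynomial.bind₁_C_right, MvPolynomial.coeff_C]
    split_ifs with h
    · subst h; simp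
    · simp
  | add p q hp hq =>
    simp only [scalePoly, map_add, MvPolynomial.coeff_add] at hp hq ⊢
    rw [hp, hq, mul_add]
  | mul_X p k hp =>
    have h1 : scalePoly t (p * MvPolynomial.X k) =
        MvPolynomial.C t * (scalePoly t p * MvPolynomial.X k) := by
      simp only [scalePoly, map_mul, MvPolynomial.bind₁_X_right]; ring
    rw [h1, MvPolynomial.coeff_C_mul, MvPolynomial.coeff_mul_X', MvPolynomial.coeff_mul_X']
    split_ifs with h
    · rw [hp]
      have h2 : a.degree = (a - Finsupp.single k 1).degree + 1 := by
        conv_lhs => rw [← tsub_add_cancel_of_le (a := Finsupp.single k 1) (b := a) (by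
          rw [Finsupp.single_le_iff]
          exact Nat.one_le_iff_ne_zero.2 (Finsupp.mem_support_iff.1 h))]
        rw [map_add, Finsupp.degree_single]
      rw [h2, pow_succ]
      ring
    · simp

theorem shiftPoly_scalePoly (t : ℂ) (f : MvPolynomial (Fin n) ℂ) (v : Vc n) :
    shiftPoly (scalePoly t f) v = scalePoly t (shiftPoly f (t • v)) := by
  apply MvPolynomial.funext
  intro u
  rw [eval_shiftPoly, eval_scalePoly, eval_scalePoly, eval_shiftPoly, smul_add]

theorem polyOrd_le {g : MvPolynomial (Fin n) ℂ} {a : Fin n →₀ ℕ}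
    (ha : MvPolynomial.coeff a g ≠ 0) : polyOrd g ≤ a.degree := by
  apply Nat.sInf_le
  intro h
  have := congrArg (MvPolynomial.coeff a) h
  rw [MvPolynomial.coeff_homogeneousComponent, if_pos rfl, MvPolynomial.coeff_zero] at this
  exact ha this

theorem homogeneousComponent_polyOrd {g : MvPolynomial (Fin n) ℂ} (hg : g ≠ 0) :
    MvPolynomial.homogeneousComponent (polyOrd g) g ≠ 0 := by
  obtain ⟨a, ha⟩ := MvPolynomial.ne_zero_iff.1 hg
  have : a.degree ∈ {d | MvPolynomial.homogeneousComponent d g ≠ 0} := by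
    intro h
    have := congrArg (MvPolynomial.coeff a) h
    rw [MvPolynomial.coeff_homogeneousComponent, if_pos rfl, MvPolynomial.coeff_zero] at this
    exact ha this
  exact Nat.sInf_mem ⟨_, this⟩

/-- The Taylor expansion of `f` at the generic point. -/
noncomputable def taylorPoly (f : MvPolynomial (Fin n) ℂ) : MvPolynomial (Fin n) (MvPolynomial (Fin n) ℂ) :=
  MvPolynomial.aeval (fun i => MvPolynomial.X i + MvPolynomial.C (MvPolynomial.X i)) f

theorem eval_coeff_taylorPoly (f : MvPolynomial (Fin n) ℂ) (a : Fin n →₀ ℕ) (v : Vc n) :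
    MvPolynomial.eval v (MvPolynomial.coeff a (taylorPoly f)) =
      MvPolynomial.coeff a (shiftPoly f v) := by
  have h1 : MvPolynomial.mapAlgHom (MvPolynomial.aeval v : MvPolynomial (Fin n) ℂ →ₐ[ℂ] ℂ)
      (taylorPoly f) = shiftPoly f v := by
    rw [taylorPoly, MvPolynomial.comp_aeval_apply]
    simp only [map_add, MvPolynomial.mapAlgHom_apply, MvPolynomial.map_X, MvPolynomial.map_C,
      RingHom.coe_coe, MvPolynomial.aeval_X]
    rfl
  rw [← h1, MvPolynomial.mapAlgHom_apply, MvPolynomial.coeff_map, RingHom.coe_coe,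
    MvPolynomial.aeval_eq_eval]

theorem pderiv_coeff_taylorPoly (f : MvPolynomial (Fin n) ℂ) (a : Fin n →₀ ℕ) (i : Fin n) :
    MvPolynomial.pderiv i (MvPolynomial.coeff a (taylorPoly f)) =
      MvPolynomial.coeff a (taylorPoly (MvPolynomial.pderiv i f)) := by
  classical
  induction f using MvPolynomial.induction_on generalizing a with
  | C c =>
    simp only [taylorPoly, MvPolynomial.algHom_C, MvPolynomial.pderiv_C, map_zero,
      MvPolynomial.coeff_zero, MvPolynomial.algebraMap_apply, MvPolynomial.coeff_C]
    split_ifs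
    · simp
    · simp
  | add p q hp hq =>
    simp only [taylorPoly, map_add, MvPolynomial.coeff_add] at hp hq ⊢
    rw [hp, hq]
  | mul_X p k hp =>
    have h1 : taylorPoly (p * MvPolynomial.X k) = taylorPoly p * MvPolynomial.X k +
        MvPolynomial.C (MvPolynomial.X k) * taylorPoly p := by
      simp only [taylorPoly, map_mul, MvPolynomial.aeval_X]; ring
    have h2 : taylorPoly (MvPolynomial.pderiv i (p * MvPolynomial.X k)) =
        taylorPoly (MvPolynomial.pderiv i p) * MvPolynomial.X k +
        MvPolynomial.C (MvPolynomial.X k) * taylorPoly (MvPolynomial.pderiv i p) +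
        MvPolynomial.C (MvPolynomial.pderiv i (MvPolynomial.X k)) * taylorPoly p := by
      rw [MvPolynomial.pderiv_mul, MvPolynomial.pderiv_X]
      by_cases hik : k = i
      · subst hik
        simp [taylorPoly]
        ring
      · simp [taylorPoly, hik]
        ring
    rw [h1, h2]
    simp only [MvPolynomial.coeff_add, MvPolynomial.coeff_mul_X', MvPolynomial.coeff_C_mul, map_add,
      MvPolynomial.pderiv_mul, ← hp]
    split_ifs
    · rw [hp]; ring
    · rw [map_zero]; ring

theorem pderiv_shiftPoly (f : MvPolynomial (Fin n) ℂ) (v : Vc n) (i : Fin n) :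
    MvPolynomial.pderiv i (shiftPoly f v) = shiftPoly (MvPolynomial.pderiv i f) v := by
  have h := deriv_aeval (MvPolynomial.pderiv i : Derivation ℂ (MvPolynomial (Fin n) ℂ) _)
    (fun i => MvPolynomial.X i + MvPolynomial.C (v i)) f
  refine h.trans ?_
  classical
  simp [MvPolynomial.pderiv_X, Pi.single_apply]
  rfl

/-- If all Taylor coefficients of order `< m` vanish along the line `h + u y`, then the leading form
at `h` is constant in the direction `y`. -/
theorem leading_form_invariant (f : MvPolynomial (Fin n) ℂ) (h y : Vc n) (hh : h ≠ 0) (m : ℕ)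
    (hline : ∀ u : ℂ, h + u • y ≠ 0 → ∀ a : Fin n →₀ ℕ, a.degree < m →
      MvPolynomial.coeff a (shiftPoly f (h + u • y)) = 0) :
    ∑ i, MvPolynomial.C (y i) *
      MvPolynomial.pderiv i (MvPolynomial.homogeneousComponent m (shiftPoly f h)) = 0 := by
  obtain ⟨k, hk⟩ := Function.ne_iff.1 hh
  ext a
  rw [MvPolynomial.coeff_sum, MvPolynomial.coeff_zero]
  simp only [MvPolynomial.coeff_C_mul, MvPolynomial.coeff_pderiv,
    MvPolynomial.coeff_homogeneousComponent, map_add, Finsupp.degree_single]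
  by_cases ham : a.degree + 1 = m
  swap
  · simp [ham]
  simp only [ham, if_true]
  let q := MvPolynomial.coeff a (taylorPoly f)
  let ρ : MvPolynomial (Fin n) ℂ →ₐ[ℂ] Polynomial ℂ := MvPolynomial.aeval (fun i =>
    Polynomial.C (h i) + Polynomial.C (y i) * Polynomial.X)
  have hρ : ∀ p t, (ρ p).eval t = MvPolynomial.eval (h + t • y) p := fun p t => eval_line p h y t
  have h1 : ρ q * ρ (MvPolynomial.X k) = 0 := by
    apply Polynomial.funext
    intro u
    rw [Polynomial.eval_mul, hρ, hρ, MvPolynomial.eval_X, Polynomial.eval_zero]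
    by_cases h0 : h + u • y = 0
    · rw [h0]; simp
    · rw [eval_coeff_taylorPoly, hline u h0 a (by omega), zero_mul]
  have h2 : ρ q = 0 := by
    refine (mul_eq_zero.1 h1).resolve_right fun h0 => hk ?_
    have := hρ (MvPolynomial.X k) 0
    rw [h0] at this
    simpa using this.symm
  have h3 := deriv_aeval (Polynomial.derivative' : Derivation ℂ (Polynomial ℂ) (Polynomial ℂ))
    (fun i => Polynomial.C (h i) + Polynomial.C (y i) * Polynomial.X) q
  have h4 : ∑ i, MvPolynomial.eval h (MvPolynomial.pderiv i q) * y i = 0 := by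
    have h5 : Polynomial.derivative' (ρ q) = 0 := by rw [h2, map_zero]
    have h6 := congrArg (Polynomial.eval 0) (h3.symm.trans h5)
    rw [Polynomial.eval_finsetSum, Polynomial.eval_zero] at h6
    rw [← h6]
    refine Finset.sum_congr rfl fun i _ => ?_
    rw [Polynomial.eval_mul]
    have := hρ (MvPolynomial.pderiv i q) 0
    rw [zero_smul, add_zero] at this
    rw [← this]
    congr 1
    simp [Polynomial.derivative']
  rw [← h4]
  refine Finset.sum_congr rfl fun i _ => ?_
  rw [pderiv_coeff_taylorPoly, eval_coeff_taylorPoly, ← pderiv_shiftPoly, MvPolynomial.coeff_pderiv]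
  ring

/-- The multiplicity of `Z` at a general point of `Y` exists, and is the minimal order of vanishing at a
point of `Y` of an element of the ideal of `Z`. -/
theorem exists_multAtGeneral {Z Y : Set (Pj n)} (hZ : vanIdeal Z ≠ ⊥) (hY : Y.Nonempty) :
    ∃ m, multAtGeneral Z Y m ∧
      (∃ z ∈ Y, ∃ f ∈ vanishId Z, f ≠ 0 ∧ polyOrd (shiftPoly f z.rep) = m) ∧
      ∀ z ∈ Y, ∀ f ∈ vanishId Z, f ≠ 0 → m ≤ polyOrd (shiftPoly f z.rep) := by
  obtain ⟨f₁, hf₁, hf₁0⟩ := Submodule.exists_mem_ne_zero_of_ne_bot hZ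
  have hmult : ∀ z, multAt Z z =
      sInf {d | ∃ f ∈ vanIdeal Z, f ≠ 0 ∧ d = polyOrd (shiftPoly f z.rep)} := by
    intro z
    rw [multAt, span_vanishId, idealMult, if_neg hZ]
  have hle : ∀ z, ∀ f ∈ vanishId Z, f ≠ 0 → multAt Z z ≤ polyOrd (shiftPoly f z.rep) := by
    intro z f hf hf0
    rw [hmult]
    exact Nat.sInf_le ⟨f, hf, hf0, rfl⟩
  obtain ⟨z₀, hz₀, hz₀m⟩ := Nat.sInf_mem (s := multAt Z '' Y) (hY.image _)
  set m := sInf (multAt Z '' Y) with hm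
  have hmin : ∀ z ∈ Y, m ≤ multAt Z z := fun z hz => Nat.sInf_le ⟨z, hz, rfl⟩
  obtain ⟨f, hf, hf0, hfm⟩ := Nat.sInf_mem
    (s := {d | ∃ f ∈ vanIdeal Z, f ≠ 0 ∧ d = polyOrd (shiftPoly f z₀.rep)}) ⟨_, f₁, hf₁, hf₁0, rfl⟩
  rw [← hmult, hz₀m] at hfm
  refine ⟨m, ?_, ⟨z₀, hz₀, f, hf, hf0, hfm.symm⟩, fun z hz f hf hf0 =>
    (hmin z hz).trans (hle z f hf hf0)⟩
  obtain ⟨a, ha⟩ := MvPolynomial.ne_zero_iff.1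
    (homogeneousComponent_polyOrd (shiftPoly_ne_zero hf0 z₀.rep))
  rw [← hfm, MvPolynomial.coeff_homogeneousComponent] at ha
  have had : a.degree = m := by
    by_contra h
    rw [if_neg h] at ha
    exact ha rfl
  rw [if_pos had] at ha
  obtain ⟨k, hk⟩ := Function.ne_iff.1 z₀.rep_nonzero
  let q := MvPolynomial.coeff a (taylorPoly f) * MvPolynomial.X k
  have hq : ∀ v, MvPolynomial.eval v q = MvPolynomial.coeff a (shiftPoly f v) * v k := by
    intro v
    rw [map_mul, eval_coeff_taylorPoly, MvPolynomial.eval_X]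
  refine ⟨(pZeros q)ᶜ, TopologicalSpace.isOpen_generateFrom_of_mem ⟨q, rfl⟩, ⟨z₀, hz₀, ?_⟩, ?_⟩
  · intro h
    have := h _ (rep_mem z₀)
    rw [hq] at this
    exact mul_ne_zero ha hk this
  · rintro z ⟨hzY, hzq⟩
    refine le_antisymm ?_ (hmin z hzY)
    simp only [pZeros, Set.mem_compl_iff, Set.mem_ofPred_eq, not_forall] at hzq
    obtain ⟨v, hv, hqv⟩ := hzq
    obtain ⟨t, rfl⟩ := mem_submodule_iff.1 hv
    rw [hq] at hqv
    have ht : t ≠ 0 := by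
      rintro rfl
      simp at hqv
    have hc : MvPolynomial.coeff a (shiftPoly (scalePoly t f) z.rep) ≠ 0 := by
      rw [shiftPoly_scalePoly, coeff_scalePoly]
      exact mul_ne_zero (pow_ne_zero _ ht) (left_ne_zero_of_mul hqv)
    rw [← had]
    refine (hle z _ (scalePoly_mem hf t) ?_).trans (polyOrd_le hc)
    intro h0
    rw [h0] at hc
    simp [shiftPoly] at hc

/-- If the multiplicity of `Z` at a general point of `V₁ ≤ V₂` does not exceed the one at a general
point of `V₂`, then some equation of `Z` has, at some point `h` of `V₁`, a leading form which is
constant in all directions of `V₂`. -/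
theorem mult_jump_or {Z : Set (Pj n)} (hZ : vanIdeal Z ≠ ⊥) {V₁ V₂ : Submodule ℂ (Vc n)}
    (hV : V₁ ≤ V₂) (hV₁ : V₁ ≠ ⊥) :
    (∃ m₁ m₂, multAtGeneral Z (projLin V₁) m₁ ∧ multAtGeneral Z (projLin V₂) m₂ ∧ m₂ < m₁) ∨
    ∃ h ∈ V₁, ∃ f ∈ vanishId Z, ∃ m, (∀ d < m,
      MvPolynomial.homogeneousComponent d (shiftPoly f h) = 0) ∧
      MvPolynomial.homogeneousComponent m (shiftPoly f h) ≠ 0 ∧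
      ∀ y ∈ V₂, ∑ i, MvPolynomial.C (y i) *
        MvPolynomial.pderiv i (MvPolynomial.homogeneousComponent m (shiftPoly f h)) = 0 := by
  have hsub : projLin V₁ ⊆ projLin V₂ := fun z hz => le_trans hz hV
  have hne : (projLin V₁).Nonempty := by
    obtain ⟨v, hv, hv0⟩ := Submodule.exists_mem_ne_zero_of_ne_bot hV₁
    refine ⟨Projectivization.mk ℂ v hv0, ?_⟩
    change Projectivization.submodule _ ≤ V₁
    rw [Projectivization.submodule_mk, Submodule.span_singleton_le_iff_mem]
    exact hv
  obtain ⟨m₁, hm₁, ⟨z, hz, f, hf, hf0, hfm⟩, hmin₁⟩ := exists_multAtGeneral hZ hne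
  obtain ⟨m₂, hm₂, -, hmin₂⟩ := exists_multAtGeneral hZ (hne.mono hsub)
  have h21 : m₂ ≤ m₁ := hfm ▸ hmin₂ z (hsub hz) f hf hf0
  rcases h21.lt_or_eq with hlt | rfl
  · exact Or.inl ⟨m₁, m₂, hm₁, hm₂, hlt⟩
  right
  refine ⟨z.rep, submodule_le_iff.1 hz, f, hf, m₂, ?_, ?_, ?_⟩
  · intro d hd
    rw [← hfm] at hd
    by_contra h
    exact Nat.notMem_of_lt_sInf hd h
  · rw [← hfm]
    exact homogeneousComponent_polyOrd (shiftPoly_ne_zero hf0 _)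
  · intro y hy
    apply leading_form_invariant f z.rep y z.rep_nonzero
    intro u hu a ha
    by_contra hc
    have hmem : z.rep + u • y ∈ V₂ :=
      V₂.add_mem (hV (submodule_le_iff.1 hz)) (V₂.smul_mem _ hy)
    let z' : Pj n := Projectivization.mk ℂ _ hu
    have hz' : z'.submodule = Submodule.span ℂ {z.rep + u • y} := Projectivization.submodule_mk _ _
    have hz'2 : z' ∈ projLin V₂ := by
      change z'.submodule ≤ V₂
      rw [hz', Submodule.span_singleton_le_iff_mem]
      exact hmem
    obtain ⟨t, ht⟩ := mem_submodule_iff.1 (show z.rep + u • y ∈ z'.submodule by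
      rw [hz']; exact Submodule.mem_span_singleton_self _)
    have ht0 : t ≠ 0 := by
      rintro rfl
      rw [zero_smul] at ht
      exact hu ht.symm
    rw [← ht] at hc
    have hc' : MvPolynomial.coeff a (shiftPoly (scalePoly t f) z'.rep) ≠ 0 := by
      rw [shiftPoly_scalePoly, coeff_scalePoly]
      exact mul_ne_zero (pow_ne_zero _ ht0) hc
    have h1 := (hmin₂ z' hz'2 _ (scalePoly_mem hf t) (by
      intro h0
      rw [h0] at hc'
      simp [shiftPoly] at hc')).trans (polyOrd_le hc')
    omega

end

/-! ### Orthogonality and conormal spaces -/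

section
variable {n : ℕ}

/-- The orthogonal complement of `W` for the standard symmetric bilinear form on `ℂ^n`; through it
the linear forms vanishing on `W` are identified with vectors of `ℂ^n`. -/
noncomputable def orth (W : Submodule ℂ (Vc n)) : Submodule ℂ (Vc n) :=
  LinearMap.BilinForm.orthogonal (dotProductBilin ℂ ℂ : LinearMap.BilinForm ℂ (Vc n)) W

theorem mem_orth {W : Submodule ℂ (Vc n)} {y : Vc n} :
    y ∈ orth W ↔ ∀ v ∈ W, ∑ i, y i * v i = 0 := by
  rw [orth, LinearMap.BilinForm.mem_orthogonal_iff]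
  refine forall₂_congr fun v _ => ?_
  change v ⬝ᵥ y = 0 ↔ _
  rw [dotProduct_comm]
  rfl

theorem dotProductBilin_refl :
    LinearMap.IsRefl (dotProductBilin ℂ ℂ : LinearMap.BilinForm ℂ (Vc n)) := by
  intro v w h
  change w ⬝ᵥ v = 0
  rw [dotProduct_comm]
  exact h

theorem dotProductBilin_nondegenerate :
    LinearMap.BilinForm.Nondegenerate (dotProductBilin ℂ ℂ : LinearMap.BilinForm ℂ (Vc n)) :=
  ⟨fun v h => dotProduct_eq_zero v h, fun v h => dotProduct_eq_zero v fun w => by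
    rw [dotProduct_comm]; exact h w⟩

theorem finrank_orth (W : Submodule ℂ (Vc n)) :
    Module.finrank ℂ (orth W) = n - Module.finrank ℂ W := by
  rw [orth, LinearMap.BilinForm.finrank_orthogonal dotProductBilin_nondegenerate,
    Module.finrank_fin_fun]

theorem orth_orth (W : Submodule ℂ (Vc n)) : orth (orth W) = W :=
  LinearMap.BilinForm.orthogonal_orthogonal dotProductBilin_nondegenerate dotProductBilin_refl W

theorem orth_anti {W W' : Submodule ℂ (Vc n)} (h : W ≤ W') : orth W' ≤ orth W :=
  LinearMap.BilinForm.orthogonal_le h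

theorem mk_mem_projLin {W : Submodule ℂ (Vc n)} {v : Vc n} (hv : v ≠ 0) :
    Projectivization.mk ℂ v hv ∈ projLin W ↔ v ∈ W := by
  change Projectivization.submodule _ ≤ W ↔ _
  rw [Projectivization.submodule_mk, Submodule.span_singleton_le_iff_mem]

theorem perpSet_projLin (W : Submodule ℂ (Vc n)) : perpSet (projLin W) = projLin (orth W) := by
  ext h
  constructor
  · intro hh w hw
    rw [mem_orth]
    intro v hv
    by_cases hv0 : v = 0
    · simp [hv0]
    · refine hh (Projectivization.mk ℂ v hv0) ((mk_mem_projLin hv0).2 hv) w hw v ?_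
      rw [Projectivization.submodule_mk]
      exact Submodule.mem_span_singleton_self v
  · intro hh y hy w hw v hv
    exact mem_orth.1 (hh hw) v (hy hv)

theorem orth_ne_bot {W : Submodule ℂ (Vc n)} (h : projLin W ≠ Set.univ) : orth W ≠ ⊥ := by
  intro hb
  refine h (Set.eq_univ_of_forall fun y => ?_)
  have : W = ⊤ := by
    rw [← orth_orth W, hb]
    exact eq_top_iff.2 fun v _ => mem_orth.2 fun w hw => by simp [(Submodule.mem_bot ℂ).1 hw]
  rw [this]
  exact (le_top : y.submodule ≤ ⊤)

/-- The gradient of a polynomial at `v`, depending linearly on the polynomial. -/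
noncomputable def gradAt (v : Vc n) : MvPolynomial (Fin n) ℂ →ₗ[ℂ] Vc n where
  toFun f i := MvPolynomial.eval v (MvPolynomial.pderiv i f)
  map_add' f g := by ext i; simp
  map_smul' c f := by ext i; simp

theorem gradAt_apply (v : Vc n) (f : MvPolynomial (Fin n) ℂ) (i : Fin n) :
    gradAt v f i = MvPolynomial.eval v (MvPolynomial.pderiv i f) := rfl

/-- The conormal space of the cone over `X` at `v`: gradients at `v` of the equations of `X`. -/
noncomputable def gradSub (X : Set (Pj n)) (v : Vc n) : Submodule ℂ (Vc n) :=
  ((vanIdeal X).restrictScalars ℂ).map (gradAt v)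

theorem mem_gradSub {X : Set (Pj n)} {v z : Vc n} :
    z ∈ gradSub X v ↔ ∃ g ∈ vanishId X, gradAt v g = z := Iff.rfl

theorem tangentSub_eq (X : Set (Pj n)) (y : Pj n) : tangentSub X y = orth (gradSub X y.rep) := by
  ext u
  rw [mem_orth, tangentSub]
  simp only [Submodule.mem_iInf, LinearMap.mem_ker]
  constructor
  · rintro h _ ⟨g, hg, rfl⟩
    rw [← h g hg, dmap, LinearMap.sum_apply]
    refine Finset.sum_congr rfl fun i _ => ?_
    simp [gradAt_apply, mul_comm]
  · intro h g hg
    rw [← h _ ⟨g, hg, rfl⟩, dmap, LinearMap.sum_apply]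
    refine Finset.sum_congr rfl fun i _ => ?_
    simp [gradAt_apply, mul_comm]

theorem pderiv_scalePoly (t : ℂ) (f : MvPolynomial (Fin n) ℂ) (i : Fin n) :
    MvPolynomial.pderiv i (scalePoly t f) =
      MvPolynomial.C t * scalePoly t (MvPolynomial.pderiv i f) := by
  have h := deriv_aeval (MvPolynomial.pderiv (R := ℂ) i)
    (fun k : Fin n => (MvPolynomial.C t * MvPolynomial.X k : MvPolynomial (Fin n) ℂ)) f
  change _ = ∑ k, scalePoly t (MvPolynomial.pderiv k f) * _ at h
  change MvPolynomial.pderiv i (scalePoly t f) = _ at h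
  rw [h, Finset.sum_eq_single i]
  · simp [mul_comm]
  · intro k _ hk
    simp [MvPolynomial.pderiv_X_of_ne hk]
  · simp

theorem gradSub_smul_le (X : Set (Pj n)) {a : ℂ} (ha : a ≠ 0) (v : Vc n) :
    gradSub X (a • v) ≤ gradSub X v := by
  rintro _ ⟨g, hg, rfl⟩
  have h : gradAt (a • v) g = a⁻¹ • gradAt v (scalePoly a g) := by
    ext i
    rw [Pi.smul_apply, gradAt_apply, gradAt_apply, pderiv_scalePoly, map_mul, MvPolynomial.eval_C,
      eval_scalePoly, smul_eq_mul, inv_mul_cancel_left₀ ha]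
  rw [h]
  exact Submodule.smul_mem _ _ ⟨_, scalePoly_mem hg a, rfl⟩

theorem gradSub_rep (X : Set (Pj n)) {v : Vc n} (hv : v ≠ 0) :
    gradSub X (Projectivization.mk ℂ v hv).rep = gradSub X v := by
  obtain ⟨a, ha⟩ := Projectivization.exists_smul_eq_mk_rep ℂ v hv
  have h1 := gradSub_smul_le X a.ne_zero v
  have h2 := gradSub_smul_le X (inv_ne_zero a.ne_zero) ((a : ℂ) • v)
  rw [smul_smul, inv_mul_cancel₀ a.ne_zero, one_smul] at h2
  rw [← ha]
  exact le_antisymm h1 h2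

/-- Euler's relation: `∑ Xᵢ ∂ᵢ g` vanishes on `X` together with `g`. -/
theorem euler_mem {X : Set (Pj n)} {g : MvPolynomial (Fin n) ℂ} (hg : g ∈ vanishId X) :
    ∑ i, MvPolynomial.X i * MvPolynomial.pderiv i g ∈ vanishId X := by
  intro y hy v hv
  have h0 : (MvPolynomial.aeval (fun i => Polynomial.C (v i) + Polynomial.C (v i) * Polynomial.X) g :
      Polynomial ℂ) = 0 := by
    refine Polynomial.funext fun t => ?_
    rw [eval_line, Polynomial.eval_zero]
    exact hg y hy _ (Submodule.add_mem _ hv (Submodule.smul_mem _ _ hv))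
  have h1 := deriv_aeval (Polynomial.derivative' (R := ℂ))
    (fun i => Polynomial.C (v i) + Polynomial.C (v i) * Polynomial.X) g
  rw [h0, map_zero] at h1
  have h2 := congrArg (Polynomial.eval 0) h1
  rw [Polynomial.eval_zero, Polynomial.eval_finsetSum] at h2
  rw [map_sum, h2]
  refine Finset.sum_congr rfl fun i _ => ?_
  have h3 : Polynomial.derivative' (R := ℂ) (Polynomial.C (v i) + Polynomial.C (v i) * Polynomial.X) =
      Polynomial.C (v i) := by
    change Polynomial.derivative _ = _
    simp
  rw [Polynomial.eval_mul, eval_line, h3, Polynomial.eval_C, zero_smul, add_zero, map_mul,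
    MvPolynomial.eval_X, mul_comm]

end

/-! ### The homogeneous coordinate ring and local equations -/

section
variable {n : ℕ}

/-- The coordinate functions in the homogeneous coordinate ring of `X`, i.e. the generic point of
the cone over `X`. -/
noncomputable def coordPt (X : Set (Pj n)) (i : Fin n) : MvPolynomial (Fin n) ℂ ⧸ vanIdeal X :=
  Ideal.Quotient.mk _ (MvPolynomial.X i)

theorem aeval_coordPt (X : Set (Pj n)) (p : MvPolynomial (Fin n) ℂ) :
    MvPolynomial.aeval (coordPt X) p = Ideal.Quotient.mk (vanIdeal X) p := by
  have h : MvPolynomial.aeval (coordPt X) = Ideal.Quotient.mkₐ ℂ (vanIdeal X) := by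
    refine MvPolynomial.algHom_ext fun i => ?_
    rw [MvPolynomial.aeval_X]
    rfl
  rw [h]
  rfl

theorem aeval_coordPt_eq_zero {X : Set (Pj n)} {p : MvPolynomial (Fin n) ℂ} :
    MvPolynomial.aeval (coordPt X) p = 0 ↔ p ∈ vanishId X := by
  rw [aeval_coordPt, Ideal.Quotient.eq_zero_iff_mem, mem_vanIdeal]

theorem aeval_coordPt_surjective (X : Set (Pj n)) : Function.Surjective
    (MvPolynomial.aeval (coordPt X) : MvPolynomial (Fin n) ℂ →ₐ[ℂ] _) := by
  intro z
  obtain ⟨p, rfl⟩ := Ideal.Quotient.mk_surjective z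
  exact ⟨p, aeval_coordPt X p⟩

theorem adjoin_coordPt (X : Set (Pj n)) : Algebra.adjoin ℂ (Set.range (coordPt X)) = ⊤ := by
  rw [Algebra.adjoin_range_eq_range_aeval, AlgHom.range_eq_top]
  exact aeval_coordPt_surjective X

/-- Evaluation of homogeneous coordinate functions at a point of the cone over `X`. -/
theorem exists_evAt {X : Set (Pj n)} {y : Pj n} (hy : y ∈ X) {v : Vc n} (hv : v ∈ y.submodule) :
    ∃ ev : (MvPolynomial (Fin n) ℂ ⧸ vanIdeal X) →ₐ[ℂ] ℂ,
      ∀ p, ev (MvPolynomial.aeval (coordPt X) p) = MvPolynomial.eval v p := by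
  refine ⟨Ideal.Quotient.liftₐ (vanIdeal X) (MvPolynomial.aeval v) fun p hp => ?_, fun p => ?_⟩
  · rw [MvPolynomial.aeval_eq_eval]
    exact hp y hy v hv
  · rw [aeval_coordPt]
    exact congrFun (MvPolynomial.aeval_eq_eval v) p

/-- The nonzero points of the cone over `X`. -/
def conePts (X : Set (Pj n)) : Set (Vc n) := {v | v ≠ 0 ∧ ∃ y ∈ X, v ∈ y.submodule}

/-- Elements of the homogeneous coordinate ring are determined by their values at the nonzero points
of the cone. -/
theorem coordRing_separated (X : Set (Pj n)) (z : MvPolynomial (Fin n) ℂ ⧸ vanIdeal X)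
    (h : ∀ ev : (MvPolynomial (Fin n) ℂ ⧸ vanIdeal X) →ₐ[ℂ] ℂ,
      (fun i => ev (coordPt X i)) ∈ conePts X → ev z = 0) : z = 0 := by
  obtain ⟨p, rfl⟩ := aeval_coordPt_surjective X z
  have key : ∀ y ∈ X, ∀ v ∈ y.submodule, v ≠ 0 → MvPolynomial.eval v p = 0 := by
    intro y hy v hv hv0
    obtain ⟨ev, hev⟩ := exists_evAt hy hv
    rw [← hev]
    refine h ev ?_
    have : (fun i => ev (coordPt X i)) = v := by
      ext i
      rw [← MvPolynomial.aeval_X (R := ℂ) (coordPt X) i, hev, MvPolynomial.eval_X]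
    rw [this]
    exact ⟨hv0, y, hy, hv⟩
  rw [aeval_coordPt_eq_zero]
  intro y hy v hv
  by_cases hv0 : v = 0
  · -- `p` vanishes on the punctured line over `y`, hence at the origin.
    subst hv0
    have h0 : (MvPolynomial.aeval (fun i => Polynomial.C ((0 : Vc n) i) +
        Polynomial.C (y.rep i) * Polynomial.X) p : Polynomial ℂ) = 0 := by
      refine Polynomial.eq_zero_of_infinite_isRoot _ ((Set.finite_singleton (0 : ℂ)).infinite_compl.mono
        fun t ht => ?_)
      change Polynomial.eval t _ = 0
      rw [eval_line, zero_add]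
      exact key y hy _ (Submodule.smul_mem _ _ (rep_mem y)) (smul_ne_zero ht y.rep_nonzero)
    have h1 := eval_line p 0 y.rep 0
    rw [h0, Polynomial.eval_zero, zero_smul, add_zero] at h1
    exact h1.symm
  · exact key y hy v hv hv0

theorem eval_jacobian {r : ℕ} (g : Fin r → MvPolynomial (Fin n) ℂ) (E : Matrix (Fin n) (Fin r) ℂ)
    (v : Vc n) : MvPolynomial.eval v ((Matrix.of fun j j' => ∑ i, MvPolynomial.pderiv i (g j) *
      MvPolynomial.C (E i j')).det) = (Matrix.of (fun j => gradAt v (g j)) * E).det := by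
  rw [RingHom.map_det]
  congr 1
  ext j j'
  simp [Matrix.mul_apply, gradAt_apply]

theorem linearIndependent_of_jacobian {r : ℕ} {g : Fin r → MvPolynomial (Fin n) ℂ}
    {E : Matrix (Fin n) (Fin r) ℂ} {v : Vc n}
    (h : MvPolynomial.eval v ((Matrix.of fun j j' => ∑ i, MvPolynomial.pderiv i (g j) *
      MvPolynomial.C (E i j')).det) ≠ 0) : LinearIndependent ℂ fun j => gradAt v (g j) := by
  rw [eval_jacobian] at h
  have h1 := Matrix.linearIndependent_rows_iff_isUnit.2
    ((Matrix.isUnit_iff_isUnit_det _).2 (isUnit_iff_ne_zero.2 h))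
  refine LinearIndependent.of_comp (Matrix.vecMulLinear E) ?_
  exact h1

/-- At a smooth point the conormal space has a basis of gradients of `r = codim` equations; `E` is a
right inverse of their Jacobian matrix. -/
theorem exists_local_equations {X : Set (Pj n)} {x : Pj n} (hx : SmoothPt X x) :
    ∃ (r : ℕ) (g : Fin r → MvPolynomial (Fin n) ℂ) (E : Matrix (Fin n) (Fin r) ℂ),
      n = zdim X + 1 + r ∧ (∀ j, g j ∈ vanishId X) ∧
      MvPolynomial.eval x.rep ((Matrix.of fun j j' => ∑ i, MvPolynomial.pderiv i (g j) *
        MvPolynomial.C (E i j')).det) ≠ 0 ∧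
      ∀ z ∈ gradSub X x.rep, ∃ c : Fin r → ℂ, z = ∑ j, c j • gradAt x.rep (g j) := by
  have hd := hx.2
  rw [tangentSub_eq, finrank_orth] at hd
  let G := gradSub X x.rep
  let b := Module.finBasis ℂ G
  choose g hg hgb using fun j => mem_gradSub.1 (b j).2
  have hli : LinearIndependent ℂ fun j => gradAt x.rep (g j) := by
    have := b.linearIndependent.map' G.subtype G.ker_subtype
    rw [show (fun j => gradAt x.rep (g j)) = G.subtype ∘ b from funext hgb]
    exact this
  let J : Matrix (Fin (Module.finrank ℂ G)) (Fin n) ℂ := Matrix.of fun j => gradAt x.rep (g j)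
  have hrank : J.rank = Module.finrank ℂ G := by
    have := LinearIndependent.rank_matrix (M := J) hli
    rw [this, Fintype.card_fin]
  have hsurj : Function.Surjective J.mulVec := by
    have h1 : LinearMap.range J.mulVecLin = ⊤ := by
      apply Submodule.eq_top_of_finrank_eq
      rw [Module.finrank_fin_fun]
      exact hrank
    exact LinearMap.range_eq_top.1 h1
  obtain ⟨E, hE⟩ := Matrix.mulVec_surjective_iff_exists_right_inverse.1 hsurj
  refine ⟨_, g, E, ?_, hg, ?_, ?_⟩
  · change n = zdim X + 1 + Module.finrank ℂ (gradSub X x.rep)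
    omega
  · rw [eval_jacobian]
    change (J * E).det ≠ 0
    rw [hE, Matrix.det_one]
    exact one_ne_zero
  · intro z hz
    refine ⟨b.repr ⟨z, hz⟩, ?_⟩
    have := congrArg Subtype.val (b.sum_repr ⟨z, hz⟩)
    rw [AddSubmonoidClass.coe_finsetSum] at this
    refine this.symm.trans (Finset.sum_congr rfl fun j _ => ?_)
    rw [hgb]
    rfl

end

/-! ### Smooth points, the dual variety and lines -/

section
variable {n : ℕ}

theorem mem_submodule_mk {v : Vc n} (hv : v ≠ 0) : v ∈ (Projectivization.mk ℂ v hv).submodule := by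
  rw [Projectivization.submodule_mk]
  exact Submodule.mem_span_singleton_self v

theorem mk_mem_of_conePts {X : Set (Pj n)} {v : Vc n} (hv : v ∈ conePts X) :
    Projectivization.mk ℂ v hv.1 ∈ X := by
  obtain ⟨hv0, y, hy, hvy⟩ := hv
  obtain ⟨t, ht⟩ := mem_submodule_iff.1 hvy
  have : Projectivization.mk ℂ v hv0 = y := by
    rw [← y.mk_rep, Projectivization.mk_eq_mk_iff']
    exact ⟨t, ht⟩
  rw [this]
  exact hy

/-- The Jacobian criterion on the cone over `X`. -/
theorem smooth_of_jacobian {X : Set (Pj n)} (hX : zIrr X) {r s : ℕ}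
    (w : Fin s → MvPolynomial (Fin n) ℂ ⧸ vanIdeal X) (hw : AlgebraicIndependent ℂ w)
    (hs : n ≤ s + r) (hn : n = zdim X + 1 + r) (g : Fin r → MvPolynomial (Fin n) ℂ)
    (hg : ∀ j, g j ∈ vanishId X) (E : Matrix (Fin n) (Fin r) ℂ) {v : Vc n} (hv : v ∈ conePts X)
    (hE : MvPolynomial.eval v ((Matrix.of fun j j' => ∑ i, MvPolynomial.pderiv i (g j) *
      MvPolynomial.C (E i j')).det) ≠ 0) : SmoothPt X (Projectivization.mk ℂ v hv.1) := by
  have hprime := vanIdeal_prime hX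
  obtain ⟨ev, hev⟩ := exists_evAt (mk_mem_of_conePts hv) (mem_submodule_mk hv.1)
  refine ⟨mk_mem_of_conePts hv, ?_⟩
  have hspan : gradSub X v = Submodule.span ℂ (Set.range fun j => gradAt v (g j)) := by
    refine le_antisymm ?_ (Submodule.span_le.2 ?_)
    · rintro _ ⟨g', hg', rfl⟩
      obtain ⟨e, he⟩ := grad_cramer (coordPt X) (aeval_coordPt_surjective X) w hw hs g
        (fun j => aeval_coordPt_eq_zero.2 (hg j)) E
        (fun h0 => hE (by rw [← hev, h0, map_zero])) g' (aeval_coordPt_eq_zero.2 hg')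
      have h1 : gradAt v g' = ∑ j, ((MvPolynomial.eval v ((Matrix.of fun j j' => ∑ i,
          MvPolynomial.pderiv i (g j) * MvPolynomial.C (E i j')).det))⁻¹ * ev (e j)) •
            gradAt v (g j) := by
        ext i
        have h2 := congrArg ev (he i)
        rw [map_mul, hev, hev, map_sum] at h2
        rw [Finset.sum_apply, gradAt_apply, ← inv_mul_cancel_left₀ hE
          (MvPolynomial.eval v (MvPolynomial.pderiv i g')), h2, Finset.mul_sum]
        refine Finset.sum_congr rfl fun j _ => ?_
        rw [map_mul, hev, Pi.smul_apply, gradAt_apply, smul_eq_mul, mul_assoc]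
      rw [h1]
      exact Submodule.sum_mem _ fun j _ =>
        Submodule.smul_mem _ _ (Submodule.subset_span ⟨j, rfl⟩)
    · rintro _ ⟨j, rfl⟩
      exact ⟨g j, hg j, rfl⟩
  rw [tangentSub_eq, gradSub_rep, finrank_orth, hspan,
    finrank_span_eq_card (linearIndependent_of_jacobian hE), Fintype.card_fin]
  omega

/-- Nonzero conormal vectors at smooth points are points of the dual variety. -/
theorem mk_mem_dualVar {X : Set (Pj n)} {v : Vc n} (hv0 : v ≠ 0)
    (hv : SmoothPt X (Projectivization.mk ℂ v hv0)) {z : Vc n} (hz : z ∈ gradSub X v)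
    (hz0 : z ≠ 0) : Projectivization.mk ℂ z hz0 ∈ dualVar X := by
  let := zarTop2 n
  refine ⟨(Projectivization.mk ℂ z hz0, Projectivization.mk ℂ v hv0), subset_closure ⟨hv, ?_⟩, rfl⟩
  intro y hy a ha b hb
  have hb' := hy hb
  rw [tangentSub_eq, gradSub_rep, mem_orth] at hb'
  rw [Projectivization.submodule_mk] at ha
  obtain ⟨t, rfl⟩ := Submodule.mem_span_singleton.1 ha
  have := hb' z hz
  calc ∑ i, (t • z) i * b i = t * ∑ i, b i * z i := by
        rw [Finset.mul_sum]
        refine Finset.sum_congr rfl fun i _ => ?_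
        rw [Pi.smul_apply, smul_eq_mul]; ring
    _ = 0 := by rw [this, mul_zero]

theorem mem_vanishId_dualVar {X : Set (Pj n)} {f : MvPolynomial (Fin n) ℂ}
    (hf : ∀ y, SmoothPt X y → ∀ z ∈ gradSub X y.rep, MvPolynomial.eval z f = 0) :
    f ∈ vanishId (dualVar X) := by
  let := zarTop2 n
  have hcl : IsClosed (pZeros2 (MvPolynomial.rename Sum.inl f) : Set (Pj n × Pj n)) :=
    ⟨TopologicalSpace.isOpen_generateFrom_of_mem ⟨_, rfl⟩⟩
  have hsub : conormal X ⊆ pZeros2 (MvPolynomial.rename Sum.inl f) := by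
    refine closure_minimal ?_ hcl
    rintro ⟨h, y⟩ ⟨hy, hT⟩ w hw v -
    rw [MvPolynomial.eval_rename, Sum.elim_comp_inl]
    refine hf y hy w ?_
    rw [← orth_orth (gradSub X y.rep), ← tangentSub_eq, mem_orth]
    intro u hu
    by_cases hu0 : u = 0
    · simp [hu0]
    · exact hT ((mk_mem_projLin hu0).2 hu) w hw u (mem_submodule_mk hu0)
  rintro _ ⟨⟨h, y⟩, hp, rfl⟩ w hw
  have := hsub hp w hw 0 (Submodule.zero_mem _)
  rwa [MvPolynomial.eval_rename, Sum.elim_comp_inl] at this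

/-- If the polynomials of the ideal of `X` vanish on the affine line `ξ + t ν`, the projective line
spanned by `ξ` and `ν` lies in `X`. -/
theorem line_subset {X : Set (Pj n)} (hcl : zClosed X) (hne : X.Nonempty) {ξ ν : Vc n}
    (h : ∀ p ∈ vanishId X, ∀ t : ℂ, MvPolynomial.eval (fun i => ξ i + t * ν i) p = 0) :
    projLin (Submodule.span ℂ {ξ, ν}) ⊆ X := by
  have h1 : ∀ p ∈ vanishId X, ∀ a b : ℂ, a ≠ 0 → MvPolynomial.eval (b • ν + a • ξ) p = 0 := by
    intro p hp a b ha
    have := h _ (scalePoly_mem hp a) (a⁻¹ * b)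
    rw [eval_scalePoly] at this
    rw [← this]
    refine congrArg (fun v => MvPolynomial.eval v p) (funext fun i => ?_)
    simp only [Pi.add_apply, Pi.smul_apply, smul_eq_mul]
    field_simp
    ring
  intro y hy
  refine mem_of_closed hcl (fun p hp => ?_) hne
  obtain ⟨a, b, hab⟩ := Submodule.mem_span_pair.1 (hy (rep_mem y))
  rw [← hab, add_comm]
  have h0 : (MvPolynomial.aeval (fun i => Polynomial.C ((b • ν) i) +
      Polynomial.C (ξ i) * Polynomial.X) p : Polynomial ℂ) = 0 := by
    refine Polynomial.eq_zero_of_infinite_isRoot _ ((Set.finite_singleton (0 : ℂ)).infinite_compl.mono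
      fun t ht => ?_)
    change Polynomial.eval t _ = 0
    rw [eval_line]
    exact h1 p hp t b ht
  rw [← eval_line, h0, Polynomial.eval_zero]

end

/-- Let `X ⊂ ℙ^N` be an irreducible, non-degenerate projective variety over
`ℂ`, and let `L ⊂ ℙ^N` be a linear subspace such that no line contained in `X` meets `L`.
Then for every smooth point `x ∈ X` with `x ∉ L` and `⟨L, T_{X,x}⟩ ≠ ℙ^N`, the multiplicity in
`X*` of a general hyperplane containing `⟨L, T_{X,x}⟩` is strictly greater than the
multiplicity in `X*` of a general hyperplane containing `L`. -/
theorem multiplicity_jump_of_no_line (N : ℕ) (X : Set (Pj (N + 1)))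
    (hXcl : zClosed X) (hXirr : zIrr X) (hXnd : Nondeg X)
    (W : Submodule ℂ (Vc (N + 1)))
    (hnoline : ¬ ∃ W' : Submodule ℂ (Vc (N + 1)), Module.finrank ℂ W' = 2 ∧
      projLin W' ⊆ X ∧ (projLin W' ∩ projLin W).Nonempty)
    (x : Pj (N + 1)) (hx : SmoothPt X x)
    (hxL : x ∉ projLin W)
    (hspan : projLin (W ⊔ tangentSub X x) ≠ Set.univ) :
    ∃ m₁ m₂ : ℕ,
      multAtGeneral (dualVar X) (perpSet (projLin (W ⊔ tangentSub X x))) m₁ ∧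
      multAtGeneral (dualVar X) (perpSet (projLin W)) m₂ ∧
      m₂ < m₁ := by
  have hprime := vanIdeal_prime hXirr
  have hne : X.Nonempty := ⟨x, hx.1⟩
  obtain ⟨s, w, hw, hs⟩ := exists_algebraicIndependent hXcl hXirr
  obtain ⟨r, g, E, hn, hg, hE, hbasis⟩ := exists_local_equations hx
  have hsr : N + 1 ≤ s + r := by omega
  have hg0 : ∀ j, MvPolynomial.aeval (coordPt X) (g j) = 0 :=
    fun j => aeval_coordPt_eq_zero.2 (hg j)
  have heuler : ∀ j, ∑ i, coordPt X i * MvPolynomial.aeval (coordPt X)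
      (MvPolynomial.pderiv i (g j)) = 0 := by
    intro j
    have := aeval_coordPt_eq_zero.2 (euler_mem (hg j))
    rw [map_sum] at this
    simpa only [map_mul, MvPolynomial.aeval_X] using this
  obtain ⟨ev, hev⟩ := exists_evAt hx.1 (rep_mem x)
  have hevξ : ∀ i, ev (coordPt X i) = x.rep i := by
    intro i
    rw [← MvPolynomial.aeval_X (R := ℂ) (coordPt X) i, hev, MvPolynomial.eval_X]
  have hEξ : MvPolynomial.aeval (coordPt X) ((Matrix.of fun j j' => ∑ i,
      MvPolynomial.pderiv i (g j) * MvPolynomial.C (E i j')).det) ≠ 0 :=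
    fun h0 => hE (by rw [← hev, h0, map_zero])
  have hξ0 : ∃ i, coordPt X i ≠ 0 := by
    by_contra! hcon
    exact x.rep_nonzero (funext fun i => by rw [← hevξ, hcon, map_zero]; rfl)
  -- The ideal of the dual variety is nonzero.
  have hZ : vanIdeal (dualVar X) ≠ ⊥ := by
    obtain ⟨f, hf0, hf⟩ := exists_dual_eq (coordPt X) hξ0 g hg0 heuler
    refine fun hbot => hf0 ?_
    rw [← Ideal.mem_bot, ← hbot, mem_vanIdeal]
    refine mem_vanishId_dualVar ?_
    rintro y hy _ ⟨g', hg', rfl⟩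
    have h1 := dual_eq_on_gradients (coordPt X) (aeval_coordPt_surjective X) w hw hsr g hg0 E hEξ f
      hf g' (aeval_coordPt_eq_zero.2 hg')
    obtain ⟨ev', hev'⟩ := exists_evAt hy.1 (rep_mem y)
    have h2 := congrArg ev' h1
    rw [map_zero, MvPolynomial.comp_aeval_apply, MvPolynomial.aeval_eq_eval] at h2
    rw [← h2]
    exact congrArg (fun v => MvPolynomial.eval v f) (funext fun i => (hev' _).symm)
  rw [perpSet_projLin, perpSet_projLin]
  -- Otherwise the leading form of an equation `f` of the dual variety, at a hyperplane `h` tangent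
  -- at `x`, is constant along `orth W`.
  rcases mult_jump_or hZ (orth_anti (le_sup_left : W ≤ W ⊔ tangentSub X x)) (orth_ne_bot hspan) with
    h | ⟨h, hh, f, hf, m, hlow, hm, hP⟩
  · exact h
  exfalso
  obtain ⟨c₀, hc₀⟩ := hbasis h (by
    rw [← orth_orth (gradSub X x.rep), ← tangentSub_eq]
    exact orth_anti le_sup_right hh)
  -- `y₀` guarantees that the point of the line produced below stays off `W`.
  obtain ⟨y₀, hy₀W, hy₀⟩ : ∃ y₀ ∈ orth W, ∑ i, y₀ i * x.rep i ≠ 0 := by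
    by_contra! hcon
    refine hxL (submodule_le_iff.2 ?_)
    rw [← orth_orth W, mem_orth]
    intro y hy
    rw [← hcon y hy]
    exact Finset.sum_congr rfl fun i _ => mul_comm _ _
  have hdual : (dualVar X).Nonempty := by
    obtain ⟨z, hz, hz0⟩ := Submodule.exists_mem_ne_zero_of_ne_bot (orth_ne_bot hspan)
    refine ⟨_, mk_mem_dualVar x.rep_nonzero (by rwa [x.mk_rep]) ?_ hz0⟩
    rw [← orth_orth (gradSub X x.rep), ← tangentSub_eq]
    exact orth_anti le_sup_right hz
  have hfz := dual_eq_of_generic (coordPt X) (conePts X) (coordRing_separated X) g _ hEξ f (by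
    intro v hv hΔ c
    have hv' := smooth_of_jacobian hXirr w hw hsr hn g hg E hv hΔ
    by_cases hz : (fun i => ∑ j, c j * MvPolynomial.eval v (MvPolynomial.pderiv i (g j))) = 0
    · rw [hz]
      obtain ⟨u, hu⟩ := hdual
      exact hf u hu 0 (Submodule.zero_mem _)
    · refine hf _ (mk_mem_dualVar hv.1 hv' ?_ hz) _ (mem_submodule_mk hz)
      have : (fun i => ∑ j, c j * MvPolynomial.eval v (MvPolynomial.pderiv i (g j))) =
          ∑ j, c j • gradAt v (g j) := by
        ext i
        simp [gradAt_apply]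
      rw [this]
      exact Submodule.sum_mem _ fun j _ => Submodule.smul_mem _ _ ⟨g j, hg j, rfl⟩)
  obtain ⟨ξ', ν', hν0, hy₀ξ, hPν, hline⟩ := core_global (coordPt X) (adjoin_coordPt X) w hw hsr g hg0
    heuler ev E (by rw [hev]; exact hE) y₀ (by simpa only [hevξ] using hy₀) c₀ h (fun i => by
      rw [hc₀, Finset.sum_apply]
      refine Finset.sum_congr rfl fun j _ => ?_
      rw [hev]
      rfl) f hfz _ rfl m hlow hm (orth W) hP
  have hνW : ν' ∈ W := by
    rw [← orth_orth W, mem_orth]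
    intro y hy
    rw [← hPν y hy]
    exact Finset.sum_congr rfl fun i _ => mul_comm _ _
  have hξW : ξ' ∉ W := fun hξ => hy₀ξ (mem_orth.1 hy₀W _ hξ)
  refine hnoline ⟨Submodule.span ℂ {ξ', ν'}, ?_, ?_, Projectivization.mk ℂ ν' hν0,
    (mk_mem_projLin hν0).2 (Submodule.subset_span (by simp)), (mk_mem_projLin hν0).2 hνW⟩
  · have hli : LinearIndependent ℂ ![ξ', ν'] := by
      rw [LinearIndependent.pair_iff]
      intro a b hab
      have ha : a = 0 := by
        by_contra ha
        refine hξW ?_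
        have : ξ' = -(a⁻¹ * b) • ν' := by
          rw [neg_smul, mul_smul, eq_neg_iff_add_eq_zero, ← smul_right_injective _ ha |>.eq_iff]
          simp [smul_smul, ha, hab]
        rw [this]
        exact Submodule.smul_mem _ _ hνW
      refine ⟨ha, ?_⟩
      rw [ha, zero_smul, zero_add] at hab
      exact (smul_eq_zero.1 hab).resolve_right hν0
    have := finrank_span_eq_card hli
    rwa [Matrix.range_cons_cons_empty, Fintype.card_fin] at this
  · exact line_subset hXcl hne fun p hp t => hline p (aeval_coordPt_eq_zero.2 hp) t
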